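/- arXiv:1707.04778 — 3 statements merged into one kernel-verified Lean document; each statement's English description precedes it below -/
import Mathlib

section
/- Let X be a Polish space, Ω = C([0,∞) → X) with the compact-open topology, ℱ its Borel σ-algebra, (ℱ_t) the natural filtration, 𝒫 the Borel probability measures on Ω with the weak topology, and Ω_x = {w : w(0)=x}. Let 𝒞 : X → 2^𝒫 satisfy: (C1) 𝒞(x) is a nonempty compact convex subset of 𝒫 for every x; (C2) {x : 𝒞(x) ∩ K ≠ ∅} is Borel for every closed K ⊆ 𝒫; (C3) P(Ω_x) = 1 for every P ∈ 𝒞(x). Assume further that for every finite stopping time τ: (MP1) if P ∈ 𝒞(x), then P[θ_τ^{-1}(·)|ℱ_τ](w) ∈ 𝒞(w(τ(w))) for P-almost all w; and (MP2) if Q is an ℱ_τ-measurable selection of w ↦ 𝒞(w(τ(w))) and P ∈ 𝒞(x), then P ⊗_τ Q ∈ 𝒞(x). Then there exists a measurable selection x ↦ P_x ∈ 𝒞(x) with the strong Markov property: for every stopping time τ and every x, P_x[θ_τ^{-1}(·)|ℱ_τ](w) = P_{π_τ(w)}(·) for P_x-almost all w. -/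
open MeasureTheory Set
open scoped NNReal

noncomputable section

/-- The space `Ω = C([0,∞) → X)` with the compact-open topology. -/
abbrev IPath (X : Type*) [TopologicalSpace X] : Type _ := C(ℝ≥0, X)

variable {X : Type*} [TopologicalSpace X]

/-- The Borel σ-algebra `ℱ` on the path space. -/
instance : MeasurableSpace (IPath X) := borel _
instance : BorelSpace (IPath X) := ⟨rfl⟩

/-- The natural filtration `ℱ_s` on path space. -/
def natF (X : Type*) [TopologicalSpace X] [MeasurableSpace X] (s : ℝ≥0) :
    MeasurableSpace (IPath X) :=
  ⨆ t ∈ Iic s, MeasurableSpace.comap (fun w : IPath X => w t) inferInstance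

/-- A (finite) stopping time with respect to the natural filtration:
`{τ ≤ s} ∈ ℱ_s` for all `s`. -/
def IsStopT {X : Type*} [TopologicalSpace X] [MeasurableSpace X]
    (τ : IPath X → ℝ≥0) : Prop :=
  ∀ s : ℝ≥0, MeasurableSet[natF X s] {w : IPath X | τ w ≤ s}

/-- Membership in the σ-algebra `ℱ_τ`:
`A ∈ ℱ` with `A ∩ {τ ≤ s} ∈ ℱ_s` for all `s`. -/
def MemFstopT {X : Type*} [TopologicalSpace X] [MeasurableSpace X]
    (τ : IPath X → ℝ≥0) (A : Set (IPath X)) : Prop :=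
  MeasurableSet A ∧
    ∀ s : ℝ≥0, MeasurableSet[natF X s] (A ∩ {w : IPath X | τ w ≤ s})

/-- The random shift `θ_τ : w(·) ↦ w(τ(w) + ·)`. -/
def shiftAt (τ : IPath X → ℝ≥0) (w : IPath X) : IPath X :=
  w.comp ⟨fun t => τ w + t, by fun_prop⟩

/-- The coordinate map `π_τ(w) = w(τ(w))`. -/
def piAt (τ : IPath X → ℝ≥0) (w : IPath X) : X := w (τ w)

/-- Convexity of a set of probability measures. -/
def ConvexMeasSet {Ω' : Type*} [MeasurableSpace Ω']
    (C : Set (ProbabilityMeasure Ω')) : Prop :=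
  ∀ P ∈ C, ∀ Q ∈ C, ∀ a b : ℝ≥0, a + b = 1 →
    ∀ R : ProbabilityMeasure Ω',
      (R : Measure Ω') = a • (P : Measure Ω') + b • (Q : Measure Ω') → R ∈ C

/-!
A functional `P ↦ E_P[∫₀^∞ exp (-a t) f(w(t)) dt]` splits at a stopping time `τ` into the reward
collected before `τ` and the discounted expected value of the conditional law of the future.
Hence, by dynamic programming, the sets of its maximizers over the `C x` inherit the disintegration
and the reconstruction property, and they stay compact and measurable in `x`. Maximize such
functionals one after the other, with `a` ranging over the positive integers and `f` over a
countable family that separates measures. All remaining laws in `C x` share the value of each of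
them, hence, by injectivity of the Laplace transform, their one-dimensional marginals.
Disintegrating at deterministic times propagates this to the finite-dimensional marginals, so a
single law `P x` remains; the disintegration property of `x ↦ {P x}` is the strong Markov property.
-/

open TopologicalSpace ProbabilityTheory BoundedContinuousFunction Filter
open scoped ENNReal Topology

section PathSpace

variable {T α : Type*} [TopologicalSpace T] [MeasurableSpace X] [MeasurableSpace α]

theorem mapsTo_iff_exists_forall_le_infEDist {Y : Type*} [PseudoEMetricSpace Y] {f : T → Y}
    (hf : Continuous f) {K : Set T} (hK : IsCompact K) {D : Set K} (hD : Dense D) {U : Set Y}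
    (hU : IsOpen U) :
    MapsTo f K U ↔ ∃ n : ℕ, ∀ q ∈ D, (n : ℝ≥0∞)⁻¹ ≤ Metric.infEDist (f q) Uᶜ := by
  have hcont : Continuous fun t => Metric.infEDist (f t) Uᶜ := Metric.continuous_infEDist.comp hf
  constructor
  · intro hmaps
    obtain rfl | hne := K.eq_empty_or_nonempty
    · exact ⟨0, fun q _ => q.2.elim⟩
    obtain ⟨t, htK, hmin⟩ := hK.exists_isMinOn hne hcont.continuousOn
    have hpos : Metric.infEDist (f t) Uᶜ ≠ 0 := by
      rw [Ne, ← Metric.mem_closure_iff_infEDist_zero, hU.isClosed_compl.closure_eq]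
      exact not_not.2 (hmaps htK)
    obtain ⟨n, hn⟩ := ENNReal.exists_inv_nat_lt hpos
    exact ⟨n, fun q _ => hn.le.trans (hmin q.2)⟩
  · rintro ⟨n, hn⟩ t ht
    have hclosed : IsClosed {s : K | (n : ℝ≥0∞)⁻¹ ≤ Metric.infEDist (f s) Uᶜ} :=
      isClosed_le continuous_const (hcont.comp continuous_subtype_val)
    have hle : (n : ℝ≥0∞)⁻¹ ≤ Metric.infEDist (f t) Uᶜ :=
      closure_minimal hn hclosed (hD ⟨t, ht⟩)
    by_contra htU
    rw [Metric.infEDist_zero_of_mem htU] at hle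
    exact (ENNReal.inv_pos.2 (ENNReal.natCast_ne_top n)).not_ge hle

theorem measurableSet_setOf_mapsTo_of_eval [SecondCountableTopology T] [PseudoMetrizableSpace X]
    [OpensMeasurableSpace X] {f : α → C(T, X)} (hf : ∀ t, Measurable fun a => f a t)
    {K : Set T} (hK : IsCompact K) {U : Set X} (hU : IsOpen U) :
    MeasurableSet {a | MapsTo (f a) K U} := by
  let := pseudoMetrizableSpacePseudoMetric X
  obtain ⟨D, hDc, hD⟩ := exists_countable_dense K
  simp only [fun a => mapsTo_iff_exists_forall_le_infEDist (f a).continuous hK hD hU,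
    ofPred_exists, ofPred_forall]
  exact MeasurableSet.iUnion fun n => MeasurableSet.biInter hDc fun q _ =>
    measurableSet_le measurable_const (Metric.continuous_infEDist.measurable.comp (hf q))

variable [MeasurableSpace C(T, X)] [BorelSpace C(T, X)]

theorem measurable_continuousMap_coe [BorelSpace X] : Measurable ((⇑) : C(T, X) → T → X) :=
  measurable_pi_lambda _ fun t => (continuous_eval_const t).measurable

variable [SecondCountableTopology T] [LocallyCompactSpace T] [PseudoMetrizableSpace X]

theorem measurable_continuousMap_eval [BorelSpace X] [MeasurableSpace T]
    [OpensMeasurableSpace T] {f : α → C(T, X)} {g : α → T} (hf : Measurable f)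
    (hg : Measurable g) : Measurable fun a => f a (g a) :=
  (ContinuousEval.continuous_eval (F := C(T, X))).measurable.comp (hf.prodMk hg)

variable [SecondCountableTopology X]

theorem measurable_continuousMap_of_eval [OpensMeasurableSpace X]
    {f : α → C(T, X)} (hf : ∀ t, Measurable fun a => f a t) : Measurable f := by
  rw [BorelSpace.measurable_eq (α := C(T, X)),
    borel_eq_generateFrom_of_subbasis ContinuousMap.compactOpen_eq]
  refine measurable_generateFrom ?_
  rintro _ ⟨K, hK, U, hU, rfl⟩
  exact measurableSet_setOf_mapsTo_of_eval hf hK hU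

theorem exists_measurableSet_pi_preimage_coe_eq [BorelSpace X]
    {S : Set C(T, X)} (hS : MeasurableSet S) :
    ∃ B : Set (T → X), MeasurableSet B ∧ (⇑) ⁻¹' B = S :=
  @measurable_continuousMap_of_eval X _ T C(T, X) _ _ (MeasurableSpace.comap (⇑) MeasurableSpace.pi)
    _ _ _ _ _ _ _ id (fun t => (measurable_pi_apply t).comp (comap_measurable _)) S hS

theorem ext_of_forall_measure_cylinder [BorelSpace X]
    {μ ν : Measure C(T, X)} [IsFiniteMeasure μ]
    (h : ∀ (I : Finset T) (A : T → Set X), (∀ t, MeasurableSet (A t)) →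
      μ {w | ∀ t ∈ I, w t ∈ A t} = ν {w | ∀ t ∈ I, w t ∈ A t}) : μ = ν := by
  have hcoe := measurable_continuousMap_coe (T := T) (X := X)
  have hmap : μ.map (⇑) = ν.map (⇑) := by
    refine ext_of_generate_finite _ generateFrom_squareCylinders.symm
      (isPiSystem_squareCylinders (fun _ => MeasurableSpace.isPiSystem_measurableSet)
        fun _ => MeasurableSet.univ) ?_ ?_
    · rintro _ ⟨I, A, hA, rfl⟩
      have hA' : ∀ t, MeasurableSet (A t) := fun t => hA t (mem_univ t)
      have hcyl : MeasurableSet ((I : Set T).pi A) :=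
        MeasurableSet.pi I.countable_toSet fun t _ => hA' t
      rw [Measure.map_apply hcoe hcyl, Measure.map_apply hcoe hcyl]
      exact h I A hA'
    · simpa [Measure.map_apply hcoe] using h ∅ (fun _ => univ) fun _ => MeasurableSet.univ
  ext S hS
  obtain ⟨B, hB, rfl⟩ := exists_measurableSet_pi_preimage_coe_eq hS
  rw [← Measure.map_apply hcoe hB, hmap, Measure.map_apply hcoe hB]

end PathSpace

section StoppedPath

/-- The path `w` stopped at the time `τ w`, that is `t ↦ w (min t (τ w))`. -/
def stopAt (τ : IPath X → ℝ≥0) (w : IPath X) : IPath X :=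
  w.comp ⟨fun t => min t (τ w), by fun_prop⟩

theorem stopAt_apply (τ : IPath X → ℝ≥0) (w : IPath X) (t : ℝ≥0) :
    stopAt τ w t = w (min t (τ w)) :=
  rfl

theorem stopAt_apply_of_le {τ : IPath X → ℝ≥0} {w : IPath X} {t : ℝ≥0} (ht : t ≤ τ w) :
    stopAt τ w t = w t := by
  rw [stopAt_apply, min_eq_left ht]

variable [PseudoMetrizableSpace X] [MeasurableSpace X] [BorelSpace X] {τ : IPath X → ℝ≥0}
  {A : Set (IPath X)}

theorem measurable_piAt (hτ : Measurable τ) : Measurable (piAt τ) :=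
  measurable_continuousMap_eval measurable_id hτ

variable [SecondCountableTopology X]

theorem measurable_stopAt (hτ : Measurable τ) : Measurable (stopAt τ) :=
  measurable_continuousMap_of_eval fun _ =>
    measurable_continuousMap_eval (f := fun w => w) measurable_id (measurable_const.min hτ)

theorem measurable_shiftAt (hτ : Measurable τ) : Measurable (shiftAt τ) :=
  measurable_continuousMap_of_eval fun t =>
    measurable_continuousMap_eval (f := fun w => w) measurable_id (hτ.add_const t)

theorem natF_eq_comap_stopAt (s : ℝ≥0) :
    natF X s = MeasurableSpace.comap (stopAt fun _ => s) inferInstance := by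
  refine le_antisymm (iSup₂_le fun t ht => ?_) (Measurable.comap_le ?_)
  · have heval : (fun w : IPath X => w t) = (fun w => w t) ∘ stopAt fun _ => s :=
      funext fun w => (stopAt_apply_of_le (τ := fun _ => s) ht).symm
    rw [heval, ← MeasurableSpace.comap_comp]
    exact MeasurableSpace.comap_mono (continuous_eval_const t).measurable.comap_le
  · refine @measurable_continuousMap_of_eval X _ ℝ≥0 (IPath X) _ _ (natF X s) _ _ _ _ _ _ _
      (stopAt fun _ => s) fun t => measurable_iff_comap_le.2 ?_
    exact le_iSup₂_of_le (f := fun t (_ : t ∈ Iic s) =>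
      MeasurableSpace.comap (fun w : IPath X => w t) inferInstance) _ (min_le_right t s) le_rfl

/-- Galmarino's test at a fixed time. -/
theorem measurableSet_natF_iff {s : ℝ≥0} :
    MeasurableSet[natF X s] A ↔ MeasurableSet A ∧ stopAt (fun _ => s) ⁻¹' A = A := by
  have hstopped : Measurable (stopAt (X := X) fun _ => s) := measurable_stopAt measurable_const
  rw [natF_eq_comap_stopAt]
  constructor
  · rintro ⟨B, hB, rfl⟩
    refine ⟨hstopped hB, ?_⟩
    ext w
    have hidem : stopAt (fun _ => s) (stopAt (fun _ => s) w) = stopAt (fun _ => s) w := by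
      ext t
      simp only [stopAt_apply, min_assoc, min_self]
    rw [mem_preimage, mem_preimage, hidem, mem_preimage]
  · rintro ⟨hA, hinv⟩
    exact ⟨A, hA, hinv⟩

theorem mem_iff_of_measurableSet_natF {s : ℝ≥0} (hA : MeasurableSet[natF X s] A)
    {w w' : IPath X} (h : ∀ t ≤ s, w t = w' t) : w ∈ A ↔ w' ∈ A := by
  have hstopped : stopAt (fun _ => s) w = stopAt (fun _ => s) w' :=
    ContinuousMap.ext fun t => h _ (min_le_right t s)
  rw [← (measurableSet_natF_iff.1 hA).2, mem_preimage, mem_preimage, hstopped]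

namespace IsStopT

theorem measurable (hτ : IsStopT τ) : Measurable τ :=
  measurable_of_Iic fun s => (measurableSet_natF_iff.1 (hτ s)).1

theorem eq_of_forall_le_eq (hτ : IsStopT τ) {w w' : IPath X} (h : ∀ t ≤ τ w, w t = w' t) :
    τ w' = τ w := by
  have hle : τ w' ≤ τ w := (mem_iff_of_measurableSet_natF (hτ (τ w)) h).1 (mem_ofPred.2 le_rfl)
  refine hle.antisymm ?_
  exact (mem_iff_of_measurableSet_natF (hτ (τ w')) fun t ht => h t (ht.trans hle)).2
    (mem_ofPred.2 le_rfl)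

theorem apply_stopAt (hτ : IsStopT τ) (w : IPath X) : τ (stopAt τ w) = τ w :=
  hτ.eq_of_forall_le_eq fun _ ht => (stopAt_apply_of_le ht).symm

theorem piAt_stopAt (hτ : IsStopT τ) (w : IPath X) : piAt τ (stopAt τ w) = piAt τ w := by
  rw [piAt, hτ.apply_stopAt, stopAt_apply_of_le le_rfl, piAt]

theorem stopAt_eq_of_forall_le_eq (hτ : IsStopT τ) {w w' : IPath X}
    (h : ∀ t ≤ τ w, w t = w' t) : stopAt τ w' = stopAt τ w := by
  ext t
  rw [stopAt_apply, stopAt_apply, hτ.eq_of_forall_le_eq h, h _ (min_le_right _ _)]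

theorem stopAt_stopAt (hτ : IsStopT τ) (w : IPath X) : stopAt τ (stopAt τ w) = stopAt τ w :=
  hτ.stopAt_eq_of_forall_le_eq fun _ ht => (stopAt_apply_of_le ht).symm

/-- Galmarino's test at a stopping time. -/
theorem memFstopT_iff (hτ : IsStopT τ) :
    MemFstopT τ A ↔ MeasurableSet A ∧ stopAt τ ⁻¹' A = A := by
  refine and_congr_right fun hA => ⟨fun h => ?_, fun hinv s => ?_⟩
  · ext w
    simpa only [mem_preimage, mem_inter_iff, mem_ofPred_eq, hτ.apply_stopAt, le_rfl, and_true]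
      using mem_iff_of_measurableSet_natF (h (τ w))
        fun t ht => stopAt_apply_of_le (τ := τ) (w := w) ht
  · obtain ⟨hmeas, hstopped⟩ := measurableSet_natF_iff.1 (hτ s)
    refine measurableSet_natF_iff.2 ⟨hA.inter hmeas, ?_⟩
    rw [preimage_inter, hstopped]
    ext w
    refine and_congr_left fun hws => ?_
    have hagree : ∀ t ≤ τ w, w t = stopAt (fun _ => s) w t := fun t ht =>
      (stopAt_apply_of_le (τ := fun _ => s) (ht.trans hws)).symm
    rw [← hinv, mem_preimage, mem_preimage, mem_preimage, hτ.stopAt_eq_of_forall_le_eq hagree]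

theorem memFstopT_preimage_stopAt (hτ : IsStopT τ) (hA : MeasurableSet A) :
    MemFstopT τ (stopAt τ ⁻¹' A) :=
  hτ.memFstopT_iff.2 ⟨measurable_stopAt hτ.measurable hA,
    by ext w; simp only [mem_preimage, hτ.stopAt_stopAt]⟩

end IsStopT

section AgreeingMeasures

variable {μ ν : Measure (IPath X)} {g : IPath X → ℝ≥0∞}

theorem lintegral_eq_of_forall_memFstopT_eq (hτ : IsStopT τ) (h : ∀ A, MemFstopT τ A → μ A = ν A)
    (hg : Measurable g) (hinv : ∀ w, g (stopAt τ w) = g w) : ∫⁻ w, g w ∂μ = ∫⁻ w, g w ∂ν := by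
  have hstopped := measurable_stopAt hτ.measurable
  have hmap : μ.map (stopAt τ) = ν.map (stopAt τ) := by
    ext B hB
    rw [Measure.map_apply hstopped hB, Measure.map_apply hstopped hB]
    exact h _ (hτ.memFstopT_preimage_stopAt hB)
  calc ∫⁻ w, g w ∂μ = ∫⁻ w, g w ∂μ.map (stopAt τ) := by simp_rw [lintegral_map hg hstopped, hinv]
    _ = ∫⁻ w, g w ∂ν.map (stopAt τ) := by rw [hmap]
    _ = ∫⁻ w, g w ∂ν := by simp_rw [lintegral_map hg hstopped, hinv]

theorem setLIntegral_eq_of_forall_memFstopT_eq (hτ : IsStopT τ)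
    (h : ∀ A, MemFstopT τ A → μ A = ν A) (hg : Measurable g) (hinv : ∀ w, g (stopAt τ w) = g w)
    (hA : MemFstopT τ A) : ∫⁻ w in A, g w ∂μ = ∫⁻ w in A, g w ∂ν := by
  rw [← lintegral_indicator hA.1, ← lintegral_indicator hA.1]
  refine lintegral_eq_of_forall_memFstopT_eq hτ h (hg.indicator hA.1) fun w => ?_
  rw [← indicator_comp_right, (hτ.memFstopT_iff.1 hA).2]
  exact congrArg (fun f => A.indicator f w) (funext hinv)

end AgreeingMeasures

end StoppedPath

section Disintegration

theorem measurable_coe_of_forall_isOpen {Y α : Type*} [TopologicalSpace Y] [HasOuterApproxClosed Y]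
    [MeasurableSpace Y] [BorelSpace Y] [MeasurableSpace α] {Q : α → ProbabilityMeasure Y}
    (hQ : ∀ U : Set (ProbabilityMeasure Y), IsOpen U → MeasurableSet (Q ⁻¹' U)) :
    Measurable fun a => (Q a : Measure Y) := by
  refine Measurable.measure_of_isPiSystem_of_isProbabilityMeasure (S := {s | IsOpen s})
    BorelSpace.measurable_eq isPiSystem_isOpen fun G hG => measurable_of_Ioi fun c => ?_
  have hlsc : LowerSemicontinuous fun μ : ProbabilityMeasure Y => (μ : Measure Y) G :=
    lowerSemicontinuous_iff_le_liminf.2 fun μ =>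
      ProbabilityMeasure.le_liminf_measure_open_of_tendsto tendsto_id hG
  exact hQ _ (hlsc.isOpen_preimage c)

variable [MeasurableSpace X]

/-- `ℱ_τ`-measurability of a random probability measure on the path space, with respect to the
weak topology. -/
def IsAdaptedAt (τ : IPath X → ℝ≥0) (Q : IPath X → ProbabilityMeasure (IPath X)) : Prop :=
  ∀ U : Set (ProbabilityMeasure (IPath X)), IsOpen U → MemFstopT τ (Q ⁻¹' U)

/-- `Q` is a version of the conditional distribution `P[θ_τ⁻¹(·) | ℱ_τ]` of the shifted path;
measurability of `Q` is not part of this notion. -/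
def IsShiftCondDistrib (τ : IPath X → ℝ≥0) (P : Measure (IPath X))
    (Q : IPath X → ProbabilityMeasure (IPath X)) : Prop :=
  ∀ A : Set (IPath X), MemFstopT τ A → ∀ B : Set (IPath X), MeasurableSet B →
    P (A ∩ shiftAt τ ⁻¹' B) = ∫⁻ w in A, (Q w : Measure (IPath X)) B ∂P

/-- `R` is the pasted measure `P ⊗_τ Q`. -/
def IsPasting (τ : IPath X → ℝ≥0) (P : Measure (IPath X))
    (Q : IPath X → ProbabilityMeasure (IPath X)) (R : Measure (IPath X)) : Prop :=
  (∀ A : Set (IPath X), MemFstopT τ A → R A = P A) ∧ IsShiftCondDistrib τ R Q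

variable {τ : IPath X → ℝ≥0} {Q : IPath X → ProbabilityMeasure (IPath X)}

theorem IsShiftCondDistrib.congr_ae {P : Measure (IPath X)} (h : IsShiftCondDistrib τ P Q)
    {Q' : IPath X → ProbabilityMeasure (IPath X)} (hQ : Q =ᵐ[P] Q') :
    IsShiftCondDistrib τ P Q' := fun A hA B hB =>
  (h A hA B hB).trans (lintegral_congr_ae (ae_restrict_of_ae
    (hQ.mono fun _ hw => congrArg (fun R : ProbabilityMeasure _ => (R : Measure (IPath X)) B) hw)))

variable [MetrizableSpace X]

namespace IsAdaptedAt

theorem measurable (hQ : IsAdaptedAt τ Q) : Measurable fun w => (Q w : Measure (IPath X)) :=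
  measurable_coe_of_forall_isOpen fun U hU => (hQ U hU).1

/-- An adapted random probability measure as a Markov kernel. -/
def kernel (hQ : IsAdaptedAt τ Q) : Kernel (IPath X) (IPath X) :=
  ⟨fun w => Q w, hQ.measurable⟩

instance (hQ : IsAdaptedAt τ Q) : IsMarkovKernel hQ.kernel :=
  ⟨fun w => (Q w).2⟩

variable [SecondCountableTopology X] [BorelSpace X]

theorem of_apply_stopAt (hτ : IsStopT τ)
    (hQ : ∀ U : Set (ProbabilityMeasure (IPath X)), IsOpen U → MeasurableSet (Q ⁻¹' U))
    (hinv : ∀ w, Q (stopAt τ w) = Q w) : IsAdaptedAt τ Q := fun U hU =>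
  hτ.memFstopT_iff.2 ⟨hQ U hU, by rw [← preimage_comp, funext hinv (f := Q ∘ stopAt τ)]⟩

theorem apply_stopAt (hQ : IsAdaptedAt τ Q) (hτ : IsStopT τ) (w : IPath X) :
    Q (stopAt τ w) = Q w := by
  have hinv := (hτ.memFstopT_iff.1 (hQ {Q w}ᶜ isOpen_compl_singleton)).2
  have hiff : Q (stopAt τ w) ≠ Q w ↔ Q w ≠ Q w := Set.ext_iff.1 hinv w
  exact not_not.1 fun hne => hiff.1 hne rfl

end IsAdaptedAt

namespace IsShiftCondDistrib

variable [SecondCountableTopology X] [BorelSpace X] {P : Measure (IPath X)} [IsFiniteMeasure P]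

theorem map_stopAt_shiftAt (h : IsShiftCondDistrib τ P Q) (hτ : IsStopT τ)
    (hQ : IsAdaptedAt τ Q) :
    P.map (fun w => (stopAt τ w, shiftAt τ w)) =
      (P ⊗ₘ hQ.kernel).map (Prod.map (stopAt τ) id) := by
  have hstopped := measurable_stopAt hτ.measurable
  have hshift := measurable_shiftAt hτ.measurable
  refine Measure.ext_prod fun {A B} hA hB => ?_
  rw [Measure.map_apply (hstopped.prodMk hshift) (hA.prod hB),
    Measure.map_apply (hstopped.prodMap measurable_id) (hA.prod hB), mk_preimage_prod,
    preimage_prod_map_prod, preimage_id, Measure.compProd_apply_prod (hstopped hA) hB]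
  exact h _ (hτ.memFstopT_preimage_stopAt hA) B hB

theorem lintegral_stopAt_shiftAt (h : IsShiftCondDistrib τ P Q)
    (hτ : IsStopT τ) (hQ : IsAdaptedAt τ Q) {g : IPath X × IPath X → ℝ≥0∞} (hg : Measurable g) :
    ∫⁻ w, g (stopAt τ w, shiftAt τ w) ∂P = ∫⁻ w, ∫⁻ w', g (stopAt τ w, w') ∂(Q w) ∂P := by
  have hstopped := measurable_stopAt hτ.measurable
  have hshift := measurable_shiftAt hτ.measurable
  have hmap := hstopped.prodMap (measurable_id (α := IPath X))
  rw [← lintegral_map hg (hstopped.prodMk hshift), h.map_stopAt_shiftAt hτ hQ,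
    lintegral_map hg hmap,
    Measure.lintegral_compProd (f := fun p => g (Prod.map (stopAt τ) id p)) (hg.comp hmap)]
  rfl

end IsShiftCondDistrib

end Disintegration

section Concatenation

open Classical in
/-- The path that follows `p.1` up to the time `τ p.1` and then `p.2`. If `p.2` does not start
where `p.1` was stopped, the value is `p.1`. -/
def concatAt (τ : IPath X → ℝ≥0) (p : IPath X × IPath X) : IPath X :=
  if h : p.2 0 = piAt τ p.1 then
    ⟨fun t => if t ≤ τ p.1 then p.1 t else p.2 (t - τ p.1), by
      refine Continuous.if_le p.1.continuous (p.2.continuous.comp (by fun_prop)) continuous_id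
        continuous_const ?_
      rintro t rfl
      rw [tsub_self, h, piAt]⟩
  else p.1

variable {τ : IPath X → ℝ≥0} {p : IPath X × IPath X}

theorem concatAt_apply_of_le {t : ℝ≥0} (ht : t ≤ τ p.1) : concatAt τ p t = p.1 t := by
  unfold concatAt
  split_ifs
  · exact if_pos ht
  · rfl

theorem concatAt_apply_add (hp : p.2 0 = piAt τ p.1) (t : ℝ≥0) :
    concatAt τ p (τ p.1 + t) = p.2 t := by
  rw [concatAt, dif_pos hp]
  rcases eq_or_ne t 0 with rfl | ht
  · simp [hp, piAt]
  · simp [ht]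

variable [MetrizableSpace X] [SecondCountableTopology X] [MeasurableSpace X] [BorelSpace X]

theorem measurableSet_start_eq_piAt (hτ : Measurable τ) :
    MeasurableSet {p : IPath X × IPath X | p.2 0 = piAt τ p.1} :=
  measurableSet_eq_fun ((continuous_eval_const 0).measurable.comp measurable_snd)
    ((measurable_piAt hτ).comp measurable_fst)

theorem measurable_concatAt (hτ : Measurable τ) : Measurable (concatAt τ) := by
  classical
  refine measurable_continuousMap_of_eval fun t => ?_
  have hτ₁ : Measurable fun p : IPath X × IPath X => τ p.1 := hτ.comp measurable_fst
  have heval : Measurable fun p : IPath X × IPath X => p.1 t :=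
    (continuous_eval_const t).measurable.comp measurable_fst
  have hite : (fun p => concatAt τ p t) = fun p =>
      if p.2 0 = piAt τ p.1 then (if t ≤ τ p.1 then p.1 t else p.2 (t - τ p.1)) else p.1 t := by
    funext p
    unfold concatAt
    split_ifs <;> simp_all
  rw [hite]
  exact Measurable.ite (measurableSet_start_eq_piAt hτ)
    (Measurable.ite (measurableSet_le measurable_const hτ₁) heval
      (measurable_continuousMap_eval measurable_snd (measurable_const.sub hτ₁))) heval

theorem shiftAt_concatAt (hτ : IsStopT τ) (hp : p.2 0 = piAt τ p.1) :
    shiftAt τ (concatAt τ p) = p.2 := by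
  have hτp : τ (concatAt τ p) = τ p.1 :=
    hτ.eq_of_forall_le_eq fun t ht => (concatAt_apply_of_le ht).symm
  ext t
  simpa only [shiftAt, ContinuousMap.comp_apply, ContinuousMap.coe_mk, hτp]
    using concatAt_apply_add hp t

theorem concatAt_mem_iff (hτ : IsStopT τ) {A : Set (IPath X)} (hA : MemFstopT τ A) :
    concatAt τ p ∈ A ↔ p.1 ∈ A := by
  rw [← (hτ.memFstopT_iff.1 hA).2, mem_preimage, mem_preimage,
    hτ.stopAt_eq_of_forall_le_eq fun t ht => (concatAt_apply_of_le ht).symm]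

variable {Q : IPath X → ProbabilityMeasure (IPath X)} {P : Measure (IPath X)} [IsFiniteMeasure P]

theorem map_concatAt_apply_of_memFstopT (hτ : IsStopT τ) (κ : Kernel (IPath X) (IPath X))
    [IsMarkovKernel κ] {A : Set (IPath X)} (hA : MemFstopT τ A) :
    (P ⊗ₘ κ).map (concatAt τ) A = P A := by
  have hpre : concatAt τ ⁻¹' A = A ×ˢ univ := by
    ext p
    simp only [mem_preimage, concatAt_mem_iff hτ hA, mem_prod, mem_univ, and_true]
  simp [Measure.map_apply (measurable_concatAt hτ.measurable) hA.1, hpre,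
    Measure.compProd_apply_prod hA.1 MeasurableSet.univ]

theorem map_concatAt_apply_inter (hτ : IsStopT τ) (hQ : IsAdaptedAt τ Q)
    (hstart : ∀ w, ∀ᵐ w' ∂(Q w : Measure (IPath X)), w' 0 = piAt τ w) {A B : Set (IPath X)}
    (hA : MemFstopT τ A) (hB : MeasurableSet B) :
    (P ⊗ₘ hQ.kernel).map (concatAt τ) (A ∩ shiftAt τ ⁻¹' B) =
      ∫⁻ w in A, (Q w : Measure (IPath X)) B ∂P := by
  have hglue : ∀ᵐ p ∂(P ⊗ₘ hQ.kernel), p.2 0 = piAt τ p.1 :=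
    Measure.ae_compProd_of_ae_ae (measurableSet_start_eq_piAt hτ.measurable) (ae_of_all _ hstart)
  have hae : concatAt τ ⁻¹' (A ∩ shiftAt τ ⁻¹' B) =ᵐ[P ⊗ₘ hQ.kernel] A ×ˢ B := by
    filter_upwards [hglue] with p hp
    refine propext (and_congr (concatAt_mem_iff hτ hA) ?_)
    rw [mem_preimage, shiftAt_concatAt hτ hp]
  rw [Measure.map_apply (measurable_concatAt hτ.measurable)
    (hA.1.inter (measurable_shiftAt hτ.measurable hB)), measure_congr hae,
    Measure.compProd_apply_prod hA.1 hB]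
  rfl

theorem isPasting_map_concatAt (hτ : IsStopT τ) (hQ : IsAdaptedAt τ Q)
    (hstart : ∀ w, ∀ᵐ w' ∂(Q w : Measure (IPath X)), w' 0 = piAt τ w) :
    IsPasting τ P Q ((P ⊗ₘ hQ.kernel).map (concatAt τ)) := by
  have hagree : ∀ A, MemFstopT τ A → (P ⊗ₘ hQ.kernel).map (concatAt τ) A = P A := fun A hA =>
    map_concatAt_apply_of_memFstopT hτ _ hA
  refine ⟨hagree, fun A hA B hB => ?_⟩
  rw [map_concatAt_apply_inter hτ hQ hstart hA hB]
  refine (setLIntegral_eq_of_forall_memFstopT_eq hτ hagree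
    ((Measure.measurable_coe hB).comp hQ.measurable) (fun w => ?_) hA).symm
  rw [Function.comp_apply, hQ.apply_stopAt hτ, Function.comp_apply]

end Concatenation

section Maximizers

variable {M β : Type*}

/-- The set of maximizers of `φ` on `S`. -/
def argmax [Preorder β] (φ : M → β) (S : Set M) : Set M :=
  {P ∈ S | IsMaxOn φ S P}

/-- Iterated maximization: the functionals `φ 0, …, φ (n - 1)` are maximized one after the other,
each on the set of maximizers left over by the previous ones. -/
def iterArgmax [Preorder β] (φ : ℕ → M → β) (S : Set M) : ℕ → Set M
  | 0 => S
  | n + 1 => argmax (φ n) (iterArgmax φ S n)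

/-- The lexicographic maximizers of the sequence of functionals `φ` on `S`. -/
def lexArgmax [Preorder β] (φ : ℕ → M → β) (S : Set M) : Set M :=
  ⋂ n, iterArgmax φ S n

theorem argmax_subset [Preorder β] (φ : M → β) (S : Set M) : argmax φ S ⊆ S :=
  sep_subset _ _

theorem lexArgmax_subset [Preorder β] (φ : ℕ → M → β) (S : Set M) : lexArgmax φ S ⊆ S :=
  iInter_subset (iterArgmax φ S) 0

theorem apply_eq_of_mem_lexArgmax [PartialOrder β] {φ : ℕ → M → β} {S : Set M} {P P' : M}
    (hP : P ∈ lexArgmax φ S) (hP' : P' ∈ lexArgmax φ S) (n : ℕ) : φ n P = φ n P' := by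
  rw [lexArgmax, mem_iInter] at hP hP'
  exact le_antisymm ((hP' (n + 1)).2 (hP n)) ((hP (n + 1)).2 (hP' n))

variable [LinearOrder β] [TopologicalSpace M] [TopologicalSpace β]

theorem isCompact_argmax [ClosedIciTopology β] {φ : M → β} (hφ : Continuous φ) {S : Set M}
    (hS : IsCompact S) : IsCompact (argmax φ S) := by
  have hinter : argmax φ S = S ∩ ⋂ P ∈ S, φ ⁻¹' Ici (φ P) := by
    ext P
    simp [argmax, isMaxOn_iff]
  rw [hinter]
  exact hS.inter_right (isClosed_biInter fun P _ => isClosed_Ici.preimage hφ)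

theorem argmax_inter_nonempty_iff [OrderTopology β] [DenselyOrdered β] {φ : M → β}
    (hφ : Continuous φ) {S K : Set M} (hS : IsCompact S) (hK : IsClosed K) {D : Set β}
    (hD : Dense D) :
    (argmax φ S ∩ K).Nonempty ↔ (S ∩ K).Nonempty ∧
      ∀ q ∈ D, (S ∩ φ ⁻¹' Ici q).Nonempty → (S ∩ (K ∩ φ ⁻¹' Ici q)).Nonempty := by
  constructor
  · rintro ⟨P, ⟨hPS, hmax⟩, hPK⟩
    refine ⟨⟨P, hPS, hPK⟩, ?_⟩
    rintro q - ⟨P', hP'S, hqP'⟩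
    exact ⟨P, hPS, hPK, le_trans hqP' (hmax hP'S)⟩
  · rintro ⟨hSK, hlevel⟩
    obtain ⟨P, ⟨hPS, hPK⟩, hmax⟩ := (hS.inter_right hK).exists_isMaxOn hSK hφ.continuousOn
    refine ⟨P, ⟨hPS, fun P' hP'S => not_lt.1 fun hlt => ?_⟩, hPK⟩
    obtain ⟨q, hqD, hPq, hqP'⟩ := hD.exists_between hlt
    obtain ⟨R, hRS, hRK, hqR⟩ := hlevel q hqD ⟨P', hP'S, hqP'.le⟩
    exact (hPq.trans_le hqR).not_ge (hmax ⟨hRS, hRK⟩)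

end Maximizers

section MeasurableSelection

variable {Z M β : Type*} [MeasurableSpace Z] [TopologicalSpace M]

/-- A correspondence with nonempty compact values that is measurable in the sense that closed
sets have measurable lower inverses. -/
structure IsMeasurableCompactValued (C : Z → Set M) : Prop where
  nonempty : ∀ x, (C x).Nonempty
  isCompact : ∀ x, IsCompact (C x)
  measurableSet : ∀ K, IsClosed K → MeasurableSet {x | (C x ∩ K).Nonempty}

namespace IsMeasurableCompactValued

theorem iInter [T2Space M] {C : ℕ → Z → Set M} (hC : ∀ n, IsMeasurableCompactValued (C n))
    (hanti : ∀ n x, C (n + 1) x ⊆ C n x) : IsMeasurableCompactValued fun x => ⋂ n, C n x := by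
  have hinter : ∀ x K, IsClosed K →
      (((⋂ n, C n x) ∩ K).Nonempty ↔ ∀ n, (C n x ∩ K).Nonempty) := by
    refine fun x K hK =>
      ⟨fun h n => h.mono (inter_subset_inter_left _ (iInter_subset _ n)), fun h => ?_⟩
    rw [iInter_inter]
    exact IsCompact.nonempty_iInter_of_sequence_nonempty_isCompact_isClosed _
      (fun n => inter_subset_inter_left _ (hanti n x)) h (((hC 0).isCompact x).inter_right hK)
      fun n => ((hC n).isCompact x).isClosed.inter hK
  refine ⟨fun x => ?_, fun x => ?_, fun K hK => ?_⟩
  · simpa using (hinter x univ isClosed_univ).2 fun n => by simpa using (hC n).nonempty x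
  · exact ((hC 0).isCompact x).of_isClosed_subset
      (isClosed_iInter fun n => ((hC n).isCompact x).isClosed) (iInter_subset _ 0)
  · simp only [hinter _ K hK, ofPred_forall]
    exact MeasurableSet.iInter fun n => (hC n).measurableSet K hK

theorem exists_measurable_selection_of_subsingleton {C : Z → Set M}
    (hC : IsMeasurableCompactValued C) (hsub : ∀ x, (C x).Subsingleton) :
    ∃ sel : Z → M, (∀ U, IsOpen U → MeasurableSet (sel ⁻¹' U)) ∧ ∀ x, sel x ∈ C x := by
  choose sel hsel using hC.nonempty
  refine ⟨sel, fun U hU => ?_, hsel⟩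
  have hpre : sel ⁻¹' U = {x | (C x ∩ Uᶜ).Nonempty}ᶜ := by
    ext x
    have hCx : C x = {sel x} := (hsub x).eq_singleton_of_mem (hsel x)
    simp [hCx]
  exact hpre ▸ (hC.measurableSet _ hU.isClosed_compl).compl

variable [LinearOrder β] [TopologicalSpace β] [OrderTopology β] [DenselyOrdered β]
  [SeparableSpace β] {C : Z → Set M}

theorem argmax (hC : IsMeasurableCompactValued C) {φ : M → β} (hφ : Continuous φ) :
    IsMeasurableCompactValued fun x => argmax φ (C x) := by
  refine ⟨fun x => ?_, fun x => isCompact_argmax hφ (hC.isCompact x), fun K hK => ?_⟩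
  · exact (hC.isCompact x).exists_isMaxOn (hC.nonempty x) hφ.continuousOn
  · obtain ⟨D, hDc, hD⟩ := exists_countable_dense β
    have hlevel : ∀ q, IsClosed (φ ⁻¹' Ici q) := fun q => isClosed_Ici.preimage hφ
    simp only [argmax_inter_nonempty_iff hφ (hC.isCompact _) hK hD, ofPred_and, ofPred_forall]
    exact (hC.measurableSet K hK).inter (MeasurableSet.biInter hDc fun q _ =>
      (hC.measurableSet _ (hlevel q)).imp (hC.measurableSet _ (hK.inter (hlevel q))))

variable {φ : ℕ → M → β}

theorem iterArgmax (hC : IsMeasurableCompactValued C) (hφ : ∀ n, Continuous (φ n)) :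
    ∀ n, IsMeasurableCompactValued fun x => iterArgmax φ (C x) n
  | 0 => hC
  | n + 1 => (hC.iterArgmax hφ n).argmax (hφ n)

theorem lexArgmax [T2Space M] (hC : IsMeasurableCompactValued C) (hφ : ∀ n, Continuous (φ n)) :
    IsMeasurableCompactValued fun x => lexArgmax φ (C x) :=
  .iInter (hC.iterArgmax hφ) fun _ _ => argmax_subset _ _

theorem exists_measurable_selection [T2Space M] (hC : IsMeasurableCompactValued C)
    (hφ : ∀ n, Continuous (φ n)) (hsep : ∀ P P', (∀ n, φ n P = φ n P') → P = P') :
    ∃ sel : Z → M, (∀ U, IsOpen U → MeasurableSet (sel ⁻¹' U)) ∧ ∀ x, sel x ∈ C x := by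
  obtain ⟨sel, hmeas, hsel⟩ := (hC.lexArgmax hφ).exists_measurable_selection_of_subsingleton
    fun x P hP P' hP' => hsep P P' (apply_eq_of_mem_lexArgmax hP hP')
  exact ⟨sel, hmeas, fun x => lexArgmax_subset _ _ (hsel x)⟩

end IsMeasurableCompactValued

end MeasurableSelection

section SeparatingSequence

theorem isPiSystem_range_biInter_finset {Y ι : Type*} (F : ι → Set Y) :
    IsPiSystem (range fun s : Finset ι => ⋂ i ∈ s, F i) := by
  classical
  rintro _ ⟨s, rfl⟩ _ ⟨t, rfl⟩ -
  exact ⟨s ∪ t, Finset.iInf_union⟩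

variable {Y : Type*} [TopologicalSpace Y] [MeasurableSpace Y] [BorelSpace Y]

theorem generateFrom_range_biInter_compl_of_isTopologicalBasis [SecondCountableTopology Y]
    {b : Set (Set Y)} (hb : IsTopologicalBasis b) :
    ‹MeasurableSpace Y› =
      MeasurableSpace.generateFrom (range fun s : Finset b => ⋂ i ∈ s, (i : Set Y)ᶜ) := by
  refine le_antisymm ?_ (MeasurableSpace.generateFrom_le ?_)
  · rw [BorelSpace.measurable_eq (α := Y), hb.borel_eq_generateFrom]
    refine MeasurableSpace.generateFrom_le fun U hU => MeasurableSet.of_compl ?_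
    exact MeasurableSpace.measurableSet_generateFrom ⟨{⟨U, hU⟩}, by simp⟩
  · rintro _ ⟨s, rfl⟩
    exact s.measurableSet_biInter fun i _ => (hb.isOpen i.2).measurableSet.compl

theorem measure_eq_of_forall_lintegral_apprSeq_eq [HasOuterApproxClosed Y] {μ ν : Measure Y}
    [IsFiniteMeasure μ] [IsFiniteMeasure ν] {F : Set Y} (hF : IsClosed F)
    (h : ∀ n, ∫⁻ y, hF.apprSeq n y ∂μ = ∫⁻ y, hF.apprSeq n y ∂ν) : μ F = ν F :=
  tendsto_nhds_unique (HasOuterApproxClosed.tendsto_lintegral_apprSeq hF μ)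
    ((HasOuterApproxClosed.tendsto_lintegral_apprSeq hF ν).congr fun n => (h n).symm)

theorem exists_seq_boundedContinuous_separating (Y : Type*) [TopologicalSpace Y]
    [SecondCountableTopology Y] [HasOuterApproxClosed Y] [MeasurableSpace Y] [BorelSpace Y] :
    ∃ g : ℕ → (Y →ᵇ ℝ≥0), ∀ (μ ν : Measure Y) [IsFiniteMeasure μ] [IsFiniteMeasure ν],
      (∀ n, ∫⁻ y, g n y ∂μ = ∫⁻ y, g n y ∂ν) → μ = ν := by
  obtain ⟨b, hbc, -, hb⟩ := exists_countable_basis Y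
  have := hbc.to_subtype
  have hclosed : ∀ s : Finset b, IsClosed (⋂ i ∈ s, (i : Set Y)ᶜ) := fun s =>
    isClosed_biInter fun i _ => (hb.isOpen i.2).isClosed_compl
  obtain ⟨e, he⟩ := exists_surjective_nat (Finset b × ℕ)
  refine ⟨fun k => (hclosed (e k).1).apprSeq (e k).2, fun μ ν _ _ h => ?_⟩
  have hall : ∀ p : Finset b × ℕ, ∫⁻ y, (hclosed p.1).apprSeq p.2 y ∂μ =
      ∫⁻ y, (hclosed p.1).apprSeq p.2 y ∂ν := he.forall.2 h
  have hagree : ∀ s : Finset b, μ (⋂ i ∈ s, (i : Set Y)ᶜ) = ν (⋂ i ∈ s, (i : Set Y)ᶜ) := fun s =>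
    measure_eq_of_forall_lintegral_apprSeq_eq (hclosed s) fun n => hall (s, n)
  refine ext_of_generate_finite _ (generateFrom_range_biInter_compl_of_isTopologicalBasis hb)
    (isPiSystem_range_biInter_finset _) ?_ (by simpa using hagree ∅)
  rintro _ ⟨s, rfl⟩
  exact hagree s

end SeparatingSequence

section Discount

/-- Lebesgue measure on the half-line `[0, ∞)`. -/
def halfLineVolume : Measure ℝ≥0 :=
  (volume : Measure ℝ).comap (↑)

theorem measurableEmbedding_nnreal_coe : MeasurableEmbedding ((↑) : ℝ≥0 → ℝ) :=
  .subtype_coe measurableSet_Ici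

theorem halfLineVolume_apply (s : Set ℝ≥0) : halfLineVolume s = volume (((↑) : ℝ≥0 → ℝ) '' s) :=
  measurableEmbedding_nnreal_coe.comap_apply _ _

theorem map_coe_halfLineVolume :
    halfLineVolume.map ((↑) : ℝ≥0 → ℝ) = volume.restrict (Ici 0) := by
  rw [halfLineVolume, measurableEmbedding_nnreal_coe.map_comap, NNReal.range_coe]

instance : SFinite halfLineVolume := by
  have hmap : (volume.restrict (Ici (0 : ℝ))).map Real.toNNReal = halfLineVolume := by
    rw [← map_coe_halfLineVolume, Measure.map_map measurable_real_toNNReal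
      measurable_coe_nnreal_real]
    simp [Function.comp_def]
  rw [← hmap]
  infer_instance

instance : halfLineVolume.IsOpenPosMeasure where
  open_pos U hU hne := by
    obtain ⟨t, ht⟩ := hne
    obtain ⟨u, htu, hsub⟩ := exists_Ico_subset_of_mem_nhds (hU.mem_nhds ht) (exists_gt t)
    have himage : Ico (t : ℝ) u ⊆ (↑) '' U := fun y hy =>
      ⟨⟨y, t.2.trans hy.1⟩, hsub hy, rfl⟩
    have hpos : 0 < volume (Ico (t : ℝ) u) := by simpa using htu
    rw [halfLineVolume_apply]
    exact (hpos.trans_le (measure_mono himage)).ne'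

theorem map_add_left_halfLineVolume (r : ℝ≥0) :
    halfLineVolume.map (r + ·) = halfLineVolume.restrict (Ici r) := by
  ext s hs
  rw [Measure.map_apply (measurable_const_add r) hs, Measure.restrict_apply hs,
    halfLineVolume_apply, halfLineVolume_apply,
    ← measure_preimage_add volume (r : ℝ) (_ '' (_ ∩ _))]
  congr 1
  ext y
  constructor
  · rintro ⟨t, ht, rfl⟩
    exact ⟨r + t, ⟨ht, mem_Ici.2 le_self_add⟩, NNReal.coe_add r t⟩
  · rintro ⟨u, ⟨hu, hru⟩, huy⟩
    obtain ⟨t, rfl⟩ := exists_add_of_le (mem_Ici.1 hru)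
    exact ⟨t, hu, by simpa using huy⟩

/-- The discount factor `exp (-a t)`. -/
def expDiscount (a t : ℝ≥0) : ℝ≥0∞ :=
  ENNReal.ofReal (Real.exp (-(a * t)))

theorem expDiscount_ne_zero (a t : ℝ≥0) : expDiscount a t ≠ 0 := by
  simp [expDiscount, Real.exp_pos]

theorem expDiscount_ne_top (a t : ℝ≥0) : expDiscount a t ≠ ∞ :=
  ENNReal.ofReal_ne_top

theorem measurable_expDiscount (a : ℝ≥0) : Measurable (expDiscount a) := by
  unfold expDiscount; fun_prop

theorem expDiscount_add_left (a b t : ℝ≥0) :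
    expDiscount (a + b) t = expDiscount a t * expDiscount b t := by
  rw [expDiscount, expDiscount, expDiscount, ← ENNReal.ofReal_mul (Real.exp_pos _).le,
    ← Real.exp_add]
  push_cast
  ring_nf

theorem expDiscount_add_right (a r t : ℝ≥0) :
    expDiscount a (r + t) = expDiscount a r * expDiscount a t := by
  simpa only [expDiscount, mul_comm] using expDiscount_add_left r t a

/-- The measure `exp (-a t) dt` on `[0, ∞)`. -/
def discountMeasure (a : ℝ≥0) : Measure ℝ≥0 :=
  halfLineVolume.withDensity (expDiscount a)

instance (a : ℝ≥0) : SFinite (discountMeasure a) :=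
  inferInstanceAs (SFinite (halfLineVolume.withDensity _))

theorem isFiniteMeasure_discountMeasure {a : ℝ≥0} (ha : 0 < a) :
    IsFiniteMeasure (discountMeasure a) := by
  refine isFiniteMeasure_withDensity (ne_of_lt ?_)
  have hintegral : IntegrableOn (fun t => Real.exp (-a * t)) (Ici 0) :=
    (integrableOn_Ici_iff_integrableOn_Ioi ..).2 (exp_neg_integrableOn_Ioi 0 (NNReal.coe_pos.2 ha))
  calc ∫⁻ t, expDiscount a t ∂halfLineVolume
      = ∫⁻ t in Ici 0, ENNReal.ofReal (Real.exp (-a * t)) := by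
        rw [← map_coe_halfLineVolume, measurableEmbedding_nnreal_coe.lintegral_map]
        simp [expDiscount]
    _ < ∞ := hintegral.lintegral_lt_top

theorem lintegral_discountMeasure (a : ℝ≥0) {u : ℝ≥0 → ℝ≥0∞} (hu : Measurable u) :
    ∫⁻ t, u t ∂(discountMeasure a) = ∫⁻ t, expDiscount a t * u t ∂halfLineVolume :=
  lintegral_withDensity_eq_lintegral_mul _ (measurable_expDiscount a) hu

theorem lintegral_discountMeasure_eq_add (a r : ℝ≥0) {u : ℝ≥0 → ℝ≥0∞} (hu : Measurable u) :
    ∫⁻ t, u t ∂(discountMeasure a) = ∫⁻ t in Iio r, u t ∂(discountMeasure a) +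
      expDiscount a r * ∫⁻ t, u (r + t) ∂(discountMeasure a) := by
  have htail : ∫⁻ t in Ici r, u t ∂(discountMeasure a) =
      expDiscount a r * ∫⁻ t, u (r + t) ∂(discountMeasure a) :=
    calc ∫⁻ t in Ici r, u t ∂(discountMeasure a)
        = ∫⁻ t in Ici r, expDiscount a t * u t ∂halfLineVolume :=
          setLIntegral_withDensity_eq_setLIntegral_mul _ (measurable_expDiscount a) hu
            measurableSet_Ici
      _ = ∫⁻ t, expDiscount a (r + t) * u (r + t) ∂halfLineVolume := by
          rw [← map_add_left_halfLineVolume]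
          exact lintegral_map ((measurable_expDiscount a).mul hu) (measurable_const_add r)
      _ = expDiscount a r * ∫⁻ t, u (r + t) ∂(discountMeasure a) := by
          have hshift : Measurable fun t => u (r + t) := hu.comp (measurable_const_add r)
          simp_rw [expDiscount_add_right, mul_assoc, lintegral_discountMeasure a hshift]
          exact lintegral_const_mul _ ((measurable_expDiscount a).mul hshift)
  rw [← htail, ← compl_Iio, lintegral_add_compl _ measurableSet_Iio]

end Discount

section LaplaceTransform

theorem ext_of_forall_integral_exp_neg_pow {μ ν : Measure ℝ≥0} [IsFiniteMeasure μ]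
    [IsFiniteMeasure ν]
    (h : ∀ n : ℕ, ∫ t, Real.exp (-(t : ℝ)) ^ n ∂μ = ∫ t, Real.exp (-(t : ℝ)) ^ n ∂ν) : μ = ν := by
  let b : ℝ≥0 →ᵇ ℝ := .ofNormedAddCommGroup (fun t : ℝ≥0 => Real.exp (-(t : ℝ))) (by fun_prop) 1
    fun t => by simp
  let A : StarSubalgebra ℝ (ℝ≥0 →ᵇ ℝ) :=
    { Algebra.adjoin ℝ {b} with
      star_mem' := fun {a} ha => (ext fun t => by simp : star a = a) ▸ ha }
  refine ext_of_forall_mem_subalgebra_integral_eq_of_polish (𝕜 := ℝ) (A := A) ?_ fun g hg => ?_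
  · exact fun s t hst => ⟨b, ⟨_, ⟨b, Algebra.self_mem_adjoin_singleton ℝ b, rfl⟩, rfl⟩,
      fun hb => hst (by simpa [b] using hb)⟩
  · change g ∈ Algebra.adjoin ℝ {b} at hg
    rw [← Subalgebra.mem_toSubmodule, Algebra.adjoin_eq_span] at hg
    induction hg using Submodule.span_induction with
    | mem x hx =>
      obtain ⟨n, rfl⟩ := Submonoid.mem_closure_singleton.1 hx
      exact h n
    | zero => simp
    | add x y _ _ hx hy =>
      simp only [BoundedContinuousFunction.coe_add, Pi.add_apply]
      rw [integral_add (x.integrable μ) (y.integrable μ), integral_add (x.integrable ν)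
        (y.integrable ν), hx, hy]
    | smul c x _ hx =>
      simp only [BoundedContinuousFunction.coe_smul, integral_smul, hx]

theorem ext_of_forall_lintegral_expDiscount {μ ν : Measure ℝ≥0} [IsFiniteMeasure μ]
    [IsFiniteMeasure ν]
    (h : ∀ n : ℕ, ∫⁻ t, expDiscount n t ∂μ = ∫⁻ t, expDiscount n t ∂ν) : μ = ν := by
  have hintegral (μ : Measure ℝ≥0) (n : ℕ) :
      ∫ t, Real.exp (-(t : ℝ)) ^ n ∂μ = (∫⁻ t, expDiscount n t ∂μ).toReal := by
    rw [integral_eq_lintegral_of_nonneg_ae (.of_forall fun t => by positivity)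
      (by fun_prop : Continuous _).aestronglyMeasurable]
    simp [expDiscount, ← Real.exp_nat_mul]
  exact ext_of_forall_integral_exp_neg_pow fun n => by rw [hintegral, hintegral, h]

theorem eq_of_forall_lintegral_discountMeasure_eq {u v : ℝ≥0 → ℝ≥0∞} (hu : Continuous u)
    (hv : Continuous v) (hfin : ∫⁻ t, u t ∂(discountMeasure 1) ≠ ∞)
    (h : ∀ n : ℕ, ∫⁻ t, u t ∂(discountMeasure (n + 1)) = ∫⁻ t, v t ∂(discountMeasure (n + 1))) :
    u = v := by
  let μ (u : ℝ≥0 → ℝ≥0∞) := halfLineVolume.withDensity fun t => expDiscount 1 t * u t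
  have hdens {u : ℝ≥0 → ℝ≥0∞} (hu : Continuous u) : Measurable fun t => expDiscount 1 t * u t :=
    (measurable_expDiscount 1).mul hu.measurable
  have hlap {u : ℝ≥0 → ℝ≥0∞} (hu : Continuous u) (n : ℕ) :
      ∫⁻ t, expDiscount n t ∂(μ u) = ∫⁻ t, u t ∂(discountMeasure (n + 1)) := by
    rw [lintegral_discountMeasure _ hu.measurable,
      lintegral_withDensity_eq_lintegral_mul _ (hdens hu) (measurable_expDiscount n)]
    exact lintegral_congr fun t => by
      rw [Pi.mul_apply, expDiscount_add_left, mul_right_comm, mul_comm (expDiscount 1 t)]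
  have hfin' : ∫⁻ t, expDiscount 1 t * u t ∂halfLineVolume ≠ ∞ := by
    rwa [← lintegral_discountMeasure 1 hu.measurable]
  have hfinv : ∫⁻ t, expDiscount 1 t * v t ∂halfLineVolume ≠ ∞ := by
    have h0 := h 0
    rw [Nat.cast_zero, zero_add] at h0
    rwa [← lintegral_discountMeasure 1 hv.measurable, ← h0]
  have := isFiniteMeasure_withDensity hfin'
  have := isFiniteMeasure_withDensity hfinv
  have hμ : μ u = μ v := ext_of_forall_lintegral_expDiscount fun n => by rw [hlap hu, hlap hv, h]
  have hae : u =ᵐ[halfLineVolume] v := by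
    filter_upwards [(withDensity_eq_iff (hdens hu).aemeasurable (hdens hv).aemeasurable hfin').1 hμ]
      with t ht
    exact (ENNReal.mul_right_inj (expDiscount_ne_zero 1 t) (expDiscount_ne_top 1 t)).1 ht
  exact (hu.ae_eq_iff_eq halfLineVolume hv).1 hae

end LaplaceTransform

section DiscountedValue

variable {a : ℝ≥0}

/-- The expected discounted reward `E_P[∫₀^∞ exp (-a t) f(w(t)) dt]`. -/
def discountedValue (a : ℝ≥0) (f : X → ℝ≥0∞) (P : ProbabilityMeasure (IPath X)) : ℝ≥0∞ :=
  ∫⁻ t, ∫⁻ w, f (w t) ∂(P : Measure (IPath X)) ∂(discountMeasure a)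

/-- The discounted reward `∫₀^τ exp (-a t) f(w(t)) dt` collected before time `τ`. -/
def rewardBefore (a : ℝ≥0) (f : X → ℝ≥0∞) (τ : IPath X → ℝ≥0) (w : IPath X) : ℝ≥0∞ :=
  ∫⁻ t in Iio (τ w), f (w t) ∂(discountMeasure a)

section BoundedContinuous

variable (f : X →ᵇ ℝ≥0) (P : ProbabilityMeasure (IPath X))

theorem lintegral_apply_le (t : ℝ≥0) :
    ∫⁻ w, (f (w t) : ℝ≥0∞) ∂(P : Measure (IPath X)) ≤ nndist f 0 :=
  (lintegral_mono fun w : IPath X => ENNReal.coe_le_coe.2 (NNReal.upper_bound f (w t))).trans_eq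
    (by simp)

theorem discountedValue_ne_top (ha : 0 < a) :
    discountedValue a (f ·) P ≠ ∞ := by
  have := isFiniteMeasure_discountMeasure ha
  refine ((lintegral_mono (lintegral_apply_le f P)).trans_lt ?_).ne
  rw [lintegral_const]
  finiteness

theorem continuous_lintegral_apply :
    Continuous fun t => ∫⁻ w, (f (w t) : ℝ≥0∞) ∂(P : Measure (IPath X)) := by
  refine continuous_iff_continuousAt.2 fun t =>
    tendsto_lintegral_filter_of_dominated_convergence (fun _ => nndist f 0) ?_ ?_ ?_ ?_
  · exact .of_forall fun s => (by fun_prop : Continuous _).measurable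
  · exact .of_forall fun s => .of_forall fun w => by exact_mod_cast NNReal.upper_bound f (w s)
  · simp [lintegral_const]
  · exact .of_forall fun w => (by fun_prop : Continuous fun s => (f (w s) : ℝ≥0∞)).tendsto t

theorem lintegral_apply_eq_of_discountedValue_eq {P P' : ProbabilityMeasure (IPath X)}
    (h : ∀ n : ℕ, discountedValue (n + 1) (f ·) P = discountedValue (n + 1) (f ·) P') (t : ℝ≥0) :
    ∫⁻ w, (f (w t) : ℝ≥0∞) ∂(P : Measure (IPath X)) =
      ∫⁻ w, (f (w t) : ℝ≥0∞) ∂(P' : Measure (IPath X)) :=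
  congrFun (eq_of_forall_lintegral_discountMeasure_eq (continuous_lintegral_apply f P)
    (continuous_lintegral_apply f P') (discountedValue_ne_top f P one_pos) h) t

theorem continuous_discountedValue [MetrizableSpace X] [SecondCountableTopology X] (ha : 0 < a) :
    Continuous (discountedValue (X := X) a (f ·)) := by
  have := isFiniteMeasure_discountMeasure ha
  refine continuous_iff_continuousAt.2 fun P =>
    tendsto_lintegral_filter_of_dominated_convergence (fun _ => nndist f 0) ?_ ?_ ?_ ?_
  · exact .of_forall fun P' => (continuous_lintegral_apply f P').measurable
  · exact .of_forall fun P' => .of_forall (lintegral_apply_le f P')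
  · simp [lintegral_const, ENNReal.mul_eq_top]
  · refine .of_forall fun t => Continuous.tendsto ?_ P
    exact ProbabilityMeasure.continuous_lintegral_boundedContinuousFunction
      (f.compContinuous ⟨fun w : IPath X => w t, by fun_prop⟩)

end BoundedContinuous

section DynamicProgramming

variable [MetrizableSpace X] [MeasurableSpace X] [BorelSpace X] {f : X → ℝ≥0∞}
  {τ : IPath X → ℝ≥0}

theorem measurable_comp_eval (hf : Measurable f) :
    Measurable fun p : IPath X × ℝ≥0 => f (p.1 p.2) :=
  hf.comp (measurable_continuousMap_eval measurable_fst measurable_snd)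

theorem measurable_discountedReward (a : ℝ≥0) (hf : Measurable f) :
    Measurable fun w : IPath X => ∫⁻ t, f (w t) ∂(discountMeasure a) :=
  (measurable_comp_eval hf).lintegral_prod_right'

theorem measurable_rewardBefore (hf : Measurable f) (hτ : Measurable τ) :
    Measurable (rewardBefore a f τ) := by
  have hset : MeasurableSet {p : IPath X × ℝ≥0 | p.2 < τ p.1} :=
    measurableSet_lt measurable_snd (hτ.comp measurable_fst)
  convert ((measurable_comp_eval hf).indicator hset).lintegral_prod_right'
    (ν := discountMeasure a) with w
  exact (lintegral_indicator measurableSet_Iio _).symm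

theorem discountedValue_eq_lintegral (P : ProbabilityMeasure (IPath X)) (hf : Measurable f) :
    discountedValue a f P = ∫⁻ w, ∫⁻ t, f (w t) ∂(discountMeasure a) ∂(P : Measure (IPath X)) :=
  (lintegral_lintegral_swap (measurable_comp_eval hf).aemeasurable).symm

variable {Q : IPath X → ProbabilityMeasure (IPath X)}

theorem IsAdaptedAt.measurable_discountedValue (hQ : IsAdaptedAt τ Q) (hf : Measurable f) :
    Measurable fun w => discountedValue a f (Q w) := by
  simp_rw [discountedValue_eq_lintegral _ hf]
  exact (Measure.measurable_lintegral (measurable_discountedReward a hf)).comp hQ.measurable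

variable [SecondCountableTopology X] {P R : ProbabilityMeasure (IPath X)}

theorem rewardBefore_stopAt (hτ : IsStopT τ) (w : IPath X) :
    rewardBefore a f τ (stopAt τ w) = rewardBefore a f τ w := by
  rw [rewardBefore, hτ.apply_stopAt]
  exact setLIntegral_congr_fun measurableSet_Iio fun t ht => by
    simp only [stopAt_apply_of_le (le_of_lt ht)]

theorem IsShiftCondDistrib.discountedValue_eq (hP : IsShiftCondDistrib τ P Q) (hτ : IsStopT τ)
    (hQ : IsAdaptedAt τ Q) (hf : Measurable f) :
    discountedValue a f P = ∫⁻ w, rewardBefore a f τ w ∂(P : Measure (IPath X)) +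
      ∫⁻ w, expDiscount a (τ w) * discountedValue a f (Q w) ∂(P : Measure (IPath X)) := by
  have hg : Measurable fun p : IPath X × IPath X =>
      expDiscount a (τ p.1) * ∫⁻ t, f (p.2 t) ∂(discountMeasure a) :=
    ((measurable_expDiscount a).comp (hτ.measurable.comp measurable_fst)).mul
      ((measurable_discountedReward a hf).comp measurable_snd)
  calc discountedValue a f P
      = ∫⁻ w, (rewardBefore a f τ w + expDiscount a (τ w) *
          ∫⁻ t, f (shiftAt τ w t) ∂(discountMeasure a)) ∂(P : Measure (IPath X)) := by
        rw [discountedValue_eq_lintegral _ hf]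
        exact lintegral_congr fun w =>
          lintegral_discountMeasure_eq_add a (τ w) (hf.comp w.continuous.measurable)
    _ = ∫⁻ w, rewardBefore a f τ w ∂(P : Measure (IPath X)) + ∫⁻ w, expDiscount a (τ w) *
          ∫⁻ t, f (shiftAt τ w t) ∂(discountMeasure a) ∂(P : Measure (IPath X)) :=
        lintegral_add_left (measurable_rewardBefore hf hτ.measurable) _
    _ = _ := by
        have hsplit := hP.lintegral_stopAt_shiftAt hτ hQ hg
        simp only [hτ.apply_stopAt] at hsplit
        rw [hsplit]
        congr 1
        refine lintegral_congr fun w => ?_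
        rw [lintegral_const_mul _ (measurable_discountedReward a hf),
          discountedValue_eq_lintegral _ hf]

theorem IsPasting.discountedValue_eq (hR : IsPasting τ P Q R) (hτ : IsStopT τ)
    (hQ : IsAdaptedAt τ Q) (hf : Measurable f) :
    discountedValue a f R = ∫⁻ w, rewardBefore a f τ w ∂(P : Measure (IPath X)) +
      ∫⁻ w, expDiscount a (τ w) * discountedValue a f (Q w) ∂(P : Measure (IPath X)) := by
  have htail : Measurable fun w => expDiscount a (τ w) * discountedValue a f (Q w) :=
    ((measurable_expDiscount a).comp hτ.measurable).mul (hQ.measurable_discountedValue hf)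
  rw [hR.2.discountedValue_eq hτ hQ hf,
    lintegral_eq_of_forall_memFstopT_eq hτ hR.1 (measurable_rewardBefore hf hτ.measurable)
      (rewardBefore_stopAt hτ),
    lintegral_eq_of_forall_memFstopT_eq hτ hR.1 htail fun w => by
      rw [hτ.apply_stopAt, hQ.apply_stopAt hτ]]

end DynamicProgramming

end DiscountedValue

section MarkovCorrespondence

variable [MeasurableSpace X]

/-- The disintegration property (MP1) at `τ`: the members of `C x` have conditional distributions
of the future after `τ` which select from `C` at the position reached at time `τ`. -/
def DisintegratesAt (τ : IPath X → ℝ≥0) (C : X → Set (ProbabilityMeasure (IPath X))) : Prop :=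
  ∀ x, ∀ P ∈ C x, ∃ Q : IPath X → ProbabilityMeasure (IPath X), IsAdaptedAt τ Q ∧
    (∀ᵐ w ∂(P : Measure (IPath X)), Q w ∈ C (piAt τ w)) ∧ IsShiftCondDistrib τ P Q

/-- The reconstruction property (MP2) at `τ`: the values of `C` are stable under pasting adapted
selections of `C` at time `τ`. -/
def StableUnderPastingAt (τ : IPath X → ℝ≥0) (C : X → Set (ProbabilityMeasure (IPath X))) : Prop :=
  ∀ x, ∀ P ∈ C x, ∀ Q : IPath X → ProbabilityMeasure (IPath X), IsAdaptedAt τ Q →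
    (∀ w, Q w ∈ C (piAt τ w)) → ∀ R : ProbabilityMeasure (IPath X), IsPasting τ P Q R → R ∈ C x

/-- A compact-valued measurable correspondence of laws started at the given point which has the
properties (MP1) and (MP2) at every member of the family `T` of stopping times. -/
structure IsMarkovCorrespondence (T : Set (IPath X → ℝ≥0))
    (C : X → Set (ProbabilityMeasure (IPath X))) : Prop extends IsMeasurableCompactValued C where
  isStopT : ∀ τ ∈ T, IsStopT τ
  start : ∀ x, ∀ P ∈ C x, (P : Measure (IPath X)) {w | w 0 = x} = 1
  disintegratesAt : ∀ τ ∈ T, DisintegratesAt τ C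
  stableUnderPastingAt : ∀ τ ∈ T, StableUnderPastingAt τ C

theorem IsMeasurableCompactValued.exists_measurable_selection_probabilityMeasure {Z Y : Type*}
    [MeasurableSpace Z] [TopologicalSpace Y] [SecondCountableTopology Y] [HasOuterApproxClosed Y]
    [MeasurableSpace Y] [BorelSpace Y] {C : Z → Set (ProbabilityMeasure Y)}
    (hC : IsMeasurableCompactValued C) :
    ∃ sel : Z → ProbabilityMeasure Y,
      (∀ U, IsOpen U → MeasurableSet (sel ⁻¹' U)) ∧ ∀ x, sel x ∈ C x := by
  obtain ⟨g, hg⟩ := exists_seq_boundedContinuous_separating Y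
  exact hC.exists_measurable_selection
    (fun n => ProbabilityMeasure.continuous_lintegral_boundedContinuousFunction (g n))
    fun P P' h => Subtype.ext (hg P P' h)

variable [MetrizableSpace X] {τ : IPath X → ℝ≥0} {T : Set (IPath X → ℝ≥0)}
  {C : X → Set (ProbabilityMeasure (IPath X))} {x : X} {P : ProbabilityMeasure (IPath X)}
  {Q : IPath X → ProbabilityMeasure (IPath X)}

theorem IsMarkovCorrespondence.ae_start_eq (hC : IsMarkovCorrespondence T C) (hP : P ∈ C x) :
    ∀ᵐ w ∂(P : Measure (IPath X)), w 0 = x := by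
  have hclosed : IsClosed {w : IPath X | w 0 = x} :=
    isClosed_singleton.preimage (continuous_eval_const 0)
  exact (prob_compl_eq_zero_iff hclosed.measurableSet).2 (hC.start x P hP)

variable [SecondCountableTopology X] [BorelSpace X]

theorem IsAdaptedAt.comp_piAt (hτ : IsStopT τ) {sel : X → ProbabilityMeasure (IPath X)}
    (hsel : ∀ U, IsOpen U → MeasurableSet (sel ⁻¹' U)) :
    IsAdaptedAt τ fun w => sel (piAt τ w) :=
  .of_apply_stopAt hτ (fun U hU => measurable_piAt hτ.measurable (hsel U hU)) fun w => by
    rw [hτ.piAt_stopAt]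

namespace IsMarkovCorrespondence

theorem exists_isPasting_mem (hC : IsMarkovCorrespondence T C) (hτ : τ ∈ T) (hP : P ∈ C x)
    (hQ : IsAdaptedAt τ Q) (hQC : ∀ w, Q w ∈ C (piAt τ w)) :
    ∃ R : ProbabilityMeasure (IPath X), IsPasting τ P Q R ∧ R ∈ C x := by
  have hstopping := hC.isStopT τ hτ
  have hpaste := isPasting_map_concatAt (P := (P : Measure (IPath X))) hstopping hQ
    fun w => hC.ae_start_eq (hQC w)
  have hconcat := measurable_concatAt hstopping.measurable
  exact ⟨⟨_, Measure.isProbabilityMeasure_map hconcat.aemeasurable⟩,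
    hpaste, hC.stableUnderPastingAt τ hτ x P hP Q hQ hQC _ hpaste⟩

variable {a : ℝ≥0} {f : X →ᵇ ℝ≥0}

theorem ae_mem_argmax (hC : IsMarkovCorrespondence T C) (hτ : τ ∈ T) (ha : 0 < a)
    (hP : P ∈ argmax (discountedValue a (f ·)) (C x)) (hQ : IsAdaptedAt τ Q)
    (hQC : ∀ᵐ w ∂(P : Measure (IPath X)), Q w ∈ C (piAt τ w)) (hPQ : IsShiftCondDistrib τ P Q) :
    ∀ᵐ w ∂(P : Measure (IPath X)),
      Q w ∈ argmax (discountedValue a (f ·)) (C (piAt τ w)) := by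
  have hstopping := hC.isStopT τ hτ
  have hf : Measurable fun y => (f y : ℝ≥0∞) := by fun_prop
  obtain ⟨sel, hmeas, hsel⟩ := (hC.toIsMeasurableCompactValued.argmax
    (continuous_discountedValue f ha)).exists_measurable_selection_probabilityMeasure
  have hbest := IsAdaptedAt.comp_piAt hstopping hmeas
  obtain ⟨R, hR, hRC⟩ := hC.exists_isPasting_mem hτ hP.1 hbest fun w => (hsel _).1
  have hle := hP.2 hRC
  have hfin := discountedValue_ne_top f P ha
  rw [mem_ofPred_eq, hR.discountedValue_eq hstopping hbest hf,
    hPQ.discountedValue_eq hstopping hQ hf] at hle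
  rw [hPQ.discountedValue_eq hstopping hQ hf, ENNReal.add_ne_top] at hfin
  have hmono : ∀ᵐ w ∂(P : Measure (IPath X)),
      expDiscount a (τ w) * discountedValue a (f ·) (Q w) ≤
        expDiscount a (τ w) * discountedValue a (f ·) (sel (piAt τ w)) := by
    filter_upwards [hQC] with w hw
    exact mul_le_mul_right ((hsel _).2 hw) _
  have heq := ae_eq_of_ae_le_of_lintegral_le hmono hfin.2
    (((measurable_expDiscount a).comp hstopping.measurable).mul
      (hbest.measurable_discountedValue hf)).aemeasurable
    ((ENNReal.add_le_add_iff_left hfin.1).1 hle)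
  filter_upwards [hQC, heq] with w hw hval
  have hvalue := (ENNReal.mul_right_inj (expDiscount_ne_zero a _) (expDiscount_ne_top a _)).1 hval
  exact ⟨hw, fun P' hP' => ((hsel _).2 hP').trans_eq hvalue.symm⟩

theorem stableUnderPastingAt_argmax (hC : IsMarkovCorrespondence T C) (hτ : τ ∈ T) :
    StableUnderPastingAt τ fun x => argmax (discountedValue a (f ·)) (C x) := by
  intro x P hP Q hQ hQC R hR
  have hstopping := hC.isStopT τ hτ
  have hf : Measurable fun y => (f y : ℝ≥0∞) := by fun_prop
  obtain ⟨Q', hQ', hQ'C, hPQ'⟩ := hC.disintegratesAt τ hτ x P hP.1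
  have hle : discountedValue a (f ·) P ≤ discountedValue a (f ·) R := by
    rw [hR.discountedValue_eq hstopping hQ hf, hPQ'.discountedValue_eq hstopping hQ' hf]
    refine add_le_add_right (lintegral_mono_ae ?_) _
    filter_upwards [hQ'C] with w hw
    exact mul_le_mul_right ((hQC w).2 hw) _
  exact ⟨hC.stableUnderPastingAt τ hτ x P hP.1 Q hQ (fun w => (hQC w).1) R hR,
    fun P' hP' => (hP.2 hP').trans hle⟩
theorem argmax (hC : IsMarkovCorrespondence T C) (ha : 0 < a) (f : X →ᵇ ℝ≥0) :
    IsMarkovCorrespondence T fun x => argmax (discountedValue a (f ·)) (C x) where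
  toIsMeasurableCompactValued :=
    hC.toIsMeasurableCompactValued.argmax (continuous_discountedValue f ha)
  isStopT := hC.isStopT
  start x P hP := hC.start x P hP.1
  disintegratesAt τ hτ x P hP :=
    let ⟨Q, hQ, hQC, hPQ⟩ := hC.disintegratesAt τ hτ x P hP.1
    ⟨Q, hQ, hC.ae_mem_argmax hτ ha hP hQ hQC hPQ, hPQ⟩
  stableUnderPastingAt _ hτ := hC.stableUnderPastingAt_argmax hτ

variable {α : ℕ → ℝ≥0}

theorem iterArgmax (hC : IsMarkovCorrespondence T C) (hα : ∀ n, 0 < α n) (h : ℕ → X →ᵇ ℝ≥0) :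
    ∀ n, IsMarkovCorrespondence T
      fun x => iterArgmax (fun n => discountedValue (α n) (h n ·)) (C x) n
  | 0 => hC
  | n + 1 => (hC.iterArgmax hα h n).argmax (hα n) (h n)

theorem disintegratesAt_lexArgmax (hC : IsMarkovCorrespondence T C) (hα : ∀ n, 0 < α n)
    (h : ℕ → X →ᵇ ℝ≥0) (hτ : τ ∈ T) :
    DisintegratesAt τ fun x => lexArgmax (fun n => discountedValue (α n) (h n ·)) (C x) := by
  intro x P hP
  obtain ⟨Q, hQ, hQC, hPQ⟩ := hC.disintegratesAt τ hτ x P (lexArgmax_subset _ _ hP)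
  have hiter : ∀ n, ∀ᵐ w ∂(P : Measure (IPath X)),
      Q w ∈ _root_.iterArgmax (fun n => discountedValue (α n) (h n ·)) (C (piAt τ w)) n := by
    intro n
    induction n with
    | zero => exact hQC
    | succ n ih =>
      exact (hC.iterArgmax hα h n).ae_mem_argmax hτ (hα n) (mem_iInter.1 hP (n + 1)) hQ ih hPQ
  exact ⟨Q, hQ, (ae_all_iff.2 hiter).mono fun w hw => mem_iInter.2 hw, hPQ⟩

end IsMarkovCorrespondence

end MarkovCorrespondence

section Uniqueness

theorem forall_mem_insert_apply_tsub_eq_inter {A : ℝ≥0 → Set X} {I : Finset ℝ≥0} {r t₀ : ℝ≥0}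
    (hr : r ≤ t₀) (hI : ∀ t ∈ I, t₀ ≤ t) :
    {w : IPath X | ∀ t ∈ insert t₀ I, w (t - r) ∈ A t} = (fun w => w (t₀ - r)) ⁻¹' A t₀ ∩
      shiftAt (fun _ => t₀ - r) ⁻¹' {w | ∀ t ∈ I, w (t - t₀) ∈ A t} := by
  ext w
  have hshift : ∀ t ∈ I, shiftAt (fun _ => t₀ - r) w (t - t₀) = w (t - r) := fun t ht => by
    rw [← tsub_add_tsub_cancel (hI t ht) hr, add_comm]
    rfl
  simp only [mem_ofPred_eq, Finset.forall_mem_insert, mem_inter_iff, mem_preimage]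
  exact and_congr_right fun _ => forall₂_congr fun t ht => by rw [hshift t ht]

variable [MeasurableSpace X]

theorem isStopT_const (r : ℝ≥0) : IsStopT (X := X) fun _ => r := fun s =>
  @MeasurableSet.const _ (natF X s) (r ≤ s)

variable [BorelSpace X]

theorem measurableSet_forall_mem_apply_tsub {A : ℝ≥0 → Set X} (hA : ∀ t, MeasurableSet (A t))
    (I : Finset ℝ≥0) (r : ℝ≥0) : MeasurableSet {w : IPath X | ∀ t ∈ I, w (t - r) ∈ A t} := by
  simp only [ofPred_forall]
  exact I.measurableSet_biInter fun t _ => (continuous_eval_const (t - r)).measurable (hA t)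

variable {P P' : ProbabilityMeasure (IPath X)}

theorem map_eval_eq_of_discountedValue_eq {g : ℕ → X →ᵇ ℝ≥0}
    (hg : ∀ (μ ν : Measure X) [IsFiniteMeasure μ] [IsFiniteMeasure ν],
      (∀ k, ∫⁻ y, g k y ∂μ = ∫⁻ y, g k y ∂ν) → μ = ν)
    (h : ∀ k n : ℕ, discountedValue (n + 1) (g k ·) P = discountedValue (n + 1) (g k ·) P')
    (t : ℝ≥0) :
    (P : Measure (IPath X)).map (fun w => w t) = (P' : Measure (IPath X)).map fun w => w t := by
  refine hg _ _ fun k => ?_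
  have heval : Measurable fun w : IPath X => w t := (continuous_eval_const t).measurable
  have hgk : Measurable fun y => (g k y : ℝ≥0∞) := by fun_prop
  rw [lintegral_map hgk heval, lintegral_map hgk heval]
  exact lintegral_apply_eq_of_discountedValue_eq (g k) (h k) t

variable [MetrizableSpace X] [SecondCountableTopology X]

theorem memFstopT_const_preimage_eval (r : ℝ≥0) {A : Set X} (hA : MeasurableSet A) :
    MemFstopT (fun _ => r) ((fun w : IPath X => w r) ⁻¹' A) := by
  refine (isStopT_const r).memFstopT_iff.2 ⟨(continuous_eval_const r).measurable hA, ?_⟩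
  ext w
  rw [mem_preimage, mem_preimage, stopAt_apply_of_le le_rfl, mem_preimage]

variable {D : X → Set (ProbabilityMeasure (IPath X))} {sel : X → ProbabilityMeasure (IPath X)}
  {x : X}

theorem DisintegratesAt.measure_eval_inter_shiftAt {r : ℝ≥0} (hD : DisintegratesAt (fun _ => r) D)
    (hP : P ∈ D x) (hsel : ∀ U, IsOpen U → MeasurableSet (sel ⁻¹' U)) {A : Set X}
    (hA : MeasurableSet A) {B : Set (IPath X)} (hB : MeasurableSet B)
    (hBsel : ∀ y, ∀ R ∈ D y, (R : Measure (IPath X)) B = (sel y : Measure (IPath X)) B) :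
    (P : Measure (IPath X)) ((fun w => w r) ⁻¹' A ∩ shiftAt (fun _ => r) ⁻¹' B) =
      ∫⁻ y in A, (sel y : Measure (IPath X)) B ∂(P : Measure (IPath X)).map fun w => w r := by
  obtain ⟨Q, -, hQD, hPQ⟩ := hD x P hP
  have hmeas : Measurable fun y => (sel y : Measure (IPath X)) B :=
    (Measure.measurable_coe hB).comp (measurable_coe_of_forall_isOpen hsel)
  rw [hPQ _ (memFstopT_const_preimage_eval r hA) B hB,
    setLIntegral_map hA hmeas (continuous_eval_const r).measurable]
  exact lintegral_congr_ae (ae_restrict_of_ae (hQD.mono fun w hw => hBsel _ _ hw))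

theorem measure_forall_mem_apply_tsub_eq (hD : ∀ r, DisintegratesAt (fun _ => r) D)
    (hsel : ∀ U, IsOpen U → MeasurableSet (sel ⁻¹' U)) (hselD : ∀ x, sel x ∈ D x)
    (hmarg : ∀ x, ∀ P ∈ D x, ∀ P' ∈ D x, ∀ t : ℝ≥0,
      (P : Measure (IPath X)).map (fun w => w t) = (P' : Measure (IPath X)).map fun w => w t)
    {A : ℝ≥0 → Set X} (hA : ∀ t, MeasurableSet (A t)) (I : Finset ℝ≥0) :
    ∀ r, (∀ t ∈ I, r ≤ t) → ∀ x, ∀ P ∈ D x, ∀ P' ∈ D x,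
      (P : Measure (IPath X)) {w | ∀ t ∈ I, w (t - r) ∈ A t} =
        (P' : Measure (IPath X)) {w | ∀ t ∈ I, w (t - r) ∈ A t} := by
  induction I using Finset.induction_on_min with
  | empty => simp
  | insert t₀ I ht₀ ih =>
    intro r hr x P hP P' hP'
    have hfuture : ∀ y, ∀ R ∈ D y, (R : Measure (IPath X)) {w | ∀ t ∈ I, w (t - t₀) ∈ A t} =
        (sel y : Measure (IPath X)) {w | ∀ t ∈ I, w (t - t₀) ∈ A t} := fun y R hR =>
      ih t₀ (fun t ht => (ht₀ t ht).le) y R hR _ (hselD y)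
    have hB := measurableSet_forall_mem_apply_tsub hA I t₀
    rw [forall_mem_insert_apply_tsub_eq_inter (hr t₀ (Finset.mem_insert_self _ _))
        fun t ht => (ht₀ t ht).le,
      (hD _).measure_eval_inter_shiftAt hP hsel (hA t₀) hB hfuture,
      (hD _).measure_eval_inter_shiftAt hP' hsel (hA t₀) hB hfuture, hmarg x P hP P' hP']

theorem subsingleton_of_map_eval_eq (hD : ∀ r, DisintegratesAt (fun _ => r) D)
    (hsel : ∀ U, IsOpen U → MeasurableSet (sel ⁻¹' U)) (hselD : ∀ x, sel x ∈ D x)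
    (hmarg : ∀ x, ∀ P ∈ D x, ∀ P' ∈ D x, ∀ t : ℝ≥0,
      (P : Measure (IPath X)).map (fun w => w t) = (P' : Measure (IPath X)).map fun w => w t)
    (x : X) : (D x).Subsingleton := by
  intro P hP P' hP'
  have heq : (P : Measure (IPath X)) = P' := ext_of_forall_measure_cylinder fun I A hA => by
    simpa only [tsub_zero] using measure_forall_mem_apply_tsub_eq hD hsel hselD hmarg hA I 0
      (fun t _ => zero_le) x P hP P' hP'
  exact Subtype.ext heq

end Uniqueness

theorem strong_markov_selection_general [MetrizableSpace X] [SecondCountableTopology X]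
    [MeasurableSpace X] [BorelSpace X] {T : Set (IPath X → ℝ≥0)}
    {C : X → Set (ProbabilityMeasure (IPath X))} (hC : IsMarkovCorrespondence T C)
    (hT : ∀ r : ℝ≥0, (fun _ => r) ∈ T) :
    ∃ sel : X → ProbabilityMeasure (IPath X),
      (∀ U, IsOpen U → MeasurableSet (sel ⁻¹' U)) ∧ (∀ x, sel x ∈ C x) ∧
      ∀ x, ∀ τ ∈ T, IsShiftCondDistrib τ (sel x) fun w => sel (piAt τ w) := by
  obtain ⟨g, hg⟩ := exists_seq_boundedContinuous_separating X
  let φ (m : ℕ) : ProbabilityMeasure (IPath X) → ℝ≥0∞ :=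
    discountedValue (m.unpair.2 + 1) (g m.unpair.1 ·)
  let D (x : X) := lexArgmax φ (C x)
  have hφ : ∀ m, Continuous (φ m) := fun m => continuous_discountedValue _ (by positivity)
  have hdis : ∀ τ ∈ T, DisintegratesAt τ D := fun τ hτ =>
    hC.disintegratesAt_lexArgmax (fun m => by positivity) (fun m => g m.unpair.1) hτ
  have hmarg : ∀ x, ∀ P ∈ D x, ∀ P' ∈ D x, ∀ t : ℝ≥0,
      (P : Measure (IPath X)).map (fun w => w t) =
        (P' : Measure (IPath X)).map fun w => w t := fun x P hP P' hP' =>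
    map_eval_eq_of_discountedValue_eq hg fun k n => by
      simpa only [φ, Nat.unpair_pair] using apply_eq_of_mem_lexArgmax hP hP' (Nat.pair k n)
  obtain ⟨sel, hmeas, hsel⟩ := (hC.toIsMeasurableCompactValued.lexArgmax
    hφ).exists_measurable_selection_probabilityMeasure
  have hunique := subsingleton_of_map_eval_eq (fun r => hdis _ (hT r)) hmeas hsel hmarg
  refine ⟨sel, hmeas, fun x => lexArgmax_subset _ _ (hsel x), fun x τ hτ => ?_⟩
  obtain ⟨Q, -, hQD, hQ⟩ := hdis τ hτ x (sel x) (hsel x)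
  exact hQ.congr_ae (hQD.mono fun w hw => hunique _ hw (hsel _))

/-- **Strong Markov selection theorem.**  Let `𝒞 : X → 2^𝒫` satisfy (C1)–(C3), and
assume (MP1) and (MP2) hold for every finite stopping time `τ`: the regular
conditional probability distributions of members of `𝒞(x)` given `ℱ_τ` lie in
`𝒞(w(τ(w)))` a.s., and `𝒞` is stable under the products `P ⊗_τ Q`.  Then there
exists a measurable selection `x ↦ P_x ∈ 𝒞(x)` with the strong Markov property
`P_x[θ_τ⁻¹(·) | ℱ_τ](w) = P_{π_τ(w)}(·)` for `P_x`-a.e. `w`, for every stopping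
time `τ`. -/
theorem strong_markov_selection
    {X : Type*} [TopologicalSpace X] [PolishSpace X] [MeasurableSpace X] [BorelSpace X]
    (C : X → Set (ProbabilityMeasure (IPath X)))
    (hC1 : ∀ x, (C x).Nonempty ∧ IsCompact (C x) ∧ ConvexMeasSet (C x))
    (hC2 : ∀ K : Set (ProbabilityMeasure (IPath X)), IsClosed K →
      MeasurableSet {x | (C x ∩ K).Nonempty})
    (hC3 : ∀ x, ∀ P ∈ C x, (P : Measure (IPath X)) {w : IPath X | w 0 = x} = 1)
    (hMP1 : ∀ x, ∀ P ∈ C x, ∀ τ : IPath X → ℝ≥0, IsStopT τ →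
      ∃ Q : IPath X → ProbabilityMeasure (IPath X),
        (∀ U : Set (ProbabilityMeasure (IPath X)), IsOpen U → MemFstopT τ (Q ⁻¹' U)) ∧
        (∀ᵐ w ∂(P : Measure (IPath X)), Q w ∈ C (piAt τ w)) ∧
        (∀ A : Set (IPath X), MemFstopT τ A →
          ∀ B : Set (IPath X), MeasurableSet B →
            (P : Measure (IPath X)) (A ∩ shiftAt τ ⁻¹' B) =
              ∫⁻ w in A, (Q w : Measure (IPath X)) B ∂(P : Measure (IPath X))))
    (hMP2 : ∀ x, ∀ P ∈ C x, ∀ τ : IPath X → ℝ≥0, IsStopT τ →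
      ∀ Q : IPath X → ProbabilityMeasure (IPath X),
        (∀ U : Set (ProbabilityMeasure (IPath X)), IsOpen U → MemFstopT τ (Q ⁻¹' U)) →
        (∀ w, Q w ∈ C (piAt τ w)) →
        ∀ R : ProbabilityMeasure (IPath X),
          ((∀ A : Set (IPath X), MemFstopT τ A →
              (R : Measure (IPath X)) A = (P : Measure (IPath X)) A) ∧
           (∀ A : Set (IPath X), MemFstopT τ A →
              ∀ B : Set (IPath X), MeasurableSet B →
                (R : Measure (IPath X)) (A ∩ shiftAt τ ⁻¹' B) =
                  ∫⁻ w in A, (Q w : Measure (IPath X)) B ∂(R : Measure (IPath X)))) →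
          R ∈ C x) :
    ∃ sel : X → ProbabilityMeasure (IPath X),
      (∀ U : Set (ProbabilityMeasure (IPath X)), IsOpen U →
        MeasurableSet (sel ⁻¹' U)) ∧
      (∀ x, sel x ∈ C x) ∧
      ∀ x, ∀ τ : IPath X → ℝ≥0, IsStopT τ →
        ∀ A : Set (IPath X), MemFstopT τ A →
          ∀ B : Set (IPath X), MeasurableSet B →
            (sel x : Measure (IPath X)) (A ∩ shiftAt τ ⁻¹' B) =
              ∫⁻ w in A, (sel (piAt τ w) : Measure (IPath X)) B
                ∂(sel x : Measure (IPath X)) := by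
  obtain ⟨sel, hmeas, hsel, hmarkov⟩ :=
    strong_markov_selection_general (T := {τ | IsStopT τ}) (C := C)
      { nonempty := fun x => (hC1 x).1
        isCompact := fun x => (hC1 x).2.1
        measurableSet := hC2
        isStopT := fun _ hτ => hτ
        start := hC3
        disintegratesAt := fun τ hτ x P hP => hMP1 x P hP τ hτ
        stableUnderPastingAt := fun τ hτ x P hP => hMP2 x P hP τ hτ } isStopT_const
  exact ⟨sel, hmeas, hsel, hmarkov⟩
end
end

section
/- Let f : ℝ^d → ℝ^d be continuous, and for x ∈ ℝ^d let S(x) ⊆ Ω = C([0,∞) → ℝ^d) be the set of all global solutions u with u(t) = x + ∫₀^t f(u(s)) ds for all t ≥ 0. Assume that for every x the set S(x) is nonempty, and that for every compact K ⊆ ℝ^d the set S(K) = ⋃_{x ∈ K} S(x) is compact in Ω (with the topology of uniform convergence on compacts). Then there exists a Borel measurable map 𝔲 : ℝ^d → Ω such that 𝔲(·, x) ∈ S(x) for every x ∈ ℝ^d and the semigroup property holds: 𝔲(t₂, 𝔲(t₁, x)) = 𝔲(t₁ + t₂, x) for all t₁, t₂ ≥ 0 and all x ∈ ℝ^d. 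-/
open MeasureTheory Set
open scoped NNReal

noncomputable section

/-- The Borel σ-algebra on the path space. -/
instance {X : Type*} [TopologicalSpace X] : MeasurableSpace (IPath X) := borel _
instance {X : Type*} [TopologicalSpace X] : BorelSpace (IPath X) := ⟨rfl⟩

/-- The integral funnel `S(x)`: all global solutions of `du/dt = f(u)`, `u(0) = x`,
in integral form `u(t) = x + ∫₀^t f(u(s)) ds`. -/
def sol {d : ℕ} (f : EuclideanSpace ℝ (Fin d) → EuclideanSpace ℝ (Fin d))
    (x : EuclideanSpace ℝ (Fin d)) : Set (IPath (EuclideanSpace ℝ (Fin d))) :=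
  {u | ∀ t : ℝ≥0, u t = x + ∫ s in Ioc (0 : ℝ) (t : ℝ), f (u (Real.toNNReal s))}

/-!
Maximize over `S(x)`, one after the other, the payoffs `∫₀^∞ e^{-(n+1)s} φᵢ(u(s)) ds`, where the
`φᵢ` are countably many bounded continuous functions separating points. A payoff is a part depending
on the path up to time `t` plus `e^{-(n+1)t}` times the payoff of the path shifted by `t`. Hence
passing to the maximizers preserves stability under shifts and splicing, besides nonemptiness,
compactness and measurability. A bounded continuous function is determined by its Laplace transform
at the positive integers, so only one path `𝔲(·, x)` survives all the maximizations. Stability of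
the singletons `{𝔲(·, x)}` under shifts is the semigroup property. The solution funnel itself is
measurable because the set of initial points from which a solution lies in a given closed set of
paths is closed.
-/

section Correspondence

/-- Measurability of a set-valued map `S`, tested on the closed sets that its values hit. -/
def MeasurableHits {X Y : Type*} [MeasurableSpace X] [TopologicalSpace Y] (S : X → Set Y) : Prop :=
  ∀ ⦃F : Set Y⦄, IsClosed F → MeasurableSet {x | (S x ∩ F).Nonempty}

/-- The set-valued map of those points of `S x` at which `J` is maximal on `S x`. -/
def maximizers {X Y : Type*} (J : Y → ℝ) (S : X → Set Y) (x : X) : Set Y :=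
  {y ∈ S x | IsMaxOn J (S x) y}

/-- Krylov's successive maximization: `S` at stage `0`, and at stage `n + 1` the maximizers of
`J n` over stage `n`. -/
def iteratedMaximizers {X Y : Type*} (J : ℕ → Y → ℝ) (S : X → Set Y) : ℕ → X → Set Y
  | 0 => S
  | n + 1 => maximizers (J n) (iteratedMaximizers J S n)

variable {X Y : Type*}

lemma iteratedMaximizers_succ_subset (J : ℕ → Y → ℝ) (S : X → Set Y) (n : ℕ) (x : X) :
    iteratedMaximizers J S (n + 1) x ⊆ iteratedMaximizers J S n x :=
  fun _ hy => hy.1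

lemma subsingleton_iInter_iteratedMaximizers {J : ℕ → Y → ℝ}
    (hJ : ∀ y z, (∀ n, J n y = J n z) → y = z) (S : X → Set Y) (x : X) :
    (⋂ n, iteratedMaximizers J S n x).Subsingleton := by
  intro y hy z hz
  rw [mem_iInter] at hy hz
  exact hJ y z fun n => le_antisymm ((hz (n + 1)).2 (hy n)) ((hy (n + 1)).2 (hz n))

variable [TopologicalSpace Y]

lemma maximizers_nonempty {J : Y → ℝ} (hJ : Continuous J) {S : X → Set Y} {x : X}
    (hS : IsCompact (S x)) (hne : (S x).Nonempty) : (maximizers J S x).Nonempty :=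
  hS.exists_isMaxOn hne hJ.continuousOn

lemma isCompact_maximizers {J : Y → ℝ} (hJ : Continuous J) {S : X → Set Y} {x : X}
    (hS : IsCompact (S x)) : IsCompact (maximizers J S x) := by
  have maximizers_eq : maximizers J S x = S x ∩ ⋂ z ∈ S x, {y | J z ≤ J y} := by
    ext y
    simp only [maximizers, isMaxOn_iff, mem_ofPred_eq, mem_inter_iff, mem_iInter]
  rw [maximizers_eq]
  exact hS.inter_right (isClosed_biInter fun z _ => isClosed_le continuous_const hJ)

lemma maximizers_inter_nonempty_iff {J : Y → ℝ} (hJ : Continuous J) {S : X → Set Y} {x : X}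
    (hS : IsCompact (S x)) {F : Set Y} (hF : IsClosed F) :
    (maximizers J S x ∩ F).Nonempty ↔ (S x ∩ F).Nonempty ∧
      ∀ q : ℚ, (S x ∩ {y | q ≤ J y}).Nonempty → (S x ∩ (F ∩ {y | q ≤ J y})).Nonempty := by
  constructor
  · rintro ⟨y, ⟨hyS, hymax⟩, hyF⟩
    refine ⟨⟨y, hyS, hyF⟩, fun q ⟨z, hzS, hqz⟩ => ⟨y, hyS, hyF, ?_⟩⟩
    exact le_trans (mem_ofPred.1 hqz) (hymax hzS)
  · rintro ⟨hne, hlevel⟩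
    obtain ⟨y, ⟨hyS, hyF⟩, hymax⟩ := (hS.inter_right hF).exists_isMaxOn hne hJ.continuousOn
    refine ⟨y, ⟨hyS, fun z hzS => ?_⟩, hyF⟩
    change J z ≤ J y
    by_contra! hlt
    obtain ⟨q, hyq, hqz⟩ := exists_rat_btwn hlt
    obtain ⟨w, hwS, hwF, hqw⟩ := hlevel q ⟨z, hzS, hqz.le⟩
    exact (hyq.trans_le hqw).not_ge (hymax ⟨hwS, hwF⟩)

variable [MeasurableSpace X]

lemma MeasurableHits.maximizers {S : X → Set Y} (hS : MeasurableHits S)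
    (hcpt : ∀ x, IsCompact (S x)) {J : Y → ℝ} (hJ : Continuous J) :
    MeasurableHits (maximizers J S) := by
  intro F hF
  have hlevel (q : ℚ) : IsClosed {y | q ≤ J y} := isClosed_le continuous_const hJ
  simp only [maximizers_inter_nonempty_iff hJ (hcpt _) hF]
  exact measurableSet_setOfPred.2 <| (measurableSet_setOfPred.1 (hS hF)).and <| .forall fun q =>
    (measurableSet_setOfPred.1 (hS (hlevel q))).imp
      (measurableSet_setOfPred.1 (hS (hF.inter (hlevel q))))

lemma MeasurableHits.iInter [T2Space Y] {S : ℕ → X → Set Y} (hS : ∀ n, MeasurableHits (S n))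
    (hcpt : ∀ n x, IsCompact (S n x)) (hanti : ∀ n x, S (n + 1) x ⊆ S n x) :
    MeasurableHits fun x => ⋂ n, S n x := by
  intro F hF
  have iInter_hits_iff (x : X) :
      ((⋂ n, S n x) ∩ F).Nonempty ↔ ∀ n, (S n x ∩ F).Nonempty := by
    rw [iInter_inter]
    refine ⟨fun h n => h.mono (iInter_subset _ n), fun h => ?_⟩
    exact IsCompact.nonempty_iInter_of_sequence_nonempty_isCompact_isClosed _
      (fun n => inter_subset_inter_left F (hanti n x)) h ((hcpt 0 x).inter_right hF)
      fun n => (hcpt n x).isClosed.inter hF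
  simp only [iInter_hits_iff, ofPred_forall]
  exact .iInter fun n => hS n hF

lemma MeasurableHits.measurable_of_singleton [MeasurableSpace Y] [BorelSpace Y] {u : X → Y}
    (hu : MeasurableHits fun x => {u x}) : Measurable u :=
  measurable_of_isClosed fun F hF => by
    simpa only [singleton_inter_nonempty, ← preimage_ofPred_eq, ofPred_mem_eq] using hu hF

end Correspondence

section ClosedHits

variable {X Y : Type*} [TopologicalSpace X] [T2Space X] [CompactlyGeneratedSpace X]
  [TopologicalSpace Y]

lemma isClosed_setOf_inter_nonempty {S : X → Set Y} {p : Y → X} (hp : Continuous p)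
    (hpS : ∀ x, ∀ y ∈ S x, p y = x) (hcpt : ∀ K, IsCompact K → IsCompact (⋃ x ∈ K, S x))
    {F : Set Y} (hF : IsClosed F) : IsClosed {x | (S x ∩ F).Nonempty} := by
  refine (CompactlyGeneratedSpace.isClosed_iff_of_t2 _).2 fun K hK => ?_
  have hits_inter_eq : {x | (S x ∩ F).Nonempty} ∩ K = p '' ((⋃ x ∈ K, S x) ∩ F) := by
    ext x
    simp only [mem_inter_iff, mem_ofPred_eq, mem_image, mem_iUnion₂]
    constructor
    · rintro ⟨⟨y, hyS, hyF⟩, hxK⟩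
      exact ⟨y, ⟨⟨x, hxK, hyS⟩, hyF⟩, hpS x y hyS⟩
    · rintro ⟨y, ⟨⟨z, hzK, hyS⟩, hyF⟩, rfl⟩
      obtain rfl := hpS z y hyS
      exact ⟨⟨y, hyS, hyF⟩, hzK⟩
  rw [hits_inter_eq]
  exact (((hcpt K hK).inter_right hF).image hp).isClosed

end ClosedHits

namespace IPath

variable {X : Type*} [TopologicalSpace X]

/-- The time shift `θ_t u = u(t + ·)`. -/
def shift (t : ℝ≥0) (u : IPath X) : IPath X :=
  ⟨fun s => u (t + s), by fun_prop⟩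

lemma exists_eqOn_shift_eq (t : ℝ≥0) (u v : IPath X) (h : v 0 = u t) :
    ∃ w : IPath X, EqOn w u (Iic t) ∧ w.shift t = v := by
  refine ⟨⟨fun s => if s ≤ t then u s else v (s - t), ?_⟩, fun s hs => if_pos hs, ?_⟩
  · refine Continuous.if_le (by fun_prop) (by fun_prop) continuous_id continuous_const ?_
    rintro s rfl
    rw [tsub_self, h]
  · ext s
    rcases eq_or_ne s 0 with rfl | hs
    · simp [shift, h]
    · simp [shift, hs]

/-- A functional on paths for which the comparison of two paths with a common past up to time `t`
depends only on their futures after `t`. -/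
def IsTimeConsistent (J : IPath X → ℝ) : Prop :=
  ∀ ⦃t : ℝ≥0⦄ ⦃u w : IPath X⦄, EqOn u w (Iic t) → (J u ≤ J w ↔ J (u.shift t) ≤ J (w.shift t))

end IPath

/-- Conditions S1–S4 of the abstract semiflow selection theorem, for the set `S x` of
admissible paths starting at `x`. In `splice_mem` the path `w` is the splicing at time `t` of `u`
with the path `w.shift t` admissible at `u t`. -/
structure IsMultivaluedSemiflow {X : Type*} [TopologicalSpace X] [MeasurableSpace X]
    (S : X → Set (IPath X)) : Prop where
  nonempty : ∀ x, (S x).Nonempty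
  isCompact : ∀ x, IsCompact (S x)
  measurableHits : MeasurableHits S
  apply_zero : ∀ x, ∀ u ∈ S x, u 0 = x
  shift_mem : ∀ x, ∀ u ∈ S x, ∀ t, u.shift t ∈ S (u t)
  splice_mem : ∀ x, ∀ u ∈ S x, ∀ t, ∀ w : IPath X,
    EqOn w u (Iic t) → w.shift t ∈ S (u t) → w ∈ S x

namespace IsMultivaluedSemiflow

variable {X : Type*} [TopologicalSpace X] [MeasurableSpace X] {S : X → Set (IPath X)}

lemma maximizers (hS : IsMultivaluedSemiflow S) {J : IPath X → ℝ} (hJ : Continuous J)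
    (hJt : IPath.IsTimeConsistent J) : IsMultivaluedSemiflow (maximizers J S) where
  nonempty x := maximizers_nonempty hJ (hS.isCompact x) (hS.nonempty x)
  isCompact x := isCompact_maximizers hJ (hS.isCompact x)
  measurableHits := hS.measurableHits.maximizers hS.isCompact hJ
  apply_zero x u hu := hS.apply_zero x u hu.1
  shift_mem x u hu t := by
    refine ⟨hS.shift_mem x u hu.1 t, fun v hv => ?_⟩
    obtain ⟨w, hwu, rfl⟩ := IPath.exists_eqOn_shift_eq t u v (hS.apply_zero _ v hv)
    exact (hJt hwu).1 (hu.2 (hS.splice_mem x u hu.1 t w hwu hv))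
  splice_mem x u hu t w hwu hw := by
    refine ⟨hS.splice_mem x u hu.1 t w hwu hw.1, fun z hz => ?_⟩
    exact (hu.2 hz).trans ((hJt hwu.symm).2 (hw.2 (hS.shift_mem x u hu.1 t)))

lemma iteratedMaximizers (hS : IsMultivaluedSemiflow S) {J : ℕ → IPath X → ℝ}
    (hJ : ∀ n, Continuous (J n)) (hJt : ∀ n, IPath.IsTimeConsistent (J n)) (n : ℕ) :
    IsMultivaluedSemiflow (iteratedMaximizers J S n) := by
  induction n with
  | zero => exact hS
  | succ n ih => exact ih.maximizers (hJ n) (hJt n)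

lemma exists_measurable_selection_of_separating [T2Space X] (hS : IsMultivaluedSemiflow S)
    {J : ℕ → IPath X → ℝ} (hJ : ∀ n, Continuous (J n)) (hJt : ∀ n, IPath.IsTimeConsistent (J n))
    (hJsep : ∀ u v, (∀ n, J n u = J n v) → u = v) :
    ∃ u : X → IPath X, Measurable u ∧ (∀ x, u x ∈ S x) ∧
      ∀ x, ∀ t₁ t₂ : ℝ≥0, u (u x t₁) t₂ = u x (t₁ + t₂) := by
  have hstage := hS.iteratedMaximizers hJ hJt
  have limit_nonempty (x : X) : (⋂ n, _root_.iteratedMaximizers J S n x).Nonempty :=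
    IsCompact.nonempty_iInter_of_sequence_nonempty_isCompact_isClosed _
      (fun n => iteratedMaximizers_succ_subset J S n x) (fun n => (hstage n).nonempty x)
      ((hstage 0).isCompact x) fun n => ((hstage n).isCompact x).isClosed
  choose u hu using limit_nonempty
  have limit_eq (x : X) : ⋂ n, _root_.iteratedMaximizers J S n x = {u x} :=
    (subsingleton_iInter_iteratedMaximizers hJsep S x).eq_singleton_of_mem (hu x)
  have limit_measurableHits : MeasurableHits fun x => {u x} := by
    simpa only [limit_eq] using MeasurableHits.iInter (fun n => (hstage n).measurableHits)
      (fun n => (hstage n).isCompact) (iteratedMaximizers_succ_subset J S)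
  have shift_eq (x : X) (t : ℝ≥0) : (u x).shift t = u (u x t) := by
    rw [← mem_singleton_iff, ← limit_eq, mem_iInter]
    exact fun n => (hstage n).shift_mem x (u x) (mem_iInter.1 (hu x) n) t
  refine ⟨u, limit_measurableHits.measurable_of_singleton, fun x => mem_iInter.1 (hu x) 0, ?_⟩
  exact fun x t₁ t₂ => congrArg (· t₂) (shift_eq x t₁).symm

end IsMultivaluedSemiflow

section LaplaceTransform

open BoundedContinuousFunction

lemma integral_Ioc_zero_add {E : Type*} [NormedAddCommGroup E] [NormedSpace ℝ E] {g : ℝ → E}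
    {a b : ℝ} (ha : 0 ≤ a) (hb : 0 ≤ b) (hg : IntegrableOn g (Ioc 0 (a + b))) :
    ∫ s in Ioc 0 (a + b), g s = (∫ s in Ioc 0 a, g s) + ∫ s in Ioc 0 b, g (a + s) := by
  have hab : a ≤ a + b := le_add_of_nonneg_right hb
  have hg' : IntervalIntegrable g volume 0 (a + b) :=
    (intervalIntegrable_iff_integrableOn_Ioc_of_le (ha.trans hab)).2 hg
  rw [← intervalIntegral.integral_of_le ha, ← intervalIntegral.integral_of_le hb,
    ← intervalIntegral.integral_of_le (ha.trans hab), intervalIntegral.integral_comp_add_left,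
    add_zero, intervalIntegral.integral_add_adjacent_intervals]
  · exact hg'.mono_set (uIcc_subset_uIcc left_mem_uIcc (mem_uIcc_of_le ha hab))
  · exact hg'.mono_set (uIcc_subset_uIcc (mem_uIcc_of_le ha hab) right_mem_uIcc)

lemma integral_Ioi_zero_eq_add {E : Type*} [NormedAddCommGroup E] [NormedSpace ℝ E] {g : ℝ → E}
    {a : ℝ} (ha : 0 ≤ a) (hg : IntegrableOn g (Ioi 0)) :
    ∫ s in Ioi 0, g s = (∫ s in Ioc 0 a, g s) + ∫ s in Ioi 0, g (a + s) := by
  have tail_eq : ∫ s in Ioi 0, g (a + s) = ∫ s in Ioi a, g s := by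
    simpa using (measurePreserving_add_left volume a).setIntegral_preimage_emb
      (measurableEmbedding_addLeft a) g (Ioi a)
  rw [tail_eq, ← intervalIntegral.integral_of_le ha,
    intervalIntegral.integral_interval_add_Ioi hg (hg.mono_set (Ioi_subset_Ioi ha))]

lemma ae_eq_zero_of_integral_pow_mul_eq_zero {s : Set ℝ} [CompactSpace s] {μ : Measure s}
    [IsFiniteMeasure μ] {h : C(s, ℝ)} (hmoment : ∀ n : ℕ, ∫ x, (x : ℝ) ^ n * h x ∂μ = 0) :
    h =ᵐ[μ] 0 := by
  let pairing : C(s, ℝ) →L[ℝ] ℝ :=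
    (innerSL ℝ (ContinuousMap.toLp 2 μ ℝ h)).comp (ContinuousMap.toLp 2 μ ℝ)
  have pairing_apply (g : C(s, ℝ)) : pairing g = ∫ x, g x * h x ∂μ :=
    (ContinuousMap.inner_toLp (𝕜 := ℝ) μ h g).trans (by simp only [conj_trivial])
  have pairing_polynomial (p : Polynomial ℝ) : pairing (p.toContinuousMapOn s) = 0 := by
    induction p using Polynomial.induction_on' with
    | add p q hp hq =>
      rw [← Polynomial.toContinuousMapOnAlgHom_apply] at hp hq ⊢
      rw [map_add, map_add, hp, hq, add_zero]
    | monomial n c =>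
      simp only [pairing_apply, Polynomial.toContinuousMapOn_apply,
        Polynomial.toContinuousMap_apply, Polynomial.eval_monomial, mul_assoc,
        integral_const_mul, hmoment, mul_zero]
  have polynomials_dense : Dense (polynomialFunctions s : Set C(s, ℝ)) := by
    rw [dense_iff_closure_eq, ← Subalgebra.topologicalClosure_coe,
      polynomialFunctions.topologicalClosure, Algebra.coe_top]
  have pairing_eq_zero : ⇑pairing = fun _ => 0 := by
    refine pairing.continuous.ext_on polynomials_dense continuous_const ?_
    rintro _ ⟨p, -, rfl⟩
    exact pairing_polynomial p
  have toLp_eq_zero : ContinuousMap.toLp 2 μ ℝ h = 0 :=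
    inner_self_eq_zero.1 (congrFun pairing_eq_zero h)
  refine (ContinuousMap.coeFn_toLp (p := 2) (𝕜 := ℝ) μ h).symm.trans ?_
  rw [toLp_eq_zero]
  exact Lp.coeFn_zero ℝ 2 μ

lemma eqOn_zero_of_integral_pow_mul_eq_zero {a b : ℝ} (hab : a ≠ b) {h : ℝ → ℝ}
    (hh : ContinuousOn h (Icc a b)) (hmoment : ∀ n : ℕ, ∫ x in Icc a b, x ^ n * h x = 0) :
    EqOn h 0 (Icc a b) := by
  refine Measure.eqOn_Icc_of_ae_eq volume hab ?_ hh continuousOn_const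
  refine (ae_restrict_iff_subtype measurableSet_Icc).2 ?_
  have : IsFiniteMeasure (Measure.comap ((↑) : Icc a b → ℝ) volume) :=
    ⟨by
      rw [(MeasurableEmbedding.subtype_coe measurableSet_Icc).comap_apply, image_univ,
        Subtype.range_coe]
      exact measure_Icc_lt_top⟩
  refine ae_eq_zero_of_integral_pow_mul_eq_zero (h := ⟨(Icc a b).domRestrict h, hh.domRestrict⟩) ?_
  intro n
  exact (integral_subtype_comap measurableSet_Icc fun x => x ^ n * h x).trans (hmoment n)

lemma integral_Ioi_exp_neg_mul_comp_exp_neg (F : ℝ → ℝ) :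
    ∫ s in Ioi 0, Real.exp (-s) * F (Real.exp (-s)) = ∫ x in Icc 0 1, F x := by
  have image_eq : (fun s => Real.exp (-s)) '' Ioi 0 = Ioo 0 1 := by
    ext x
    constructor
    · rintro ⟨s, hs, rfl⟩
      exact ⟨Real.exp_pos _, Real.exp_lt_one_iff.2 (neg_lt_zero.2 hs)⟩
    · rintro ⟨hx0, hx1⟩
      exact ⟨-Real.log x, neg_pos.2 (Real.log_neg hx0 hx1), by simp [Real.exp_log hx0]⟩
  have change_of_variables := integral_image_eq_integral_abs_deriv_smul (s := Ioi (0 : ℝ))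
    measurableSet_Ioi (fun s _ => (hasDerivAt_neg s).exp.hasDerivWithinAt)
    ((Real.exp_injective.comp neg_injective).injOn) F
  rw [integral_Icc_eq_integral_Ioo, ← image_eq]
  simpa using change_of_variables.symm

/-- The Laplace transform `∫₀^∞ e^{-rs} g(s) ds`, which converges for `0 < r`. -/
def laplaceTransform (g : ℝ≥0 →ᵇ ℝ) (r : ℝ) : ℝ :=
  ∫ s in Ioi (0 : ℝ), Real.exp (-r * s) * g s.toNNReal

lemma integrableOn_exp_neg_mul {r : ℝ} (hr : 0 < r) (g : ℝ≥0 →ᵇ ℝ) :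
    IntegrableOn (fun s => Real.exp (-r * s) * g s.toNNReal) (Ioi 0) :=
  (exp_neg_integrableOn_Ioi 0 hr).mul_bdd (c := ‖g‖)
    (g.continuous.comp continuous_real_toNNReal).aestronglyMeasurable
    (.of_forall fun _ => g.norm_coe_le_norm _)

lemma laplaceTransform_sub {r : ℝ} (hr : 0 < r) (g h : ℝ≥0 →ᵇ ℝ) :
    laplaceTransform (g - h) r = laplaceTransform g r - laplaceTransform h r := by
  simp only [laplaceTransform, BoundedContinuousFunction.sub_apply, mul_sub]
  exact integral_sub (integrableOn_exp_neg_mul hr g) (integrableOn_exp_neg_mul hr h)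

lemma laplaceTransform_eq_add {r : ℝ} (hr : 0 < r) (g : ℝ≥0 →ᵇ ℝ) (t : ℝ≥0) :
    laplaceTransform g r = (∫ s in Ioc (0 : ℝ) t, Real.exp (-r * s) * g s.toNNReal) +
      Real.exp (-r * t) * laplaceTransform (g.compContinuous ⟨(t + ·), by fun_prop⟩) r := by
  rw [laplaceTransform, integral_Ioi_zero_eq_add t.coe_nonneg (integrableOn_exp_neg_mul hr g),
    laplaceTransform, ← integral_const_mul]
  congr 1
  refine setIntegral_congr_fun measurableSet_Ioi fun s hs => ?_
  simp only [compContinuous_apply, ContinuousMap.coe_mk,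
    Real.toNNReal_add t.coe_nonneg (le_of_lt hs), Real.toNNReal_coe, mul_add, Real.exp_add,
    mul_assoc]

lemma continuous_mul_comp_neg_log (g : ℝ≥0 →ᵇ ℝ) :
    Continuous fun x : ℝ => x * g (-Real.log x).toNNReal := by
  refine continuous_iff_continuousAt.2 fun x => ?_
  rcases eq_or_ne x 0 with rfl | hx
  · have bound_tendsto : Filter.Tendsto (fun x : ℝ => |x| * ‖g‖) (nhds 0) (nhds 0) := by
      simpa using (continuous_abs.tendsto (0 : ℝ)).mul_const ‖g‖
    rw [ContinuousAt, zero_mul]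
    refine squeeze_zero_norm (fun x => ?_) bound_tendsto
    rw [norm_mul, Real.norm_eq_abs]
    exact mul_le_mul_of_nonneg_left (g.norm_coe_le_norm _) (abs_nonneg x)
  · exact continuousAt_id.mul (g.continuous.continuousAt.comp
      (continuous_real_toNNReal.continuousAt.comp (Real.continuousAt_log hx).neg))

/- Under `x = e^{-s}` the Laplace transform at `n + 2` becomes the `n`-th moment on `[0, 1]` of
`x ↦ x g(-log x)`; the factor `x` makes this function continuous at `0`. -/
lemma eq_zero_of_laplaceTransform_nat_eq_zero {g : ℝ≥0 →ᵇ ℝ}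
    (hg : ∀ n : ℕ, laplaceTransform g (n + 1) = 0) : g = 0 := by
  have moment_eq_zero (n : ℕ) :
      ∫ x in Icc (0 : ℝ) 1, x ^ n * (x * g (-Real.log x).toNNReal) = 0 := by
    rw [← integral_Ioi_exp_neg_mul_comp_exp_neg]
    refine Eq.trans ?_ (hg (n + 1))
    refine setIntegral_congr_fun measurableSet_Ioi fun s _ => ?_
    have exp_eq : Real.exp (-(((n + 1 : ℕ) : ℝ) + 1) * s) =
        Real.exp (-s) * (Real.exp (-s) ^ n * Real.exp (-s)) := by
      rw [← Real.exp_nat_mul, ← Real.exp_add, ← Real.exp_add]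
      push_cast
      ring_nf
    simp only [Real.log_exp, neg_neg, exp_eq, mul_assoc]
  have eqOn_zero : EqOn (fun x : ℝ => x * g (-Real.log x).toNNReal) 0 (Icc 0 1) :=
    eqOn_zero_of_integral_pow_mul_eq_zero zero_ne_one
      (continuous_mul_comp_neg_log g).continuousOn moment_eq_zero
  ext s
  have exp_mem : Real.exp (-s) ∈ Icc (0 : ℝ) 1 :=
    ⟨(Real.exp_pos _).le, Real.exp_le_one_iff.2 (neg_nonpos.2 s.coe_nonneg)⟩
  simpa using eqOn_zero exp_mem

lemma eq_of_laplaceTransform_nat_eq {g h : ℝ≥0 →ᵇ ℝ}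
    (hgh : ∀ n : ℕ, laplaceTransform g (n + 1) = laplaceTransform h (n + 1)) : g = h := by
  refine sub_eq_zero.1 (eq_zero_of_laplaceTransform_nat_eq_zero fun n => ?_)
  rw [laplaceTransform_sub n.cast_add_one_pos, hgh n, sub_self]

end LaplaceTransform

section DiscountedPayoff

open BoundedContinuousFunction

variable {X : Type*} [TopologicalSpace X]

/-- The payoff `∫₀^∞ e^{-rs} φ(u(s)) ds` of a path `u`, with discount rate `r` and running
reward `φ`. -/
def discountedPayoff (r : ℝ) (φ : X →ᵇ ℝ) (u : IPath X) : ℝ :=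
  laplaceTransform (φ.compContinuous u) r

lemma continuous_discountedPayoff [SecondCountableTopology X] {r : ℝ} (hr : 0 < r) (φ : X →ᵇ ℝ) :
    Continuous (discountedPayoff r φ) := by
  refine continuous_of_dominated (bound := fun s => Real.exp (-r * s) * ‖φ‖)
    (fun u => (integrableOn_exp_neg_mul hr (φ.compContinuous u)).aestronglyMeasurable)
    (fun u => .of_forall fun s => ?_) ((exp_neg_integrableOn_Ioi 0 hr).mul_const _)
    (.of_forall fun s => ?_)
  · rw [norm_mul, Real.norm_eq_abs, Real.abs_exp]
    exact mul_le_mul_of_nonneg_left (φ.norm_coe_le_norm _) (Real.exp_pos _).le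
  · exact continuous_const.mul (φ.continuous.comp (continuous_eval_const _))

lemma isTimeConsistent_discountedPayoff {r : ℝ} (hr : 0 < r) (φ : X →ᵇ ℝ) :
    IPath.IsTimeConsistent (discountedPayoff r φ) := by
  intro t u w huw
  have payoff_eq_add (v : IPath X) : discountedPayoff r φ v =
      (∫ s in Ioc (0 : ℝ) t, Real.exp (-r * s) * φ (v s.toNNReal)) +
        Real.exp (-r * t) * discountedPayoff r φ (v.shift t) :=
    laplaceTransform_eq_add hr (φ.compContinuous v) t
  have past_eq : ∫ s in Ioc (0 : ℝ) t, Real.exp (-r * s) * φ (u s.toNNReal) =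
      ∫ s in Ioc (0 : ℝ) t, Real.exp (-r * s) * φ (w s.toNNReal) :=
    setIntegral_congr_fun measurableSet_Ioc fun s hs => by
      rw [huw (Real.toNNReal_le_iff_le_coe.2 hs.2)]
  rw [payoff_eq_add u, payoff_eq_add w, past_eq, add_le_add_iff_left,
    mul_le_mul_iff_right₀ (Real.exp_pos _)]

lemma eq_of_discountedPayoff_nat_eq {ι : Type*} {φ : ι → X →ᵇ ℝ}
    (hφ : ∀ x y, (∀ i, φ i x = φ i y) → x = y) {u v : IPath X}
    (huv : ∀ (n : ℕ) i, discountedPayoff (n + 1) (φ i) u = discountedPayoff (n + 1) (φ i) v) :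
    u = v := by
  ext t
  refine hφ _ _ fun i => ?_
  exact DFunLike.congr_fun (eq_of_laplaceTransform_nat_eq fun n => huv n i) t

lemma exists_seq_boundedContinuous_separating_s17 (X : Type*) [TopologicalSpace X] [T3Space X]
    [SecondCountableTopology X] :
    ∃ φ : ℕ → X →ᵇ ℝ, ∀ x y, (∀ n, φ n x = φ n y) → x = y := by
  obtain ⟨e, he⟩ := TopologicalSpace.exists_embedding_l_infty X
  have continuous_coord (n : ℕ) : Continuous fun x => Real.arctan (e x n) :=
    Real.continuous_arctan.comp ((continuous_eval_const n).comp he.continuous)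
  have norm_arctan_le (a : ℝ) : ‖Real.arctan a‖ ≤ Real.pi / 2 :=
    abs_le.2 ⟨(Real.neg_pi_div_two_lt_arctan a).le, (Real.arctan_lt_pi_div_two a).le⟩
  refine ⟨fun n => ofNormedAddCommGroup _ (continuous_coord n) _ fun x => norm_arctan_le _, ?_⟩
  exact fun x y hxy => he.injective (ext fun n => Real.arctan_injective (hxy n))

lemma exists_seq_timeConsistent_separating (X : Type*) [TopologicalSpace X] [T3Space X]
    [SecondCountableTopology X] :
    ∃ J : ℕ → IPath X → ℝ, (∀ n, Continuous (J n)) ∧ (∀ n, IPath.IsTimeConsistent (J n)) ∧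
      ∀ u v, (∀ n, J n u = J n v) → u = v := by
  obtain ⟨φ, hφ⟩ := exists_seq_boundedContinuous_separating_s17 X
  refine ⟨fun k => discountedPayoff (k.unpair.1 + 1) (φ k.unpair.2),
    fun k => continuous_discountedPayoff (Nat.cast_add_one_pos _) _,
    fun k => isTimeConsistent_discountedPayoff (Nat.cast_add_one_pos _) _, fun u v huv => ?_⟩
  exact eq_of_discountedPayoff_nat_eq hφ fun n i => by
    simpa only [Nat.unpair_pair] using huv (Nat.pair n i)

end DiscountedPayoff

theorem IsMultivaluedSemiflow.exists_measurable_selection {X : Type*} [TopologicalSpace X]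
    [T3Space X] [SecondCountableTopology X] [MeasurableSpace X] {S : X → Set (IPath X)}
    (hS : IsMultivaluedSemiflow S) :
    ∃ u : X → IPath X, Measurable u ∧ (∀ x, u x ∈ S x) ∧
      ∀ x, ∀ t₁ t₂ : ℝ≥0, u (u x t₁) t₂ = u x (t₁ + t₂) := by
  obtain ⟨J, hJ, hJt, hJsep⟩ := exists_seq_timeConsistent_separating X
  exact hS.exists_measurable_selection_of_separating hJ hJt hJsep

section IntegralSolutions

variable {E : Type*} [NormedAddCommGroup E] [NormedSpace ℝ E]

/-- The integral funnel of `du/dt = f(u)` in a normed space; for `E = ℝ^d` it is `sol f x`. -/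
def integralSolutions (f : E → E) (x : E) : Set (IPath E) :=
  {u | ∀ t : ℝ≥0, u t = x + ∫ s in Ioc (0 : ℝ) (t : ℝ), f (u (Real.toNNReal s))}

variable {f : E → E} {x : E} {u w : IPath E} {t : ℝ≥0}

lemma apply_zero_of_mem_integralSolutions (hu : u ∈ integralSolutions f x) : u 0 = x := by
  simpa using hu 0

lemma integral_Ioc_comp_path_add (hf : Continuous f) (u : IPath E) (t s : ℝ≥0) :
    ∫ r in Ioc (0 : ℝ) (t + s : ℝ≥0), f (u r.toNNReal) =
      (∫ r in Ioc (0 : ℝ) t, f (u r.toNNReal)) +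
        ∫ r in Ioc (0 : ℝ) s, f (u.shift t r.toNNReal) := by
  have hfu : Continuous fun r : ℝ => f (u r.toNNReal) :=
    hf.comp (u.continuous.comp continuous_real_toNNReal)
  rw [NNReal.coe_add, integral_Ioc_zero_add t.coe_nonneg s.coe_nonneg hfu.integrableOn_Ioc]
  congr 1
  refine setIntegral_congr_fun measurableSet_Ioc fun r hr => ?_
  simp only [IPath.shift, ContinuousMap.coe_mk, Real.toNNReal_add t.coe_nonneg hr.1.le,
    Real.toNNReal_coe]

lemma shift_mem_integralSolutions (hf : Continuous f) (hu : u ∈ integralSolutions f x)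
    (t : ℝ≥0) : u.shift t ∈ integralSolutions f (u t) := fun s =>
  calc u (t + s) = x + ∫ r in Ioc (0 : ℝ) (t + s : ℝ≥0), f (u r.toNNReal) := hu (t + s)
    _ = u t + ∫ r in Ioc (0 : ℝ) s, f (u.shift t r.toNNReal) := by
      rw [integral_Ioc_comp_path_add hf, ← add_assoc, ← hu t]

lemma splice_mem_integralSolutions (hf : Continuous f) (hu : u ∈ integralSolutions f x)
    (hwu : EqOn w u (Iic t)) (hw : w.shift t ∈ integralSolutions f (u t)) :
    w ∈ integralSolutions f x := by
  have solves_past (s : ℝ≥0) (hs : s ≤ t) :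
      w s = x + ∫ r in Ioc (0 : ℝ) s, f (w r.toNNReal) := by
    rw [hwu hs, hu s]
    congr 1
    refine setIntegral_congr_fun measurableSet_Ioc fun r hr => ?_
    rw [hwu ((Real.toNNReal_le_iff_le_coe.2 hr.2).trans hs)]
  intro s
  rcases le_total s t with hst | hts
  · exact solves_past s hst
  · obtain ⟨r, rfl⟩ := exists_add_of_le hts
    calc w (t + r) = w t + ∫ q in Ioc (0 : ℝ) r, f (w.shift t q.toNNReal) := by
          rw [hwu (mem_Iic.2 le_rfl)]
          exact hw r
      _ = x + ∫ q in Ioc (0 : ℝ) (t + r : ℝ≥0), f (w q.toNNReal) := by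
          rw [integral_Ioc_comp_path_add hf, ← add_assoc, ← solves_past t le_rfl]

lemma isMultivaluedSemiflow_integralSolutions [MeasurableSpace E] [OpensMeasurableSpace E]
    (hf : Continuous f) (hne : ∀ x, (integralSolutions f x).Nonempty)
    (hcpt : ∀ K : Set E, IsCompact K → IsCompact (⋃ x ∈ K, integralSolutions f x)) :
    IsMultivaluedSemiflow (integralSolutions f) where
  nonempty := hne
  isCompact x := by simpa using hcpt {x} isCompact_singleton
  measurableHits _ hF := (isClosed_setOf_inter_nonempty (continuous_eval_const 0)
    (fun _ _ => apply_zero_of_mem_integralSolutions) hcpt hF).measurableSet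
  apply_zero _ _ := apply_zero_of_mem_integralSolutions
  shift_mem _ _ := shift_mem_integralSolutions hf
  splice_mem _ _ hu _ _ := splice_mem_integralSolutions hf hu

end IntegralSolutions

theorem ode_semiflow_selection_general {E : Type*} [NormedAddCommGroup E] [NormedSpace ℝ E]
    [CompleteSpace E] [SecondCountableTopology E] [MeasurableSpace E] [OpensMeasurableSpace E]
    (f : E → E) (hf : Continuous f) (hne : ∀ x, (integralSolutions f x).Nonempty)
    (hcpt : ∀ K : Set E, IsCompact K → IsCompact (⋃ x ∈ K, integralSolutions f x)) :
    ∃ u : E → IPath E, Measurable u ∧ (∀ x, u x ∈ integralSolutions f x) ∧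
      ∀ x, ∀ t₁ t₂ : ℝ≥0, u (u x t₁) t₂ = u x (t₁ + t₂) :=
  (isMultivaluedSemiflow_integralSolutions hf hne hcpt).exists_measurable_selection

/-- **Semiflow selection for ODEs.**  If `f : ℝ^d → ℝ^d` is continuous, every initial
condition has at least one global solution, and integral funnels over compacta are
compact (Aronszajn), then there is a Borel measurable selection of solutions
`𝔲 : ℝ^d → Ω` with `𝔲(·, x) ∈ S(x)` and the semigroup property
`𝔲(t₂, 𝔲(t₁, x)) = 𝔲(t₁ + t₂, x)`. -/
theorem ode_semiflow_selection
    {d : ℕ} (f : EuclideanSpace ℝ (Fin d) → EuclideanSpace ℝ (Fin d))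
    (hf : Continuous f)
    (hne : ∀ x, (sol f x).Nonempty)
    (hcpt : ∀ K : Set (EuclideanSpace ℝ (Fin d)), IsCompact K →
      IsCompact (⋃ x ∈ K, sol f x)) :
    ∃ u : EuclideanSpace ℝ (Fin d) → IPath (EuclideanSpace ℝ (Fin d)),
      Measurable u ∧ (∀ x, u x ∈ sol f x) ∧
      ∀ x, ∀ t₁ t₂ : ℝ≥0, u (u x t₁) t₂ = u x (t₁ + t₂) :=
  ode_semiflow_selection_general f hf hne hcpt
end
end

section
/- Let F be a set-valued map from ℝ^d to the nonempty compact convex subsets of ℝ^d which is upper semicontinuous and satisfies the Nagumo growth condition: there exists a nondecreasing continuous ψ : [0,∞) → (0,∞) with ∫^∞ dr/ψ(r) = ∞ such that |v| ≤ ψ(|u|) for all u ∈ ℝ^d and all v ∈ F(u). For x ∈ ℝ^d let S(x) be the set of locally absolutely continuous paths u : [0,∞) → ℝ^d with u(0) = x and u'(t) ∈ F(u(t)) for almost every t ≥ 0. Then there exists a Borel measurable map 𝔲 : ℝ^d → C([0,∞) → ℝ^d) (with the topology of uniform convergence on compacts) such that 𝔲(·, x) ∈ S(x) for every x and 𝔲(t₂,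 𝔲(t₁, x)) = 𝔲(t₁ + t₂, x) for all t₁, t₂ ≥ 0 and all x ∈ ℝ^d. -/
open MeasureTheory Set
open scoped NNReal

noncomputable section

/-- Membership of a continuous path `u` in the solution funnel `S(x)` of the
differential inclusion `u' ∈ F(u)`, `u(0) = x`: `u` is locally absolutely continuous
with `u(t) = x + ∫₀^t g(s) ds` for a locally integrable selection `g(s) ∈ F(u(s))`
a.e. -/
def InclusionSol {d : ℕ} (F : EuclideanSpace ℝ (Fin d) → Set (EuclideanSpace ℝ (Fin d)))
    (x : EuclideanSpace ℝ (Fin d)) (u : IPath (EuclideanSpace ℝ (Fin d))) : Prop :=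
  u 0 = x ∧ ∃ g : ℝ → EuclideanSpace ℝ (Fin d),
    (∀ T : ℝ, 0 ≤ T → IntegrableOn g (Ioc (0 : ℝ) T) volume) ∧
    (∀ t : ℝ≥0, u t = x + ∫ s in Ioc (0 : ℝ) (t : ℝ), g s) ∧
    (∀ᵐ s ∂(volume.restrict (Ioi (0 : ℝ))), g s ∈ F (u (Real.toNNReal s)))

/-!
Say that a path solves the inclusion if its mean velocity over every time interval lies in the
closed convex hull of the velocities that `F` allows along the path on that interval. This condition
involves no derivative, survives locally uniform limits, time shifts and concatenation, and gives
`u' ∈ F u` wherever `u` is differentiable. With the Osgood bound and Arzelà–Ascoli, the solution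
sets are compact and depend measurably on the starting point; Euler polygons show that they are
nonempty.

To select one solution from each set, maximize the discounted integrals
`∫ exp (-(n + 1) s) φ (u s) ds` one after another, for `n : ℕ` and countably many bounded continuous
`φ` separating the points of the space. By the dynamic programming principle the maximizers are
again stable under shifts and concatenation. By uniqueness for the Laplace transform these integrals
determine the path, so exactly one path survives all the maximizations; since the shift of a
surviving path survives too, the selection is a semiflow.
-/

open Filter Topology Polynomial
open scoped BoundedContinuousFunction

namespace SemiflowSelection

section Paths

variable {X : Type*} [TopologicalSpace X]

/-- The time shift `r ↦ u (t + r)` of a path. -/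
def pathShift (t : ℝ≥0) (u : IPath X) : IPath X :=
  u.comp (ContinuousMap.addLeft t)

@[simp]
lemma pathShift_apply (t r : ℝ≥0) (u : IPath X) : pathShift t u r = u (t + r) := rfl

/-- The concatenation of paths that follows `u` up to time `t` and `v` from then on. -/
def pathSplice (t : ℝ≥0) (u v : IPath X) (h : v 0 = u t) : IPath X where
  toFun r := if r ≤ t then u r else v (r - t)
  continuous_toFun := Continuous.if_le (by fun_prop) (by fun_prop) continuous_id continuous_const
    fun r hr => by rw [hr, tsub_self, h]

variable {t r : ℝ≥0} {u v : IPath X}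

lemma pathSplice_of_le (h : v 0 = u t) (hr : r ≤ t) : pathSplice t u v h r = u r :=
  if_pos hr

lemma pathSplice_add (h : v 0 = u t) (r : ℝ≥0) : pathSplice t u v h (t + r) = v r := by
  rcases eq_or_ne r 0 with rfl | hr
  · rw [add_zero, pathSplice_of_le h le_rfl, h]
  · have hlt : ¬ t + r ≤ t := by simpa using hr
    exact (if_neg hlt).trans (by rw [add_tsub_cancel_left])

lemma pathShift_pathSplice (h : v 0 = u t) : pathShift t (pathSplice t u v h) = v :=
  ContinuousMap.ext (pathSplice_add h)

end Paths

section Argmax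

variable {Y : Type*}

/-- The set of maximizers of `ζ` on `A`. -/
def argmaxOn (ζ : Y → ℝ) (A : Set Y) : Set Y :=
  {u ∈ A | IsMaxOn ζ A u}

/-- Successive maximization of `ζ 0`, `ζ 1`, …, each on the set of maximizers of the previous
one, starting from `A`. -/
def iterArgmax (ζ : ℕ → Y → ℝ) (A : Set Y) : ℕ → Set Y
  | 0 => A
  | n + 1 => argmaxOn (ζ n) (iterArgmax ζ A n)

lemma eq_of_forall_mem_iterArgmax {ζ : ℕ → Y → ℝ} {A : Set Y} {u v : Y}
    (hsep : (∀ n, ζ n u = ζ n v) → u = v) (hu : ∀ n, u ∈ iterArgmax ζ A n)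
    (hv : ∀ n, v ∈ iterArgmax ζ A n) : u = v :=
  hsep fun n => le_antisymm ((hv (n + 1)).2 (hu n)) ((hu (n + 1)).2 (hv n))

variable [TopologicalSpace Y]

lemma argmaxOn_nonempty {ζ : Y → ℝ} {A : Set Y} (hζ : Continuous ζ) (hA : IsCompact A)
    (hne : A.Nonempty) : (argmaxOn ζ A).Nonempty :=
  hA.exists_isMaxOn hne hζ.continuousOn

lemma isCompact_argmaxOn {ζ : Y → ℝ} {A : Set Y} (hζ : Continuous ζ) (hA : IsCompact A) :
    IsCompact (argmaxOn ζ A) := by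
  have hinter : argmaxOn ζ A = A ∩ ⋂ v ∈ A, {u | ζ v ≤ ζ u} := by
    ext u
    simp [argmaxOn, isMaxOn_iff]
  rw [hinter]
  exact hA.inter_right (isClosed_biInter fun v _ => isClosed_le continuous_const hζ)

lemma isCompact_iterArgmax {ζ : ℕ → Y → ℝ} (hζ : ∀ n, Continuous (ζ n)) {A : Set Y}
    (hA : IsCompact A) : ∀ n, IsCompact (iterArgmax ζ A n)
  | 0 => hA
  | n + 1 => isCompact_argmaxOn (hζ n) (isCompact_iterArgmax hζ hA n)

lemma exists_mem_forall_mem_iterArgmax [T2Space Y] {ζ : ℕ → Y → ℝ} (hζ : ∀ n, Continuous (ζ n))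
    {A C : Set Y} (hA : IsCompact A) (hC : IsClosed C)
    (hne : ∀ n, (iterArgmax ζ A n ∩ C).Nonempty) : ∃ u ∈ C, ∀ n, u ∈ iterArgmax ζ A n := by
  obtain ⟨u, hu⟩ := IsCompact.nonempty_iInter_of_sequence_nonempty_isCompact_isClosed
    (fun n => iterArgmax ζ A n ∩ C) (fun _ => inter_subset_inter_left _ (sep_subset _ _)) hne
    (hA.inter_right hC) (fun n => (isCompact_iterArgmax hζ hA n).isClosed.inter hC)
  rw [mem_iInter] at hu
  exact ⟨u, (hu 0).2, fun n => (hu n).1⟩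

-- The supremum of `ζ` over `A ∩ C` equals the one over `A` iff no rational separates them.
lemma argmaxOn_inter_nonempty_iff {ζ : Y → ℝ} (hζ : Continuous ζ) {A C : Set Y}
    (hA : IsCompact A) (hC : IsClosed C) :
    (argmaxOn ζ A ∩ C).Nonempty ↔ (A ∩ C).Nonempty ∧
      ∀ q : ℚ, (A ∩ {u | q ≤ ζ u}).Nonempty → (A ∩ (C ∩ {u | q ≤ ζ u})).Nonempty := by
  constructor
  · rintro ⟨u, ⟨huA, hmax⟩, huC⟩
    exact ⟨⟨u, huA, huC⟩, fun q ⟨v, hvA, hqv⟩ =>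
      ⟨u, huA, huC, le_trans (α := ℝ) hqv (isMaxOn_iff.1 hmax v hvA)⟩⟩
  · rintro ⟨hne, hq⟩
    obtain ⟨u, ⟨huA, huC⟩, hmax⟩ := (hA.inter_right hC).exists_isMaxOn hne hζ.continuousOn
    refine ⟨u, ⟨huA, isMaxOn_iff.2 fun v hv => ?_⟩, huC⟩
    by_contra! hlt
    obtain ⟨q, huq, hqv⟩ := exists_rat_btwn hlt
    obtain ⟨w, hwA, hwC, hqw⟩ := hq q ⟨v, hv, hqv.le⟩
    exact (huq.trans_le hqw).not_ge (isMaxOn_iff.1 hmax w ⟨hwA, hwC⟩)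

lemma measurableSet_argmaxOn_inter_nonempty {α : Type*} [MeasurableSpace α] {S : α → Set Y}
    (hS : ∀ x, IsCompact (S x)) (hmeas : ∀ C, IsClosed C → MeasurableSet {x | (S x ∩ C).Nonempty})
    {ζ : Y → ℝ} (hζ : Continuous ζ) {C : Set Y} (hC : IsClosed C) :
    MeasurableSet {x | (argmaxOn ζ (S x) ∩ C).Nonempty} := by
  have hsuper (q : ℚ) : IsClosed {u | (q : ℝ) ≤ ζ u} := isClosed_le continuous_const hζ
  simp only [argmaxOn_inter_nonempty_iff hζ (hS _) hC, imp_iff_not_or, ofPred_and,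
    ofPred_forall, ofPred_or]
  exact (hmeas C hC).inter <| MeasurableSet.iInter fun q =>
    (hmeas _ (hsuper q)).compl.union (hmeas _ (hC.inter (hsuper q)))

end Argmax

section Selection

variable {X : Type*} [TopologicalSpace X]

/-- Functionals obeying the dynamic programming principle: for every `t` there is a discount factor
`c > 0` such that `ζ w` is `c` times the value of the tail of `w` after time `t`, plus a term
depending only on `w` up to time `t`. -/
def IsDiscounted (ζ : IPath X → ℝ) : Prop :=
  ∀ t : ℝ≥0, ∃ c > 0, ∀ w w' : IPath X, (∀ r ≤ t, w r = w' r) →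
    ζ w - c * ζ (pathShift t w) = ζ w' - c * ζ (pathShift t w')

lemma IsDiscounted.exists_pathSplice_sub_eq {ζ : IPath X → ℝ} (hζ : IsDiscounted ζ) (t : ℝ≥0) :
    ∃ c > 0, ∀ (u v : IPath X) (h : v 0 = u t),
      ζ (pathSplice t u v h) - ζ u = c * (ζ v - ζ (pathShift t u)) := by
  obtain ⟨c, hc, heq⟩ := hζ t
  refine ⟨c, hc, fun u v h => ?_⟩
  have hsplice := heq (pathSplice t u v h) u fun r hr => pathSplice_of_le h hr
  rw [pathShift_pathSplice h] at hsplice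
  linarith

variable [MeasurableSpace X]

/-- A family of sets `S x` of paths issued from `x`, playing the role of the solution sets of an
evolution problem without uniqueness: nonempty, compact, measurable in `x`, and stable under time
shifts and concatenation. Measurability is stated as that of the hitting sets of closed sets. -/
structure IsSemiflowFunnel (S : X → Set (IPath X)) : Prop where
  nonempty : ∀ x, (S x).Nonempty
  isCompact : ∀ x, IsCompact (S x)
  apply_zero : ∀ {x u}, u ∈ S x → u 0 = x
  measurableSet_inter_nonempty : ∀ C, IsClosed C → MeasurableSet {x | (S x ∩ C).Nonempty}
  pathShift_mem : ∀ {x u}, u ∈ S x → ∀ t, pathShift t u ∈ S (u t)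
  pathSplice_mem : ∀ {x t u v}, u ∈ S x → v ∈ S (u t) → ∀ h, pathSplice t u v h ∈ S x

namespace IsSemiflowFunnel

variable {S : X → Set (IPath X)}

lemma argmaxOn (hS : IsSemiflowFunnel S) {ζ : IPath X → ℝ} (hζ : Continuous ζ)
    (hdisc : IsDiscounted ζ) : IsSemiflowFunnel fun x => argmaxOn ζ (S x) where
  nonempty x := argmaxOn_nonempty hζ (hS.isCompact x) (hS.nonempty x)
  isCompact x := isCompact_argmaxOn hζ (hS.isCompact x)
  apply_zero hu := hS.apply_zero hu.1
  measurableSet_inter_nonempty _ hC :=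
    measurableSet_argmaxOn_inter_nonempty hS.isCompact hS.measurableSet_inter_nonempty hζ hC
  pathShift_mem {x u} hu t := by
    refine ⟨hS.pathShift_mem hu.1 t, fun v hv => ?_⟩
    obtain ⟨c, hc, hsplice⟩ := hdisc.exists_pathSplice_sub_eq t
    have hle : ζ (pathSplice t u v (hS.apply_zero hv)) ≤ ζ u := hu.2 (hS.pathSplice_mem hu.1 hv _)
    have hmul : c * (ζ v - ζ (pathShift t u)) ≤ 0 := by
      rw [← hsplice u v (hS.apply_zero hv)]
      linarith
    exact sub_nonpos.1 (nonpos_of_mul_nonpos_right hmul hc)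
  pathSplice_mem {x t u v} hu hv h := by
    refine ⟨hS.pathSplice_mem hu.1 hv.1 h, fun w hw => ?_⟩
    obtain ⟨c, hc, hsplice⟩ := hdisc.exists_pathSplice_sub_eq t
    have htail : 0 ≤ c * (ζ v - ζ (pathShift t u)) :=
      mul_nonneg hc.le (sub_nonneg.2 (hv.2 (hS.pathShift_mem hu.1 t)))
    calc ζ w ≤ ζ u := hu.2 hw
      _ ≤ ζ (pathSplice t u v h) := by linarith [hsplice u v h]

lemma iterArgmax (hS : IsSemiflowFunnel S) {ζ : ℕ → IPath X → ℝ} (hζ : ∀ n, Continuous (ζ n))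
    (hdisc : ∀ n, IsDiscounted (ζ n)) : ∀ n, IsSemiflowFunnel fun x => iterArgmax ζ (S x) n
  | 0 => hS
  | n + 1 => (iterArgmax hS hζ hdisc n).argmaxOn (hζ n) (hdisc n)

theorem exists_measurable_semiflow_of_separating [T2Space X] (hS : IsSemiflowFunnel S)
    {ζ : ℕ → IPath X → ℝ} (hζ : ∀ n, Continuous (ζ n)) (hdisc : ∀ n, IsDiscounted (ζ n))
    (hsep : ∀ u v, (∀ n, ζ n u = ζ n v) → u = v) :
    ∃ f : X → IPath X, Measurable f ∧ (∀ x, f x ∈ S x) ∧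
      ∀ x, ∀ t₁ t₂ : ℝ≥0, f (f x t₁) t₂ = f x (t₁ + t₂) := by
  have hfunnel := hS.iterArgmax hζ hdisc
  have hlimit (x : X) : ∃ u, ∀ n, u ∈ SemiflowSelection.iterArgmax ζ (S x) n := by
    obtain ⟨u, -, hu⟩ := exists_mem_forall_mem_iterArgmax hζ (hS.isCompact x) isClosed_univ
      fun n => by simpa using (hfunnel n).nonempty x
    exact ⟨u, hu⟩
  choose f hf using hlimit
  have huniq {x : X} {u : IPath X} (hu : ∀ n, u ∈ SemiflowSelection.iterArgmax ζ (S x) n) :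
      f x = u :=
    eq_of_forall_mem_iterArgmax (hsep _ _) (hf x) hu
  refine ⟨f, measurable_of_isClosed fun C hC => ?_, fun x => hf x 0, fun x t₁ t₂ => ?_⟩
  · have hpre : f ⁻¹' C = ⋂ n, {x | (SemiflowSelection.iterArgmax ζ (S x) n ∩ C).Nonempty} := by
      refine Subset.antisymm (fun x hx => mem_iInter.2 fun n => ⟨f x, hf x n, hx⟩) fun x hx => ?_
      obtain ⟨u, huC, hu⟩ :=
        exists_mem_forall_mem_iterArgmax hζ (hS.isCompact x) hC (mem_iInter.1 hx)
      rwa [mem_preimage, huniq hu]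
    rw [hpre]
    exact MeasurableSet.iInter fun n => (hfunnel n).measurableSet_inter_nonempty C hC
  · rw [huniq fun n => (hfunnel n).pathShift_mem (hf x n) t₁, pathShift_apply]

end IsSemiflowFunnel

end Selection

section Moments

variable {α : Type*} [MeasurableSpace α] {μ : Measure α} {g h : α → ℝ} {a b : ℝ}

lemma integrable_comp_mul_of_ae_mem_Icc (hg : Integrable g μ) (hh : AEStronglyMeasurable h μ)
    (hmem : ∀ᵐ x ∂μ, h x ∈ Icc a b) {f : ℝ → ℝ} (hf : Continuous f) :
    Integrable (fun x => f (h x) * g x) μ := by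
  obtain ⟨M, hM⟩ := (isCompact_Icc (a := a) (b := b)).exists_bound_of_continuousOn hf.continuousOn
  exact hg.bdd_mul (hf.comp_aestronglyMeasurable hh) (hmem.mono fun x hx => hM _ hx)

lemma integral_polynomial_comp_mul_eq_zero (hint : ∀ n : ℕ, Integrable (fun x => h x ^ n * g x) μ)
    (hmoment : ∀ n : ℕ, ∫ x, h x ^ n * g x ∂μ = 0) (p : ℝ[X]) :
    ∫ x, p.eval (h x) * g x ∂μ = 0 := by
  simp only [Polynomial.eval_eq_sum_range, Finset.sum_mul, mul_assoc]
  rw [integral_finsetSum _ fun n _ => (hint n).const_mul _]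
  exact Finset.sum_eq_zero fun n _ => by rw [integral_const_mul, hmoment, mul_zero]

lemma integral_comp_mul_eq_zero_of_moments (hg : Integrable g μ) (hh : AEStronglyMeasurable h μ)
    (hmem : ∀ᵐ x ∂μ, h x ∈ Icc a b) (hmoment : ∀ n : ℕ, ∫ x, h x ^ n * g x ∂μ = 0)
    {f : ℝ → ℝ} (hf : Continuous f) : ∫ x, f (h x) * g x ∂μ = 0 := by
  have hint {k : ℝ → ℝ} (hk : Continuous k) : Integrable (fun x => k (h x) * g x) μ :=
    integrable_comp_mul_of_ae_mem_Icc hg hh hmem hk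
  have hle (ε : ℝ) (hε : ε ∈ Ioi 0) : ‖∫ x, f (h x) * g x ∂μ‖ ≤ ε * ∫ x, ‖g x‖ ∂μ := by
    obtain ⟨p, hp⟩ := exists_polynomial_near_of_continuousOn a b f hf.continuousOn ε hε
    have hpoly := integral_polynomial_comp_mul_eq_zero (fun n => hint (continuous_pow n)) hmoment p
    rw [← sub_zero (∫ x, f (h x) * g x ∂μ), ← hpoly,
      ← integral_sub (hint hf) (hint p.continuous), ← integral_const_mul]
    refine norm_integral_le_of_norm_le (hg.norm.const_mul ε) (hmem.mono fun x hx => ?_)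
    rw [← sub_mul, norm_mul, norm_sub_rev]
    exact mul_le_mul_of_nonneg_right (hp _ hx).le (norm_nonneg _)
  have hlim : Tendsto (fun ε : ℝ => ε * ∫ x, ‖g x‖ ∂μ) (𝓝[>] 0) (𝓝 0) :=
    (((continuous_mul_const _).tendsto' _ _ (zero_mul _))).mono_left nhdsWithin_le_nhds
  exact norm_le_zero_iff.1 (ge_of_tendsto hlim (eventually_nhdsWithin_of_forall hle))

end Moments

section Laplace

lemma continuous_mul_comp_neg_log {H : ℝ → ℝ} (hH : Continuous H) {B : ℝ}
    (hB : ∀ s, |H s| ≤ B) : Continuous fun y => y * H (-Real.log y) := by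
  refine continuous_iff_continuousAt.2 fun y => ?_
  rcases eq_or_ne y 0 with rfl | hy
  · have hlim : Tendsto (fun y : ℝ => |y| * B) (𝓝 0) (𝓝 0) :=
      Continuous.tendsto' (by fun_prop) _ _ (by simp)
    refine (squeeze_zero_norm (fun y => ?_) hlim).trans_eq (by simp only [zero_mul])
    rw [norm_mul]
    exact mul_le_mul_of_nonneg_left (hB _) (abs_nonneg _)
  · exact continuousAt_id.mul (hH.continuousAt.comp (Real.continuousAt_log hy).neg)

lemma integrableOn_exp_neg_mul_mul {H : ℝ → ℝ} (hH : Continuous H) {B : ℝ}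
    (hB : ∀ s, |H s| ≤ B) {c : ℝ} (hc : 0 < c) :
    IntegrableOn (fun s => Real.exp (-c * s) * H s) (Ioi 0) :=
  (exp_neg_integrableOn_Ioi 0 hc).mul_bdd hH.aestronglyMeasurable (.of_forall hB)

lemma ae_exp_neg_mem_Icc : ∀ᵐ s ∂volume.restrict (Ioi (0 : ℝ)), Real.exp (-s) ∈ Icc 0 1 := by
  filter_upwards [ae_restrict_mem measurableSet_Ioi] with s hs
  exact ⟨(Real.exp_pos _).le, Real.exp_le_one_iff.2 (neg_nonpos.2 (le_of_lt hs))⟩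

-- With `h s = exp (-s)` and `g s = exp (-s) * H s`, the hypothesis says that the moments of `h`
-- against `g` vanish, and `g` is itself a continuous function of `h`; so `∫ g ^ 2 = 0`.
theorem eqOn_zero_of_laplace_eq_zero {H : ℝ → ℝ} (hH : Continuous H) {B : ℝ}
    (hB : ∀ s, |H s| ≤ B)
    (hlaplace : ∀ n : ℕ, ∫ s in Ioi 0, Real.exp (-(n + 1 : ℝ) * s) * H s = 0) :
    EqOn H 0 (Ioi 0) := by
  set g : ℝ → ℝ := fun s => Real.exp (-s) * H s with hg
  have hgint : IntegrableOn g (Ioi 0) := by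
    simpa only [neg_one_mul] using integrableOn_exp_neg_mul_mul hH hB one_pos
  have hexp : AEStronglyMeasurable (fun s : ℝ => Real.exp (-s)) (volume.restrict (Ioi 0)) :=
    Continuous.aestronglyMeasurable (by fun_prop)
  have hmoment (n : ℕ) : ∫ s in Ioi 0, Real.exp (-s) ^ n * g s = 0 := by
    refine (setIntegral_congr_fun measurableSet_Ioi fun s _ => ?_).trans (hlaplace n)
    simp only [hg]
    rw [← Real.exp_nat_mul, ← mul_assoc, ← Real.exp_add]
    ring_nf
  have hf := continuous_mul_comp_neg_log hH hB
  have hfg (s : ℝ) : Real.exp (-s) * H (-Real.log (Real.exp (-s))) = g s := by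
    rw [Real.log_exp, neg_neg]
  have hsq := integral_comp_mul_eq_zero_of_moments hgint hexp ae_exp_neg_mem_Icc hmoment hf
  have hsqint := integrable_comp_mul_of_ae_mem_Icc hgint hexp ae_exp_neg_mem_Icc hf
  simp only [hfg] at hsq hsqint
  have hae := (integral_eq_zero_iff_of_nonneg (fun s => mul_self_nonneg (g s)) hsqint).1 hsq
  have heqOn : EqOn (fun s => g s * g s) 0 (Ioi 0) :=
    Measure.eqOn_open_of_ae_eq hae isOpen_Ioi (by fun_prop) continuousOn_const
  intro s hs
  simpa [hg, Real.exp_ne_zero] using heqOn hs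

end Laplace

section DiscountedIntegral

variable {X : Type*} [MetricSpace X]

/-- The value at `c` of the Laplace transform of the observable `φ` along the path `u`. The path is
read at `s.toNNReal`, which is `s` on the domain of integration. -/
def discountedIntegral (c : ℝ) (φ : X →ᵇ ℝ) (u : IPath X) : ℝ :=
  ∫ s in Ioi (0 : ℝ), Real.exp (-c * s) * φ (u s.toNNReal)

variable {c : ℝ} (φ : X →ᵇ ℝ)

lemma integrableOn_exp_neg_mul_apply (hc : 0 < c) (u : IPath X) :
    IntegrableOn (fun s => Real.exp (-c * s) * φ (u s.toNNReal)) (Ioi 0) :=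
  integrableOn_exp_neg_mul_mul (by fun_prop) (fun _ => φ.norm_coe_le_norm _) hc

lemma continuous_discountedIntegral (hc : 0 < c) : Continuous (discountedIntegral c φ) := by
  refine continuous_of_dominated (bound := fun s => Real.exp (-c * s) * ‖φ‖)
    (fun u => Continuous.aestronglyMeasurable (by fun_prop)) (fun u => .of_forall fun s => ?_)
    ((exp_neg_integrableOn_Ioi 0 hc).mul_const _) (.of_forall fun s => by fun_prop)
  rw [norm_mul, Real.norm_of_nonneg (Real.exp_pos _).le]
  exact mul_le_mul_of_nonneg_left (φ.norm_coe_le_norm _) (Real.exp_pos _).le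

lemma setIntegral_Ioi_eq_exp_mul_discountedIntegral (t : ℝ≥0) (u : IPath X) :
    ∫ s in Ioi (t : ℝ), Real.exp (-c * s) * φ (u s.toNNReal) =
      Real.exp (-c * t) * discountedIntegral c φ (pathShift t u) := by
  have htranslate := (measurePreserving_add_left volume (t : ℝ)).setIntegral_preimage_emb
    (measurableEmbedding_addLeft (t : ℝ)) (fun s => Real.exp (-c * s) * φ (u s.toNNReal)) (Ioi t)
  rw [preimage_const_add_Ioi, sub_self] at htranslate
  rw [← htranslate, discountedIntegral, ← integral_const_mul]
  refine setIntegral_congr_fun measurableSet_Ioi fun s hs => ?_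
  rw [Real.toNNReal_add t.coe_nonneg (le_of_lt hs), Real.toNNReal_coe, pathShift_apply, mul_add,
    Real.exp_add, mul_assoc]

lemma discountedIntegral_eq_add (hc : 0 < c) (t : ℝ≥0) (u : IPath X) :
    discountedIntegral c φ u = (∫ s in Ioc (0 : ℝ) t, Real.exp (-c * s) * φ (u s.toNNReal)) +
      Real.exp (-c * t) * discountedIntegral c φ (pathShift t u) := by
  have hint := integrableOn_exp_neg_mul_apply φ hc u
  rw [← setIntegral_Ioi_eq_exp_mul_discountedIntegral, ← setIntegral_union Ioc_disjoint_Ioi_same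
    measurableSet_Ioi (hint.mono_set Ioc_subset_Ioi_self)
    (hint.mono_set (Ioi_subset_Ioi t.coe_nonneg)), Ioc_union_Ioi_eq_Ioi t.coe_nonneg]
  rfl

lemma isDiscounted_discountedIntegral (hc : 0 < c) : IsDiscounted (discountedIntegral c φ) := by
  refine fun t => ⟨Real.exp (-c * t), Real.exp_pos _, fun w w' heq => ?_⟩
  rw [discountedIntegral_eq_add φ hc t w, discountedIntegral_eq_add φ hc t w', add_sub_cancel_right,
    add_sub_cancel_right]
  refine setIntegral_congr_fun measurableSet_Ioc fun s hs => ?_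
  rw [heq _ (Real.toNNReal_le_iff_le_coe.2 hs.2)]

lemma apply_eq_of_forall_discountedIntegral_eq {u v : IPath X}
    (h : ∀ n : ℕ, discountedIntegral (n + 1) φ u = discountedIntegral (n + 1) φ v) (t : ℝ≥0) :
    φ (u t) = φ (v t) := by
  have hdiff : EqOn (fun s : ℝ => φ (u s.toNNReal) - φ (v s.toNNReal)) 0 (Ioi 0) := by
    refine eqOn_zero_of_laplace_eq_zero (B := ‖φ‖ + ‖φ‖) (by fun_prop)
      (fun s => (norm_sub_le _ _).trans
        (add_le_add (φ.norm_coe_le_norm _) (φ.norm_coe_le_norm _))) fun n => ?_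
    simp only [mul_sub]
    rw [integral_sub (integrableOn_exp_neg_mul_apply φ n.cast_add_one_pos u)
      (integrableOn_exp_neg_mul_apply φ n.cast_add_one_pos v)]
    exact sub_eq_zero.2 (h n)
  have hclosure := hdiff.closure (by fun_prop) continuous_zero
  rw [closure_Ioi] at hclosure
  simpa [sub_eq_zero] using hclosure t.coe_nonneg

lemma exists_seq_boundedContinuous_separating (X : Type*) [MetricSpace X]
    [TopologicalSpace.SeparableSpace X] :
    ∃ φ : ℕ → X →ᵇ ℝ, ∀ x y, (∀ n, φ n x = φ n y) → x = y := by
  rcases isEmpty_or_nonempty X with _ | _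
  · exact ⟨0, fun x => isEmptyElim x⟩
  have hbound (r : ℝ) : ‖Real.arctan r‖ ≤ Real.pi / 2 :=
    abs_le.2 ⟨(Real.neg_pi_div_two_lt_arctan r).le, (Real.arctan_lt_pi_div_two r).le⟩
  refine ⟨fun n => .ofNormedAddCommGroup
    (fun x => Real.arctan (dist x (TopologicalSpace.denseSeq X n))) (by fun_prop) (Real.pi / 2)
    fun x => hbound _, fun x y hxy => ?_⟩
  have hdist : dist x = dist y := by
    refine (TopologicalSpace.denseRange_denseSeq X).equalizer (by fun_prop) (by fun_prop) ?_
    exact funext fun n => Real.arctan_injective (hxy n)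
  exact dist_eq_zero.1 ((congrFun hdist y).trans (dist_self y))

theorem IsSemiflowFunnel.exists_measurable_semiflow [MeasurableSpace X]
    [TopologicalSpace.SeparableSpace X] {S : X → Set (IPath X)} (hS : IsSemiflowFunnel S) :
    ∃ f : X → IPath X, Measurable f ∧ (∀ x, f x ∈ S x) ∧
      ∀ x, ∀ t₁ t₂ : ℝ≥0, f (f x t₁) t₂ = f x (t₁ + t₂) := by
  obtain ⟨φ, hφ⟩ := exists_seq_boundedContinuous_separating X
  refine hS.exists_measurable_semiflow_of_separating
    (ζ := fun k => discountedIntegral (k.unpair.2 + 1) (φ k.unpair.1))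
    (fun k => continuous_discountedIntegral _ (Nat.cast_add_one_pos _))
    (fun k => isDiscounted_discountedIntegral _ (Nat.cast_add_one_pos _)) fun u v huv => ?_
  ext t
  refine hφ _ _ fun m => apply_eq_of_forall_discountedIntegral_eq (φ m) (fun n => ?_) t
  simpa using huv (Nat.pair m n)

end DiscountedIntegral

section Osgood

lemma exists_first_hitting_time {m : ℝ≥0 → ℝ} (hm : Continuous m) {c : ℝ} {t : ℝ≥0}
    (h0 : m 0 ≤ c) (ht : c ≤ m t) : ∃ σ ≤ t, m σ = c ∧ ∀ r ≤ σ, m r ≤ c := by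
  have hcompact : IsCompact (Icc 0 t ∩ m ⁻¹' {c}) :=
    isCompact_Icc.inter_right (isClosed_singleton.preimage hm)
  have hhit {r : ℝ≥0} (hr : c ≤ m r) : ∃ q ∈ Icc 0 r, m q = c :=
    intermediate_value_Icc zero_le hm.continuousOn ⟨h0, hr⟩
  obtain ⟨σ, ⟨hσt, hσ⟩, hleast⟩ := hcompact.exists_isLeast (hhit ht)
  refine ⟨σ, hσt.2, hσ, fun r hr => ?_⟩
  by_contra! hlt
  obtain ⟨q, hq, hqc⟩ := hhit hlt.le
  have hσq : σ ≤ q := hleast ⟨⟨hq.1, hq.2.trans (hr.trans hσt.2)⟩, hqc⟩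
  obtain rfl : σ = r := le_antisymm (hσq.trans hq.2) hr
  exact hlt.ne' hσ

variable {ψ : ℝ → ℝ}

lemma tendsto_sum_inv_atTop (hmono : MonotoneOn ψ (Ici 0)) (hpos : ∀ r, 0 ≤ r → 0 < ψ r)
    (hdiv : ¬ IntegrableOn (fun r => (ψ r)⁻¹) (Ici 0)) (N : ℕ) :
    Tendsto (fun k => ∑ j ∈ Finset.range k, (ψ ((j + N : ℕ) : ℝ))⁻¹) atTop atTop := by
  have hinv (r : ℝ) (hr : 0 ≤ r) : 0 ≤ (ψ r)⁻¹ := (inv_pos.2 (hpos r hr)).le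
  refine (not_summable_iff_tendsto_nat_atTop_of_nonneg fun j => hinv _ (Nat.cast_nonneg _)).1 ?_
  rw [summable_nat_add_iff (f := fun j : ℕ => (ψ j)⁻¹)]
  refine fun hsum => hdiv ((integrableOn_Ici_iff_integrableOn_Ioi).2 ?_)
  refine AntitoneOn.integrableOn_Ioi_zero_of_summable (fun r hr s hs hrs => ?_) hsum
    fun r hr => hinv r (le_of_lt hr)
  exact inv_anti₀ (hpos r hr) (hmono hr hs hrs)

-- Climbing from level `c` to level `c + 1` takes time at least `1 / ψ (c + 1)`.
lemma le_add_one_of_le_add_inv {m : ℝ≥0 → ℝ} (hm : Continuous m)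
    (hstep : ∀ s t, s ≤ t → ∀ M, (∀ r ≤ t, m r ≤ M) → m t ≤ m s + ψ M * (t - s)) {c : ℝ}
    (hψ : 0 < ψ (c + 1)) {a t : ℝ≥0} (hc : ∀ r ≤ a, m r ≤ c)
    (ht : (t : ℝ) ≤ a + (ψ (c + 1))⁻¹) : m t ≤ c + 1 := by
  by_contra! hlt
  obtain ⟨σ, hσt, hσ, hbelow⟩ :=
    exists_first_hitting_time hm ((hc 0 zero_le).trans (lt_add_one c).le) hlt.le
  have hσlt : σ < t := lt_of_le_of_ne hσt fun h => hlt.ne' (h ▸ hσ)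
  have haσ : a ≤ σ := by
    by_contra! hσa
    linarith [hc σ hσa.le]
  have hclimb : c + 1 ≤ c + ψ (c + 1) * (σ - a) := by
    linarith [hstep a σ haσ _ hbelow, hc a le_rfl]
  have hfast : ψ (c + 1) * (σ - a) < ψ (c + 1) * (ψ (c + 1))⁻¹ := by
    gcongr
    linarith [NNReal.coe_lt_coe.2 hσlt]
  rw [mul_inv_cancel₀ hψ.ne'] at hfast
  linarith

lemma le_add_of_le_sum_inv (hpos : ∀ r, 0 ≤ r → 0 < ψ r) {m : ℝ≥0 → ℝ} (hm : Continuous m)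
    (hstep : ∀ s t, s ≤ t → ∀ M, (∀ r ≤ t, m r ≤ M) → m t ≤ m s + ψ M * (t - s)) {N : ℕ}
    (h0 : m 0 ≤ N) (k : ℕ) :
    ∀ t : ℝ≥0, (t : ℝ) ≤ ∑ j ∈ Finset.range k, (ψ ((j + (N + 1) : ℕ) : ℝ))⁻¹ → m t ≤ N + k := by
  induction k with
  | zero =>
    intro t ht
    obtain rfl : t = 0 := NNReal.coe_eq_zero.1 (le_antisymm (by simpa using ht) t.coe_nonneg)
    simpa using h0
  | succ k ih =>
    intro t ht
    have hsum : 0 ≤ ∑ j ∈ Finset.range k, (ψ ((j + (N + 1) : ℕ) : ℝ))⁻¹ :=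
      Finset.sum_nonneg fun j _ => (inv_pos.2 (hpos _ (Nat.cast_nonneg _))).le
    have hlevel : ((k + (N + 1) : ℕ) : ℝ) = N + k + 1 := by push_cast; ring
    rw [Finset.sum_range_succ, hlevel] at ht
    lift ∑ j ∈ Finset.range k, (ψ ((j + (N + 1) : ℕ) : ℝ))⁻¹ to ℝ≥0 using hsum with a
    rw [Nat.cast_add_one, ← add_assoc]
    exact le_add_one_of_le_add_inv hm hstep (hpos _ (by positivity))
      (fun r hr => ih r (NNReal.coe_le_coe.2 hr)) ht

theorem exists_bound_of_osgood (hmono : MonotoneOn ψ (Ici 0)) (hpos : ∀ r, 0 ≤ r → 0 < ψ r)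
    (hdiv : ¬ IntegrableOn (fun r => (ψ r)⁻¹) (Ici 0)) (R : ℝ) (T : ℝ≥0) :
    ∃ M, ∀ m : ℝ≥0 → ℝ, Continuous m → m 0 ≤ R →
      (∀ s t, s ≤ t → ∀ M, (∀ r ≤ t, m r ≤ M) → m t ≤ m s + ψ M * (t - s)) →
      ∀ t ≤ T, m t ≤ M := by
  obtain ⟨N, hN⟩ := exists_nat_ge R
  obtain ⟨k, hk⟩ := ((tendsto_sum_inv_atTop hmono hpos hdiv (N + 1)).eventually_ge_atTop T).exists
  exact ⟨N + k, fun m hm h0 hstep t ht => le_add_of_le_sum_inv hpos hm hstep (h0.trans hN) k t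
    (le_trans (by exact_mod_cast ht) hk)⟩

end Osgood

section Compactness

lemma equicontinuous_of_forall_lipschitzOnWith_Iic {ι X : Type*} [PseudoMetricSpace X]
    {f : ι → ℝ≥0 → X} {L : ℝ≥0 → ℝ≥0} (hf : ∀ i T, LipschitzOnWith (L T) (f i) (Iic T)) :
    Equicontinuous f := by
  intro t
  have hwithin : EquicontinuousWithinAt f (Iic (t + 1)) t :=
    (LipschitzOnWith.uniformEquicontinuousOn f _ fun i => hf i (t + 1)).equicontinuousOn t
      (show t ≤ t + 1 by simp)
  rwa [EquicontinuousWithinAt, nhdsWithin_eq_nhds.2 (Iic_mem_nhds (by simp))] at hwithin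

theorem isCompact_forall_mem_and_lipschitzOnWith {X : Type*} [MetricSpace X] {K : ℝ≥0 → Set X}
    (hK : ∀ t, IsCompact (K t)) (L : ℝ≥0 → ℝ≥0) :
    IsCompact {u : IPath X | (∀ t, u t ∈ K t) ∧ ∀ T, LipschitzOnWith (L T) u (Iic T)} := by
  have hcompact : IsCompact
      (univ.pi K ∩ ⋂ T, {f : ℝ≥0 → X | LipschitzOnWith (L T) f (Iic T)}) :=
    (isCompact_univ_pi hK).inter_right
      (isClosed_iInter fun T => isClosed_setOfPred_lipschitzOnWith (L T) (Iic T))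
  refine ArzelaAscoli.isCompact_of_equicontinuous _ ?_
    (equicontinuous_of_forall_lipschitzOnWith_Iic fun u => u.2.2)
  convert! hcompact using 1
  ext f
  constructor
  · rintro ⟨u, ⟨huK, huL⟩, rfl⟩
    exact ⟨fun t _ => huK t, mem_iInter.2 huL⟩
  · rintro ⟨hfK, hfL⟩
    have hlip : ∀ T, LipschitzOnWith (L T) f (Iic T) := mem_iInter.1 hfL
    have hequi := equicontinuous_of_forall_lipschitzOnWith_Iic fun _ : Unit => hlip
    exact ⟨⟨f, hequi.continuous ()⟩, ⟨fun t => hfK t trivial, hlip⟩, rfl⟩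

end Compactness

section UpperHemicontinuous

lemma mem_of_forall_mem_cthickening {X : Type*} [PseudoMetricSpace X] {C : Set X}
    (hC : IsClosed C) {x : X} (hx : ∀ ε > 0, x ∈ Metric.cthickening ε C) : x ∈ C := by
  rw [← hC.closure_eq, Metric.closure_eq_iInter_cthickening]
  exact mem_iInter₂.2 hx

variable {T X Z : Type*} [TopologicalSpace X] [TopologicalSpace Z] {F : X → Set Z} {K : Set T}
  {V : Set Z}

lemma exists_pos_forall_subset_of_mem_cthickening [PseudoMetricSpace T]
    (hF : UpperHemicontinuous F) {u : C(T, X)} (hK : IsCompact K) (hV : IsOpen V)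
    (hsub : ∀ r ∈ K, F (u r) ⊆ V) : ∃ η > 0, ∀ r ∈ Metric.cthickening η K, F (u r) ⊆ V :=
  hK.exists_cthickening_subset_open
    ((upperHemicontinuous_iff_isOpen_preimage_Iic.1 hF V hV).preimage u.continuous) hsub

lemma eventually_forall_subset_of_tendsto [TopologicalSpace T] (hF : UpperHemicontinuous F)
    {ι : Type*} {l : Filter ι} {w : ι → C(T, X)} {u : C(T, X)} (hw : Tendsto w l (𝓝 u))
    (hK : IsCompact K) (hV : IsOpen V) (hsub : ∀ r ∈ K, F (u r) ⊆ V) :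
    ∀ᶠ i in l, ∀ r ∈ K, F (w i r) ⊆ V :=
  ContinuousMap.tendsto_nhds_compactOpen.1 hw K hK _
    (upperHemicontinuous_iff_isOpen_preimage_Iic.1 hF V hV) hsub

end UpperHemicontinuous

section ApproximateSolutions

variable {E : Type*} [NormedAddCommGroup E] [NormedSpace ℝ E]

/-- The mean velocity of the path `u` over the time interval `[s, t]`. -/
def meanVelocity (u : IPath E) (s t : ℝ≥0) : E :=
  (t - s : ℝ)⁻¹ • (u t - u s)

/-- Approximate solutions, with delay `δ`, of the differential inclusion `u' ∈ F u`: over `[s, t]`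
the mean velocity lies in the closed convex hull of the sets `F (u r)` for `r ∈ [s - δ, t]`. For
`δ = 0` this is the integrated form of the inclusion, which involves no derivative and passes to
locally uniform limits. -/
def IsApproxSolution (F : E → Set E) (δ : ℝ≥0) (u : IPath E) : Prop :=
  ∀ ⦃s t : ℝ≥0⦄, s < t → ∀ C : Set E, IsClosed C → Convex ℝ C →
    (∀ r, s ≤ r + δ → r ≤ t → F (u r) ⊆ C) → meanVelocity u s t ∈ C

lemma meanVelocity_eq_slope (u : IPath E) (s t : ℝ≥0) :
    meanVelocity u s t = slope (fun r : ℝ => u r.toNNReal) s t := by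
  simp [meanVelocity, slope_def_module]

lemma meanVelocity_pathShift (a : ℝ≥0) (u : IPath E) (s t : ℝ≥0) :
    meanVelocity (pathShift a u) s t = meanVelocity u (a + s) (a + t) := by
  simp [meanVelocity]

lemma meanVelocity_pathSplice_of_le {a s t : ℝ≥0} {u v : IPath E} (h : v 0 = u a) (hs : s ≤ a)
    (ht : t ≤ a) : meanVelocity (pathSplice a u v h) s t = meanVelocity u s t := by
  rw [meanVelocity, pathSplice_of_le h hs, pathSplice_of_le h ht, meanVelocity]

lemma meanVelocity_pathSplice_add {a : ℝ≥0} {u v : IPath E} (h : v 0 = u a) (s t : ℝ≥0) :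
    meanVelocity (pathSplice a u v h) (a + s) (a + t) = meanVelocity v s t := by
  rw [← meanVelocity_pathShift, pathShift_pathSplice]

lemma meanVelocity_mem_of_convex {C : Set E} (hC : Convex ℝ C) {u : IPath E} {s a t : ℝ≥0}
    (hsa : s < a) (hat : a < t) (hleft : meanVelocity u s a ∈ C) (hright : meanVelocity u a t ∈ C) :
    meanVelocity u s t ∈ C := by
  rw [meanVelocity_eq_slope] at hleft hright ⊢
  rw [← NNReal.coe_lt_coe] at hsa hat
  rw [← sub_div_sub_smul_slope_add_sub_div_sub_smul_slope _ (s : ℝ) a t]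
  refine hC hleft hright (div_nonneg ?_ ?_) (div_nonneg ?_ ?_) ?_ <;> try linarith
  rw [← add_div, sub_add_sub_cancel', div_self (by linarith)]

lemma tendsto_meanVelocity {ι : Type*} {l : Filter ι} {w : ι → IPath E} {u : IPath E}
    (hw : Tendsto w l (𝓝 u)) (s t : ℝ≥0) :
    Tendsto (fun i => meanVelocity (w i) s t) l (𝓝 (meanVelocity u s t)) := by
  have heval (r : ℝ≥0) : Tendsto (fun i => w i r) l (𝓝 (u r)) :=
    ((continuous_eval_const r).tendsto u).comp hw
  exact ((heval t).sub (heval s)).const_smul _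

namespace IsApproxSolution

variable {F : E → Set E} {δ : ℝ≥0} {u v : IPath E}

lemma pathShift (hu : IsApproxSolution F 0 u) (a : ℝ≥0) :
    IsApproxSolution F 0 (pathShift a u) := by
  intro s t hst C hC hconv hF
  rw [meanVelocity_pathShift]
  refine hu (by gcongr) C hC hconv fun r hsr hrt => ?_
  rw [add_zero] at hsr
  obtain ⟨b, rfl⟩ := exists_add_of_le (le_self_add.trans hsr)
  exact hF b (by simpa using hsr) (by simpa using hrt)

lemma pathSplice (hu : IsApproxSolution F δ u) (hv : IsApproxSolution F δ v) {a : ℝ≥0}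
    (h : v 0 = u a) : IsApproxSolution F δ (pathSplice a u v h) := by
  intro s t hst C hC hconv hF
  have hbefore {q : ℝ≥0} (hsq : s < q) (hqt : q ≤ t) (hqa : q ≤ a) :
      meanVelocity (SemiflowSelection.pathSplice a u v h) s q ∈ C := by
    rw [meanVelocity_pathSplice_of_le h (hsq.le.trans hqa) hqa]
    refine hu hsq C hC hconv fun r hsr hrq => ?_
    rw [← pathSplice_of_le h (hrq.trans hqa)]
    exact hF r hsr (hrq.trans hqt)
  have hafter {q : ℝ≥0} (hsq : s ≤ q) (hqt : q < t) (haq : a ≤ q) :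
      meanVelocity (SemiflowSelection.pathSplice a u v h) q t ∈ C := by
    obtain ⟨q, rfl⟩ := exists_add_of_le haq
    obtain ⟨t, rfl⟩ := exists_add_of_le (haq.trans hqt.le)
    rw [meanVelocity_pathSplice_add]
    refine hv (lt_of_add_lt_add_left hqt) C hC hconv fun r hqr hrt => ?_
    rw [← pathSplice_add h r]
    exact hF _ (hsq.trans (by rw [add_assoc]; gcongr)) (by gcongr)
  rcases le_or_gt t a with hta | hat
  · exact hbefore hst le_rfl hta
  rcases le_or_gt a s with has | hsa
  · exact hafter le_rfl hst has
  · exact meanVelocity_mem_of_convex hconv hsa hat (hbefore hsa hat.le le_rfl)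
      (hafter hsa.le hat le_rfl)

lemma norm_sub_le (hu : IsApproxSolution F δ u) {s t : ℝ≥0} (hst : s ≤ t) {L : ℝ}
    (hL : ∀ r ≤ t, ∀ v ∈ F (u r), ‖v‖ ≤ L) : ‖u t - u s‖ ≤ L * (t - s) := by
  rcases hst.eq_or_lt with rfl | hlt
  · simp
  have hmem := hu hlt (Metric.closedBall 0 L) Metric.isClosed_closedBall (convex_closedBall _ _)
    fun r _ hrt v hv => mem_closedBall_zero_iff.2 (hL r hrt v hv)
  have hpos : (0 : ℝ) < t - s := sub_pos.2 (NNReal.coe_lt_coe.2 hlt)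
  rwa [mem_closedBall_zero_iff, meanVelocity, norm_smul, norm_inv, Real.norm_of_nonneg hpos.le,
    inv_mul_le_iff₀ hpos, mul_comm] at hmem

end IsApproxSolution

theorem isApproxSolution_zero_of_tendsto {F : E → Set E} (hF : UpperHemicontinuous F)
    {ι : Type*} {l : Filter ι} [l.NeBot] {δ : ι → ℝ≥0} (hδ : Tendsto δ l (𝓝 0))
    {w : ι → IPath E} {u : IPath E} (hw : Tendsto w l (𝓝 u))
    (hsol : ∀ i, IsApproxSolution F (δ i) (w i)) : IsApproxSolution F 0 u := by
  intro s t hst C hC hconv hFC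
  refine mem_of_forall_mem_cthickening hC fun ε hε => ?_
  have hthick (r : ℝ≥0) (hr : r ∈ Icc s t) : F (u r) ⊆ Metric.thickening ε C :=
    (hFC r (by simpa using hr.1) hr.2).trans (Metric.self_subset_thickening hε C)
  obtain ⟨η, hη, hnear⟩ := exists_pos_forall_subset_of_mem_cthickening hF isCompact_Icc
    Metric.isOpen_thickening hthick
  have hpath := eventually_forall_subset_of_tendsto hF hw isCompact_Icc.cthickening
    Metric.isOpen_thickening hnear
  refine Metric.isClosed_cthickening.mem_of_tendsto (tendsto_meanVelocity hw s t) ?_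
  filter_upwards [hpath, hδ.eventually_lt_const (Real.toNNReal_pos.2 hη)] with i hi hδi
  refine hsol i hst _ Metric.isClosed_cthickening (hconv.cthickening ε) fun r hsr hrt => ?_
  refine (hi r ?_).trans (Metric.thickening_subset_cthickening ε C)
  rcases le_total s r with hle | hle
  · exact Metric.self_subset_cthickening _ ⟨hle, hrt⟩
  · refine Metric.mem_cthickening_of_dist_le r s η _ ⟨le_rfl, hst.le⟩ ?_
    rw [dist_comm, NNReal.dist_eq, abs_of_nonneg (sub_nonneg.2 (NNReal.coe_le_coe.2 hle))]
    have hδη : (δ i : ℝ) < η := Real.lt_toNNReal_iff_coe_lt.1 hδi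
    linarith [NNReal.coe_le_coe.2 hsr, NNReal.coe_add r (δ i)]

theorem IsApproxSolution.deriv_mem {F : E → Set E} (hF : UpperHemicontinuous F)
    (hclosed : ∀ y, IsClosed (F y)) (hconv : ∀ y, Convex ℝ (F y)) {u : IPath E}
    (hu : IsApproxSolution F 0 u) {s : ℝ≥0} {v : E}
    (hderiv : HasDerivAt (fun r : ℝ => u r.toNNReal) v s) : v ∈ F (u s) := by
  refine mem_of_forall_mem_cthickening (hclosed _) fun ε hε => ?_
  obtain ⟨η, hη, hnear⟩ := exists_pos_forall_subset_of_mem_cthickening hF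
    (isCompact_singleton (x := s)) (Metric.isOpen_thickening (δ := ε) (E := F (u s)))
    (by simpa using Metric.self_subset_thickening hε (F (u s)))
  have hslope := (hasDerivAt_iff_tendsto_slope.1 hderiv).mono_left (nhdsGT_le_nhdsNE _)
  refine Metric.isClosed_cthickening.mem_of_tendsto hslope ?_
  filter_upwards [Ioo_mem_nhdsGT (lt_add_of_pos_right (s : ℝ) hη)] with z hz
  lift z to ℝ≥0 using s.coe_nonneg.trans hz.1.le
  rw [← meanVelocity_eq_slope]
  refine hu (NNReal.coe_lt_coe.1 hz.1) _ Metric.isClosed_cthickening ((hconv _).cthickening ε)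
    fun r hsr hrz => (hnear r ?_).trans (Metric.thickening_subset_cthickening _ _)
  rw [add_zero] at hsr
  refine Metric.mem_cthickening_of_dist_le r s η _ rfl ?_
  rw [NNReal.dist_eq, abs_of_nonneg (sub_nonneg.2 (NNReal.coe_le_coe.2 hsr))]
  linarith [hz.2, NNReal.coe_le_coe.2 hrz]

lemma isApproxSolution_of_eq_integral [CompleteSpace E] {F : E → Set E} {δ : ℝ≥0} {u : IPath E}
    {g : ℝ → E} (hg : ∀ a b, IntervalIntegrable g volume a b) {x : E}
    (hu : ∀ t : ℝ≥0, u t = x + ∫ s in (0 : ℝ)..t, g s) {τ : ℝ≥0 → ℝ≥0}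
    (hτ : ∀ s, τ s ≤ s ∧ s ≤ τ s + δ) (hgF : ∀ s : ℝ≥0, g s ∈ F (u (τ s))) :
    IsApproxSolution F δ u := by
  intro s t hst C hC hconv hFC
  have hlt : (s : ℝ) < t := NNReal.coe_lt_coe.2 hst
  have hmem : ∀ᵐ r ∂volume.restrict (Ioc (s : ℝ) t), g r ∈ C := by
    filter_upwards [ae_restrict_mem measurableSet_Ioc] with r hr
    lift r to ℝ≥0 using s.coe_nonneg.trans hr.1.le
    exact hFC (τ r) ((NNReal.coe_le_coe.1 hr.1.le).trans (hτ r).2)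
      ((hτ r).1.trans (NNReal.coe_le_coe.1 hr.2)) (hgF r)
  have haverage := hconv.set_average_mem hC (by simpa using hlt) (by simp) hmem (hg s t).1
  rwa [setAverage_eq, Real.volume_real_Ioc_of_le hlt.le, ← intervalIntegral.integral_of_le hlt.le,
    ← intervalIntegral.integral_interval_sub_left (hg 0 t) (hg 0 s),
    ← add_sub_add_left_eq_sub _ _ x, ← hu t, ← hu s] at haverage

end ApproximateSolutions

section EulerPolygons

variable {E : Type*} [NormedAddCommGroup E]

lemma intervalIntegrable_comp_floor_div (c : ℕ → E) (h : ℝ≥0) (a b : ℝ) :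
    IntervalIntegrable (fun s : ℝ => c ⌊s / h⌋₊) volume a b := by
  have hmeas : StronglyMeasurable fun s : ℝ => c ⌊s / h⌋₊ :=
    (StronglyMeasurable.of_discrete (f := c)).comp_measurable
      (Nat.measurable_floor.comp (measurable_id.div_const (h : ℝ)))
  refine (intervalIntegrable_const
    (c := ∑ k ∈ Finset.range (⌊max a b / h⌋₊ + 1), ‖c k‖)).mono_fun' hmeas.aestronglyMeasurable ?_
  filter_upwards [ae_restrict_mem measurableSet_uIoc] with s hs
  refine Finset.single_le_sum (f := fun k => ‖c k‖) (fun k _ => norm_nonneg _) ?_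
  have hfloor : ⌊s / h⌋₊ ≤ ⌊max a b / h⌋₊ := by
    gcongr
    exact hs.2
  exact Finset.mem_range_succ_iff.2 hfloor

variable [NormedSpace ℝ E]

/-- The `k`-th node of the explicit Euler scheme with step `h` for `u' = f u`, `u 0 = x`. -/
def eulerNode (f : E → E) (h : ℝ≥0) (x : E) (k : ℕ) : E :=
  (fun z => z + h • f z)^[k] x

/-- The Euler polygon: the piecewise affine path through `eulerNode f h x k` at the times `k * h`,
written as the integral of its piecewise constant velocity. -/
def eulerPolygon (f : E → E) (h : ℝ≥0) (x : E) : IPath E where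
  toFun t := x + ∫ s in (0 : ℝ)..t, f (eulerNode f h x ⌊s / h⌋₊)
  continuous_toFun := by
    have := intervalIntegral.continuous_primitive (μ := volume)
      (intervalIntegrable_comp_floor_div (fun k => f (eulerNode f h x k)) h) 0
    fun_prop

lemma eulerPolygon_apply (f : E → E) (h : ℝ≥0) (x : E) (t : ℝ≥0) :
    eulerPolygon f h x t = x + ∫ s in (0 : ℝ)..t, f (eulerNode f h x ⌊s / h⌋₊) := rfl

lemma eulerPolygon_zero (f : E → E) (h : ℝ≥0) (x : E) : eulerPolygon f h x 0 = x := by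
  simp [eulerPolygon_apply]

variable [CompleteSpace E]

lemma eulerPolygon_natCast_mul (f : E → E) {h : ℝ≥0} (hh : 0 < h) (x : E) (k : ℕ) :
    eulerPolygon f h x (k * h) = eulerNode f h x k := by
  induction k with
  | zero => simp [eulerPolygon_zero, eulerNode]
  | succ k ih =>
    have hint := intervalIntegrable_comp_floor_div (fun k => f (eulerNode f h x k)) h
    have hh' : (0 : ℝ) < h := hh
    have hstep : ∫ s in (k * h : ℝ)..((k + 1) * h : ℝ), f (eulerNode f h x ⌊s / h⌋₊)
        = h • f (eulerNode f h x k) := by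
      rw [intervalIntegral.integral_congr_Ioo_of_le (g := fun _ => f (eulerNode f h x k))
        (by gcongr; linarith), intervalIntegral.integral_const, add_mul, one_mul,
        add_sub_cancel_left, NNReal.smul_def]
      intro s hs
      have hfloor : ⌊s / h⌋₊ = k := by
        rw [Nat.floor_eq_iff (div_nonneg ((by positivity : (0 : ℝ) ≤ k * h).trans hs.1.le) hh'.le),
          le_div_iff₀ hh', div_lt_iff₀ hh']
        exact ⟨hs.1.le, hs.2⟩
      simp only [hfloor]
    rw [eulerPolygon_apply] at ih ⊢
    push_cast at ih ⊢
    rw [← intervalIntegral.integral_add_adjacent_intervals (hint 0 (k * h)) (hint _ _), hstep,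
      ← add_assoc, ih]
    simp only [eulerNode, Function.iterate_succ_apply']

lemma isApproxSolution_eulerPolygon {F : E → Set E} {f : E → E} (hf : ∀ y, f y ∈ F y) {h : ℝ≥0}
    (hh : 0 < h) (x : E) : IsApproxSolution F h (eulerPolygon f h x) := by
  refine isApproxSolution_of_eq_integral
    (intervalIntegrable_comp_floor_div (fun k => f (eulerNode f h x k)) h)
    (eulerPolygon_apply f h x) (τ := fun s => ⌊(s / h : ℝ)⌋₊ * h) (fun s => ⟨?_, ?_⟩) fun s => ?_
  · rw [← NNReal.coe_le_coe]
    exact (le_div_iff₀ (NNReal.coe_pos.2 hh)).1 (Nat.floor_le (by positivity))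
  · rw [← add_one_mul, ← NNReal.coe_le_coe]
    exact (div_le_iff₀ (NNReal.coe_pos.2 hh)).1 (Nat.lt_floor_add_one _).le
  · rw [eulerPolygon_natCast_mul f hh]
    exact hf _

end EulerPolygons

section Funnel

variable {E : Type*} [NormedAddCommGroup E] [NormedSpace ℝ E] {F : E → Set E} {ψ : ℝ → ℝ}

lemma IsApproxSolution.lipschitzOnWith (hmono : MonotoneOn ψ (Ici 0))
    (hgrowth : ∀ y, ∀ v ∈ F y, ‖v‖ ≤ ψ ‖y‖) {δ : ℝ≥0} {u : IPath E} (hu : IsApproxSolution F δ u)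
    {T : ℝ≥0} {M : ℝ} (hM : ∀ t ≤ T, ‖u t‖ ≤ M) :
    LipschitzOnWith (ψ M).toNNReal u (Iic T) := by
  have hle {s t : ℝ≥0} (hst : s ≤ t) (ht : t ≤ T) :
      dist (u t) (u s) ≤ (ψ M).toNNReal * dist t s := by
    rw [dist_eq_norm, NNReal.dist_eq, abs_of_nonneg (sub_nonneg.2 (NNReal.coe_le_coe.2 hst))]
    refine hu.norm_sub_le hst fun r hr v hv => (hgrowth _ v hv).trans ?_
    have hr' := hM r (hr.trans ht)
    exact (hmono (norm_nonneg _) ((norm_nonneg _).trans hr') hr').trans (Real.le_coe_toNNReal _)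
  refine LipschitzOnWith.of_dist_le_mul fun s hs t ht => ?_
  rcases le_total t s with h | h
  · exact hle h hs
  · rw [dist_comm, dist_comm s]
    exact hle h ht

lemma IsApproxSolution.exists_lipschitzOnWith (hmono : MonotoneOn ψ (Ici 0))
    (hgrowth : ∀ y, ∀ v ∈ F y, ‖v‖ ≤ ψ ‖y‖) {δ : ℝ≥0} {u : IPath E} (hu : IsApproxSolution F δ u)
    (T : ℝ≥0) : ∃ K, LipschitzOnWith K u (Iic T) := by
  obtain ⟨M, hM⟩ := (isCompact_Icc (a := 0) (b := T)).exists_bound_of_continuousOn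
    u.continuous.continuousOn
  exact ⟨_, hu.lipschitzOnWith hmono hgrowth fun t ht => hM t ⟨zero_le, ht⟩⟩

lemma exists_norm_le_of_isApproxSolution (hmono : MonotoneOn ψ (Ici 0))
    (hpos : ∀ r, 0 ≤ r → 0 < ψ r) (hdiv : ¬ IntegrableOn (fun r => (ψ r)⁻¹) (Ici 0))
    (hgrowth : ∀ y, ∀ v ∈ F y, ‖v‖ ≤ ψ ‖y‖) (R : ℝ) (T : ℝ≥0) :
    ∃ M, ∀ δ u, IsApproxSolution F δ u → ‖u 0‖ ≤ R → ∀ t ≤ T, ‖u t‖ ≤ M := by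
  obtain ⟨M, hM⟩ := exists_bound_of_osgood hmono hpos hdiv R T
  refine ⟨M, fun δ u hu h0 => hM (fun t => ‖u t‖) (by fun_prop) h0 fun s t hst M hM => ?_⟩
  refine (norm_le_norm_add_norm_sub' (u t) (u s)).trans (add_le_add_right ?_ _)
  exact hu.norm_sub_le hst fun r hr v hv => (hgrowth _ v hv).trans
    (hmono (norm_nonneg _) ((norm_nonneg _).trans (hM r hr)) (hM r hr))

theorem exists_isCompact_forall_isApproxSolution_mem [ProperSpace E]
    (hmono : MonotoneOn ψ (Ici 0)) (hpos : ∀ r, 0 ≤ r → 0 < ψ r)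
    (hdiv : ¬ IntegrableOn (fun r => (ψ r)⁻¹) (Ici 0))
    (hgrowth : ∀ y, ∀ v ∈ F y, ‖v‖ ≤ ψ ‖y‖) (R : ℝ) :
    ∃ K : Set (IPath E), IsCompact K ∧ ∀ δ u, IsApproxSolution F δ u → ‖u 0‖ ≤ R → u ∈ K := by
  choose M hM using exists_norm_le_of_isApproxSolution hmono hpos hdiv hgrowth R
  refine ⟨_, isCompact_forall_mem_and_lipschitzOnWith (fun t => isCompact_closedBall (0 : E) (M t))
    fun T => (ψ (M T)).toNNReal, fun δ u hu h0 => ⟨fun t => ?_, fun T => ?_⟩⟩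
  · exact mem_closedBall_zero_iff.2 (hM t δ u hu h0 t le_rfl)
  · exact hu.lipschitzOnWith hmono hgrowth (hM T δ u hu h0)

lemma isClosed_setOfPred_isApproxSolution_zero (hF : UpperHemicontinuous F) :
    IsClosed {u : IPath E | IsApproxSolution F 0 u} :=
  IsSeqClosed.isClosed fun _ _ hw hlim =>
    isApproxSolution_zero_of_tendsto hF tendsto_const_nhds hlim hw

/-- The paths from `x` that solve the differential inclusion `u' ∈ F u` in the integrated sense of
`IsApproxSolution F 0`. -/
def solutionFunnel (F : E → Set E) (x : E) : Set (IPath E) :=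
  {u | u 0 = x ∧ IsApproxSolution F 0 u}

lemma exists_mem_solutionFunnel_inter [ProperSpace E] (hF : UpperHemicontinuous F)
    (hmono : MonotoneOn ψ (Ici 0)) (hpos : ∀ r, 0 ≤ r → 0 < ψ r)
    (hdiv : ¬ IntegrableOn (fun r => (ψ r)⁻¹) (Ici 0))
    (hgrowth : ∀ y, ∀ v ∈ F y, ‖v‖ ≤ ψ ‖y‖) {C : Set (IPath E)} (hC : IsClosed C)
    {w : ℕ → IPath E} (hwC : ∀ n, w n ∈ C) {δ : ℕ → ℝ≥0} (hδ : Tendsto δ atTop (𝓝 0))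
    (hw : ∀ n, IsApproxSolution F (δ n) (w n)) {x : E}
    (hx : Tendsto (fun n => w n 0) atTop (𝓝 x)) : (solutionFunnel F x ∩ C).Nonempty := by
  obtain ⟨R, hR⟩ := hx.norm.bddAbove_range
  obtain ⟨K, hK, hwK⟩ :=
    exists_isCompact_forall_isApproxSolution_mem hmono hpos hdiv hgrowth R
  obtain ⟨u, -, φ, hφ, hlim⟩ :=
    hK.tendsto_subseq fun n => hwK _ (w n) (hw n) (hR (mem_range_self n))
  have hzero : u 0 = x := tendsto_nhds_unique (((continuous_eval_const 0).tendsto u).comp hlim)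
    (hx.comp hφ.tendsto_atTop)
  have hsol : IsApproxSolution F 0 u :=
    isApproxSolution_zero_of_tendsto hF (hδ.comp hφ.tendsto_atTop) hlim fun n => hw (φ n)
  exact ⟨u, ⟨hzero, hsol⟩, hC.mem_of_tendsto hlim (Eventually.of_forall fun n => hwC (φ n))⟩

lemma solutionFunnel_nonempty [ProperSpace E] (hne : ∀ y, (F y).Nonempty)
    (hF : UpperHemicontinuous F) (hmono : MonotoneOn ψ (Ici 0)) (hpos : ∀ r, 0 ≤ r → 0 < ψ r)
    (hdiv : ¬ IntegrableOn (fun r => (ψ r)⁻¹) (Ici 0))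
    (hgrowth : ∀ y, ∀ v ∈ F y, ‖v‖ ≤ ψ ‖y‖) (x : E) : (solutionFunnel F x).Nonempty := by
  choose f hf using hne
  have hsol (n : ℕ) := isApproxSolution_eulerPolygon hf (h := 1 / (n + 1)) (by positivity) x
  exact (exists_mem_solutionFunnel_inter hF hmono hpos hdiv hgrowth isClosed_univ
    (fun _ => mem_univ _) tendsto_one_div_add_atTop_nhds_zero_nat hsol
    (by simp [eulerPolygon_zero])).left

theorem isSemiflowFunnel_solutionFunnel [ProperSpace E] [MeasurableSpace E] [BorelSpace E]
    (hne : ∀ y, (F y).Nonempty) (hF : UpperHemicontinuous F) (hmono : MonotoneOn ψ (Ici 0))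
    (hpos : ∀ r, 0 ≤ r → 0 < ψ r) (hdiv : ¬ IntegrableOn (fun r => (ψ r)⁻¹) (Ici 0))
    (hgrowth : ∀ y, ∀ v ∈ F y, ‖v‖ ≤ ψ ‖y‖) : IsSemiflowFunnel (solutionFunnel F) where
  nonempty := solutionFunnel_nonempty hne hF hmono hpos hdiv hgrowth
  isCompact x := by
    obtain ⟨K, hK, hmem⟩ :=
      exists_isCompact_forall_isApproxSolution_mem hmono hpos hdiv hgrowth ‖x‖
    refine hK.of_isClosed_subset ((isClosed_eq (continuous_eval_const 0) continuous_const).inter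
      (isClosed_setOfPred_isApproxSolution_zero hF)) ?_
    rintro u ⟨rfl, hu⟩
    exact hmem 0 u hu le_rfl
  apply_zero hu := hu.1
  measurableSet_inter_nonempty C hC := by
    refine (IsSeqClosed.isClosed fun y x hy hyx => ?_).measurableSet
    choose w hw hwC using hy
    exact exists_mem_solutionFunnel_inter hF hmono hpos hdiv hgrowth hC hwC tendsto_const_nhds
      (fun n => (hw n).2) (by simpa only [(hw _).1] using hyx)
  pathShift_mem {x u} hu t := ⟨by simp, hu.2.pathShift t⟩
  pathSplice_mem hu hv h :=
    ⟨(pathSplice_of_le h zero_le).trans hu.1, hu.2.pathSplice hv.2 h⟩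

end Funnel

section Solutions

variable {E : Type*} [NormedAddCommGroup E] [NormedSpace ℝ E]

lemma intervalIntegrable_deriv_of_lipschitzOnWith [CompleteSpace E] {f : ℝ → E} {a b : ℝ}
    {K : ℝ≥0} (hf : LipschitzOnWith K f (uIcc a b)) :
    IntervalIntegrable (deriv f) volume a b := by
  rw [intervalIntegrable_iff, uIoc, integrableOn_Ioc_iff_integrableOn_Ioo]
  refine Measure.integrableOn_of_bounded (M := K) (by simp)
    (aestronglyMeasurable_deriv f _) ?_
  filter_upwards [ae_restrict_mem measurableSet_Ioo] with s hs
  exact norm_deriv_le_of_lipschitzOn (Icc_mem_nhds hs.1 hs.2) hf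

/-- `u` solves the differential inclusion `u' ∈ F u`, `u 0 = x`: it is the primitive of a locally
integrable `g` with `g s ∈ F (u s)` for almost every `s > 0`. This is `InclusionSol` with a general
normed space in place of `ℝ^d`. -/
def IsInclusionSolution (F : E → Set E) (x : E) (u : IPath E) : Prop :=
  u 0 = x ∧ ∃ g : ℝ → E,
    (∀ T : ℝ, 0 ≤ T → IntegrableOn g (Ioc (0 : ℝ) T) volume) ∧
    (∀ t : ℝ≥0, u t = x + ∫ s in Ioc (0 : ℝ) (t : ℝ), g s) ∧
    (∀ᵐ s ∂(volume.restrict (Ioi (0 : ℝ))), g s ∈ F (u (Real.toNNReal s)))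

variable [FiniteDimensional ℝ E]

lemma ae_differentiableAt_of_lipschitzOnWith {f : ℝ → E} {a b : ℝ} {K : ℝ≥0}
    (hf : LipschitzOnWith K f (uIcc a b)) : ∀ᵐ s, s ∈ uIcc a b → DifferentiableAt ℝ f s :=
  hf.absolutelyContinuousOnInterval.boundedVariationOn.ae_differentiableAt_of_mem_uIcc

lemma integral_deriv_eq_sub_of_lipschitzOnWith {f : ℝ → E} {a b : ℝ} {K : ℝ≥0}
    (hf : LipschitzOnWith K f (uIcc a b)) : ∫ s in a..b, deriv f s = f b - f a := by
  have := FiniteDimensional.complete ℝ E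
  refine (SeparatingDual.eq_iff_forall_dual_eq (R := ℝ)).2 fun ℓ => ?_
  have hderiv : ∀ᵐ s, s ∈ uIoc a b → ℓ (deriv f s) = deriv (ℓ ∘ f) s := by
    filter_upwards [ae_differentiableAt_of_lipschitzOnWith hf] with s hs hmem
    exact (ℓ.hasFDerivAt.comp_hasDerivAt s (hs (uIoc_subset_uIcc hmem)).hasDerivAt).deriv.symm
  calc ℓ (∫ s in a..b, deriv f s)
      = ∫ s in a..b, ℓ (deriv f s) :=
        (ℓ.intervalIntegral_comp_comm (intervalIntegrable_deriv_of_lipschitzOnWith hf)).symm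
    _ = ∫ s in a..b, deriv (ℓ ∘ f) s := intervalIntegral.integral_congr_ae hderiv
    _ = ℓ (f b) - ℓ (f a) :=
        (ℓ.lipschitz.comp_lipschitzOnWith hf).absolutelyContinuousOnInterval.integral_deriv_eq_sub
    _ = ℓ (f b - f a) := (map_sub ℓ _ _).symm

theorem IsApproxSolution.isInclusionSolution {F : E → Set E} (hF : UpperHemicontinuous F)
    (hclosed : ∀ y, IsClosed (F y)) (hconv : ∀ y, Convex ℝ (F y)) {u : IPath E}
    (hlip : ∀ T, ∃ K, LipschitzOnWith K u (Iic T)) (hu : IsApproxSolution F 0 u) {x : E}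
    (hzero : u 0 = x) : IsInclusionSolution F x u := by
  have := FiniteDimensional.complete ℝ E
  set f : ℝ → E := fun r => u r.toNNReal with hf
  have hlipf (T : ℝ≥0) : ∃ K, LipschitzOnWith K f (uIcc 0 T) := by
    obtain ⟨K, hK⟩ := hlip T
    refine ⟨_, hK.comp (Real.lipschitzWith_toNNReal.lipschitzOnWith) fun r hr => ?_⟩
    exact Real.toNNReal_le_iff_le_coe.2 (uIcc_of_le T.coe_nonneg ▸ hr).2
  have hdiff : ∀ᵐ s, ∀ n : ℕ, s ∈ uIcc (0 : ℝ) (n : ℝ≥0) → DifferentiableAt ℝ f s :=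
    ae_all_iff.2 fun n => ae_differentiableAt_of_lipschitzOnWith (hlipf n).choose_spec
  refine ⟨hzero, deriv f, fun T hT => ?_, fun t => ?_, ?_⟩
  · lift T to ℝ≥0 using hT
    obtain ⟨K, hK⟩ := hlipf T
    exact (intervalIntegrable_deriv_of_lipschitzOnWith hK).1
  · obtain ⟨K, hK⟩ := hlipf t
    rw [← intervalIntegral.integral_of_le t.coe_nonneg,
      integral_deriv_eq_sub_of_lipschitzOnWith hK]
    simp [hf, hzero]
  · filter_upwards [ae_restrict_mem measurableSet_Ioi, ae_restrict_of_ae hdiff] with s hs hdiff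
    obtain ⟨n, hn⟩ := exists_nat_ge s
    lift s to ℝ≥0 using le_of_lt hs
    rw [Real.toNNReal_coe]
    refine hu.deriv_mem hF hclosed hconv (hdiff n ?_).hasDerivAt
    rw [uIcc_of_le (NNReal.coe_nonneg _)]
    exact ⟨s.coe_nonneg, hn⟩

end Solutions

end SemiflowSelection

theorem inclusion_semiflow_selection_general {E : Type*} [NormedAddCommGroup E] [NormedSpace ℝ E]
    [FiniteDimensional ℝ E] [MeasurableSpace E] [BorelSpace E] {F : E → Set E}
    (hne : ∀ y, (F y).Nonempty) (hclosed : ∀ y, IsClosed (F y)) (hconv : ∀ y, Convex ℝ (F y))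
    (hF : UpperHemicontinuous F) {ψ : ℝ → ℝ} (hmono : MonotoneOn ψ (Ici 0))
    (hpos : ∀ r, 0 ≤ r → 0 < ψ r) (hdiv : ¬ IntegrableOn (fun r => (ψ r)⁻¹) (Ici 0))
    (hgrowth : ∀ y, ∀ v ∈ F y, ‖v‖ ≤ ψ ‖y‖) :
    ∃ u : E → IPath E, Measurable u ∧ (∀ x, SemiflowSelection.IsInclusionSolution F x (u x)) ∧
      ∀ x, ∀ t₁ t₂ : ℝ≥0, u (u x t₁) t₂ = u x (t₁ + t₂) := by
  have := FiniteDimensional.proper_real E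
  obtain ⟨u, hmeas, hmem, hsemi⟩ := (SemiflowSelection.isSemiflowFunnel_solutionFunnel
    hne hF hmono hpos hdiv hgrowth).exists_measurable_semiflow
  refine ⟨u, hmeas, fun x => ?_, hsemi⟩
  obtain ⟨hzero, hsol⟩ := hmem x
  exact hsol.isInclusionSolution hF hclosed hconv (hsol.exists_lipschitzOnWith hmono hgrowth) hzero

/-- **Semiflow selection for differential inclusions.**  Let `F : ℝ^d → 2^{ℝ^d}` be an
upper semicontinuous set-valued map with nonempty compact convex values satisfying a
Nagumo-type growth condition (`|v| ≤ ψ(|u|)` for `v ∈ F(u)` with `∫^∞ dr/ψ(r) = ∞`).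
Then the solution funnels `S(x)` of `u' ∈ F(u)` admit a Borel measurable selection
`𝔲` with the semigroup property `𝔲(t₂, 𝔲(t₁, x)) = 𝔲(t₁ + t₂, x)`. -/
theorem inclusion_semiflow_selection
    {d : ℕ} (F : EuclideanSpace ℝ (Fin d) → Set (EuclideanSpace ℝ (Fin d)))
    (hFne : ∀ y, (F y).Nonempty)
    (hFcpt : ∀ y, IsCompact (F y))
    (hFconv : ∀ y, Convex ℝ (F y))
    (hFusc : ∀ y, ∀ V : Set (EuclideanSpace ℝ (Fin d)), IsOpen V → F y ⊆ V →
      ∃ U ∈ nhds y, ∀ y' ∈ U, F y' ⊆ V)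
    (ψ : ℝ → ℝ)
    (hψc : ContinuousOn ψ (Ici (0 : ℝ)))
    (hψmono : ∀ a b : ℝ, 0 ≤ a → a ≤ b → ψ a ≤ ψ b)
    (hψpos : ∀ r : ℝ, 0 ≤ r → 0 < ψ r)
    (hNagumo : ¬ IntegrableOn (fun r => (ψ r)⁻¹) (Ici (0 : ℝ)) volume)
    (hgrowth : ∀ y, ∀ v ∈ F y, ‖v‖ ≤ ψ ‖y‖) :
    ∃ u : EuclideanSpace ℝ (Fin d) → IPath (EuclideanSpace ℝ (Fin d)),
      Measurable u ∧ (∀ x, InclusionSol F x (u x)) ∧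
      ∀ x, ∀ t₁ t₂ : ℝ≥0, u (u x t₁) t₂ = u x (t₁ + t₂) := by
  exact inclusion_semiflow_selection_general hFne (fun y => (hFcpt y).isClosed) hFconv
    (.of_forall_isOpen fun y V hV hyV => Filter.eventually_iff_exists_mem.2 (hFusc y V hV hyV))
    (fun a ha b _ hab => hψmono a b ha hab) hψpos hNagumo hgrowth
end
end
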